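/- arXiv:2412.15782 — 3 statements merged into one kernel-verified Lean document; each statement's English description precedes it below -/
import Mathlib

section
/- For every inverse temperature β ∈ (0,∞), every exponent q ∈ (0,2) and every range exponent α > 2 + q/2, there exists a constant c_β > 0 (depending only on β, α and q) such that for every integer N ≥ 1, the variance of the height at the origin under the discrete q-SOS long-range chain satisfies c_β N ≤ Var^{q-SOS}_{N,β,α}[φ(0)]. -/
noncomputable section

/-- Configurations of the long-range chain of length `N`: integer-valued height functions
on `ℤ` vanishing outside `{-N, …, N}`. -/
def ChainConfig (N : ℕ) : Type :=
  {φ : ℤ → ℤ // ∀ k : ℤ, (N : ℤ) < |k| → φ k = 0}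

/-- Energy `β ∑_{i ≠ j} |φ(i) − φ(j)|^q / |i − j|^α` of a configuration of the long-range
chain with potential exponent `q` and range exponent `α`. -/
def chainEnergy (β α q : ℝ) (φ : ℤ → ℤ) : ℝ :=
  β * ∑' p : ℤ × ℤ,
      if p.1 = p.2 then 0
      else |((φ p.1 - φ p.2 : ℤ) : ℝ)| ^ q / |((p.1 - p.2 : ℤ) : ℝ)| ^ α

/-- Boltzmann weight of a configuration. -/
def chainWeight (β α q : ℝ) (φ : ℤ → ℤ) : ℝ :=
  Real.exp (-chainEnergy β α q φ)

/-- Partition function of the long-range chain. -/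
def chainZ (N : ℕ) (β α q : ℝ) : ℝ :=
  ∑' φ : ChainConfig N, chainWeight β α q φ.val

/-- Mean of the height at the origin. -/
def chainMean (N : ℕ) (β α q : ℝ) : ℝ :=
  (∑' φ : ChainConfig N, ((φ.val 0 : ℤ) : ℝ) * chainWeight β α q φ.val) / chainZ N β α q

/-- Variance of the height at the origin under the long-range chain `μ_{N,β,α}`
(with potential exponent `q`; `q = 2` is the discrete Gaussian chain,
`q ∈ (0,2)` the `q`-SOS chain). -/
def chainVar (N : ℕ) (β α q : ℝ) : ℝ :=
  (∑' φ : ChainConfig N, ((φ.val 0 : ℤ) : ℝ) ^ 2 * chainWeight β α q φ.val) / chainZ N β α q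
    - chainMean N β α q ^ 2

end


lemma aux_test {X : Type*} (w h : X → ℝ) (hw : ∀ x, 0 < w x) (G : Finset ℕ) (e : ℕ → X ≃ X)
    (om : ℕ → ℕ → ℝ)
    (he : ∀ k ∈ G, ∀ x, h (e k x) = h x + 1)
    (hq : ∀ k ∈ G, ∀ l ∈ G, ∀ x, w ((e k).symm x) * w ((e l).symm x) =
      Real.exp (2 * om k l) * w x * w ((e k).symm ((e l).symm x)))
    (hs0 : Summable w) (hs1 : Summable fun x => h x * w x) (hs2 : Summable fun x => h x ^ 2 * w x)
    (t : ℝ) :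
    (2 * t * G.card - t ^ 2 * ∑ k ∈ G, ∑ l ∈ G, (Real.exp (2 * om k l) - 1)) * ∑' x, w x
      ≤ ∑' x, h x ^ 2 * w x := by
  have H0 := hs0.hasSum
  have H1 := hs1.hasSum
  have H2 := hs2.hasSum
  set Z := ∑' x, w x
  set B := ∑' x, h x * w x
  set A := ∑' x, h x ^ 2 * w x
  have Hk : ∀ k ∈ G, HasSum (fun x => w ((e k).symm x)) Z := fun k _ =>
    (Equiv.hasSum_iff (e k).symm).2 H0
  have Hk1 : ∀ k ∈ G, HasSum (fun x => h x * w ((e k).symm x)) (B + Z) := fun k hk => by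
    have := (Equiv.hasSum_iff (e k).symm).2 (H1.add H0)
    convert this using 2 with x
    have h1 := he k hk ((e k).symm x)
    simp only [Equiv.apply_symm_apply] at h1
    simp only [Function.comp]
    rw [h1]; ring
  have Hkl : ∀ k ∈ G, ∀ l ∈ G, HasSum (fun x => w ((e k).symm x) * w ((e l).symm x) / w x)
      (Real.exp (2 * om k l) * Z) := fun k hk l hl => by
    have := ((Equiv.hasSum_iff (e l).symm).2 (Hk k hk)).mul_left (Real.exp (2 * om k l))
    have hfun : (fun x => w ((e k).symm x) * w ((e l).symm x) / w x) = fun x =>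
        Real.exp (2 * om k l) * ((fun x => w ((e k).symm x)) ∘ (e l).symm) x := by
      funext x
      rw [hq k hk l hl x]
      have := (hw x).ne'
      simp only [Function.comp]
      field_simp
    rw [hfun]
    exact this
  have HT : HasSum (fun x => h x ^ 2 * w x + (2 * t * ∑ k ∈ G, (h x * w x - h x * w ((e k).symm x))
      + t ^ 2 * ∑ k ∈ G, ∑ l ∈ G, (w x - w ((e k).symm x) - w ((e l).symm x)
        + w ((e k).symm x) * w ((e l).symm x) / w x)))
      (A + (2 * t * ∑ k ∈ G, (B - (B + Z))
      + t ^ 2 * ∑ k ∈ G, ∑ l ∈ G, (Z - Z - Z + Real.exp (2 * om k l) * Z))) := by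
    refine H2.add (((hasSum_sum fun k hk => H1.sub (Hk1 k hk)).mul_left _).add
      ((hasSum_sum fun k hk => hasSum_sum fun l hl => ?_).mul_left _))
    exact ((H0.sub (Hk k hk)).sub (Hk l hl)).add (Hkl k hk l hl)
  have hnn := HT.nonneg (fun x => by
    have hx := (hw x)
    have : h x ^ 2 * w x + (2 * t * ∑ k ∈ G, (h x * w x - h x * w ((e k).symm x))
      + t ^ 2 * ∑ k ∈ G, ∑ l ∈ G, (w x - w ((e k).symm x) - w ((e l).symm x)
        + w ((e k).symm x) * w ((e l).symm x) / w x))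
        = w x * (h x + t * ∑ k ∈ G, (1 - w ((e k).symm x) / w x)) ^ 2 := by
      have e1 : ∑ k ∈ G, ∑ l ∈ G, (w x - w ((e k).symm x) - w ((e l).symm x)
        + w ((e k).symm x) * w ((e l).symm x) / w x)
        = w x * ((∑ k ∈ G, (1 - w ((e k).symm x) / w x)) * (∑ k ∈ G, (1 - w ((e k).symm x) / w x))) := by
        rw [Finset.sum_mul_sum, Finset.mul_sum]
        refine Finset.sum_congr rfl fun k _ => ?_
        rw [Finset.mul_sum]
        refine Finset.sum_congr rfl fun l _ => ?_
        field_simp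
        ring
      have e2 : ∑ k ∈ G, (h x * w x - h x * w ((e k).symm x))
        = h x * w x * ∑ k ∈ G, (1 - w ((e k).symm x) / w x) := by
        rw [Finset.mul_sum]
        refine Finset.sum_congr rfl fun k _ => ?_
        field_simp
      rw [e1, e2]; ring
    rw [this]; positivity)
  have e3 : ∑ k ∈ G, ∑ l ∈ G, (Z - Z - Z + Real.exp (2 * om k l) * Z)
    = (∑ k ∈ G, ∑ l ∈ G, (Real.exp (2 * om k l) - 1)) * Z := by
    simp only [Finset.sum_mul]
    refine Finset.sum_congr rfl fun k _ => Finset.sum_congr rfl fun l _ => by ring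
  have e4 : ∑ k ∈ G, (B - (B + Z)) = - (G.card * Z) := by
    simp
  rw [e3, e4] at hnn
  linarith

/-- indicator of a symmetric interval -/
def psiK (k : ℕ) (x : ℤ) : ℤ := if |x| ≤ (k : ℤ) then 1 else 0

/-- indicator that a bond crosses level k -/
noncomputable def strK (k : ℕ) (x y : ℤ) : ℝ := |((psiK k x - psiK k y : ℤ) : ℝ)|

def shiftE {N : ℕ} (k : ℕ) (hk : k ≤ N) : ChainConfig N ≃ ChainConfig N where
  toFun φ := ⟨fun x => φ.1 x + psiK k x, fun x hx => by
    have : ¬ |x| ≤ (k : ℤ) := by omega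
    simp [psiK, φ.2 x hx, this]⟩
  invFun φ := ⟨fun x => φ.1 x - psiK k x, fun x hx => by
    have : ¬ |x| ≤ (k : ℤ) := by omega
    simp [psiK, φ.2 x hx, this]⟩
  left_inv φ := Subtype.ext (funext fun x => by simp)
  right_inv φ := Subtype.ext (funext fun x => by simp)

lemma strK_nonneg (k : ℕ) (x y : ℤ) : 0 ≤ strK k x y := abs_nonneg _

lemma strK_cases (k : ℕ) (x y : ℤ) : strK k x y = 0 ∨ strK k x y = 1 := by
  unfold strK psiK; split_ifs <;> simp

lemma strK_mul (k l : ℕ) (x y : ℤ) :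
    ((psiK k x - psiK k y : ℤ) : ℝ) * ((psiK l x - psiK l y : ℤ) : ℝ) = strK k x y * strK l x y := by
  unfold strK psiK
  split_ifs <;> simp <;> omega

lemma strK_sum (N : ℕ) (x y : ℤ) :
    ∑ k ∈ Finset.range (N + 1), strK k x y ≤ |((x - y : ℤ) : ℝ)| := by
  have h1 : ∀ k ∈ Finset.range (N + 1), strK k x y
      = if k ∈ Finset.Ico (min x.natAbs y.natAbs) (max x.natAbs y.natAbs) then 1 else 0 := by
    intro k _
    unfold strK psiK
    simp only [Finset.mem_Ico, Int.abs_eq_natAbs]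
    split_ifs <;> simp <;> omega
  rw [Finset.sum_congr rfl h1, Finset.sum_boole]
  calc _ ≤ ((Finset.Ico (min x.natAbs y.natAbs) (max x.natAbs y.natAbs)).card : ℝ) := by
        norm_cast
        exact Finset.card_le_card fun k hk => (Finset.mem_filter.1 hk).2
    _ ≤ _ := by
        rw [Nat.card_Ico, ← Int.cast_abs, Int.abs_eq_natAbs]
        norm_cast
        omega

/-- Gaussian weight for a finite set of conductances -/
noncomputable def gW {ι : Type*} (i j : ι → ℤ) (u : ι → ℝ) (S : Finset ι) (φ : ℤ → ℤ) : ℝ :=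
  Real.exp (-∑ b ∈ S, u b * ((φ (i b) - φ (j b) : ℤ) : ℝ) ^ 2)

lemma aux_S {ι : Type*} (N : ℕ) (i j : ι → ℤ) (hij : ∀ b, i b ≠ j b) (u : ι → ℝ)
    (hu : ∀ b, 0 ≤ u b) (S : Finset ι) (K : ℝ) (hK : 0 < K)
    (hs : Summable fun φ : ChainConfig N => (1 + ((φ.1 0 : ℤ) : ℝ) ^ 2) * gW i j u S φ.1) :
    1 / (2 * K * Real.exp (2 * K)) * (∑ k ∈ Finset.range (N + 1), (1 - (∑ b ∈ S, strK k (i b) (j b) *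
      min (|((i b - j b : ℤ) : ℝ)| * u b) K) / K)) * ∑' φ : ChainConfig N, gW i j u S φ.1
      ≤ ∑' φ : ChainConfig N, ((φ.1 0 : ℤ) : ℝ) ^ 2 * gW i j u S φ.1 := by
  have hpos : ∀ φ, 0 < gW i j u S φ := fun φ => Real.exp_pos _
  have hs0 : Summable fun φ : ChainConfig N => gW i j u S φ.1 :=
    Summable.of_nonneg_of_le (fun φ => (hpos _).le) (fun φ => by
      nlinarith [hpos φ.1, mul_nonneg (sq_nonneg ((φ.1 0 : ℤ) : ℝ)) (hpos φ.1).le]) hs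
  have hs2 : Summable fun φ : ChainConfig N => ((φ.1 0 : ℤ) : ℝ) ^ 2 * gW i j u S φ.1 :=
    Summable.of_nonneg_of_le (fun φ => mul_nonneg (sq_nonneg _) (hpos _).le) (fun φ => by
      nlinarith [hpos φ.1]) hs
  have hs1 : Summable fun φ : ChainConfig N => ((φ.1 0 : ℤ) : ℝ) * gW i j u S φ.1 := by
    refine Summable.of_norm_bounded hs (fun φ => ?_)
    rw [norm_mul, Real.norm_eq_abs, Real.norm_eq_abs, abs_of_pos (hpos φ.1)]
    refine mul_le_mul_of_nonneg_right ?_ (hpos _).le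
    rw [abs_le]
    constructor <;> nlinarith [sq_nonneg (((φ.1 0 : ℤ) : ℝ) - 1), sq_nonneg (((φ.1 0 : ℤ) : ℝ) + 1)]
  set Y : ℕ → ℝ := fun k => ∑ b ∈ S, strK k (i b) (j b) * min (|((i b - j b : ℤ) : ℝ)| * u b) K
    with hY
  have hr : ∀ b, (1 : ℝ) ≤ |((i b - j b : ℤ) : ℝ)| := fun b => by
    rw [← Int.cast_abs]
    exact_mod_cast Int.one_le_abs (sub_ne_zero.2 (hij b))
  have hYterm : ∀ k, ∀ b ∈ S, 0 ≤ strK k (i b) (j b) * min (|((i b - j b : ℤ) : ℝ)| * u b) K :=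
    fun k b _ => mul_nonneg (strK_nonneg _ _ _)
      (le_min (mul_nonneg (abs_nonneg _) (hu b)) hK.le)
  set G := (Finset.range (N + 1)).filter (fun k => Y k < K) with hG
  let om : ℕ → ℕ → ℝ := fun k l => ∑ b ∈ S, u b * (strK k (i b) (j b) * strK l (i b) (j b))
  have hgood : ∀ k ∈ G, ∑ b ∈ S, strK k (i b) (j b) * (|((i b - j b : ℤ) : ℝ)| * u b) ≤ K := by
    intro k hk
    have hk2 : Y k < K := (Finset.mem_filter.1 hk).2
    refine le_trans (le_of_eq ?_) hk2.le
    refine Finset.sum_congr rfl fun b hb => ?_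
    rcases strK_cases k (i b) (j b) with h | h
    · simp [h]
    · have h1 := Finset.single_le_sum (f := fun b => strK k (i b) (j b) *
        min (|((i b - j b : ℤ) : ℝ)| * u b) K) (hYterm k) hb
      have h2 : strK k (i b) (j b) * min (|((i b - j b : ℤ) : ℝ)| * u b) K < K := lt_of_le_of_lt h1 hk2
      rw [h, one_mul] at h2
      have h3 : |((i b - j b : ℤ) : ℝ)| * u b < K := by
        rcases min_lt_iff.1 h2 with h | h
        · exact h
        · exact absurd h (lt_irrefl _)
      rw [min_eq_left h3.le]
  have hom0 : ∀ k l, 0 ≤ om k l := fun k l => Finset.sum_nonneg fun b _ =>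
    mul_nonneg (hu b) (mul_nonneg (strK_nonneg _ _ _) (strK_nonneg _ _ _))
  have homK : ∀ k ∈ G, ∀ l, om k l ≤ K := by
    intro k hk l
    refine le_trans (Finset.sum_le_sum fun b _ => ?_) (hgood k hk)
    have h1 := strK_nonneg k (i b) (j b)
    have h2 : strK l (i b) (j b) ≤ |((i b - j b : ℤ) : ℝ)| := by
      rcases strK_cases l (i b) (j b) with h | h <;> rw [h] <;> linarith [hr b]
    calc u b * (strK k (i b) (j b) * strK l (i b) (j b))
        = strK k (i b) (j b) * (strK l (i b) (j b) * u b) := by ring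
      _ ≤ _ := mul_le_mul_of_nonneg_left (mul_le_mul_of_nonneg_right h2 (hu b)) h1
  have homsum : ∀ k ∈ G, ∑ l ∈ G, om k l ≤ K := by
    intro k hk
    have h1 : ∑ l ∈ G, om k l ≤ ∑ l ∈ Finset.range (N + 1), om k l :=
      Finset.sum_le_sum_of_subset_of_nonneg (Finset.filter_subset _ _) fun l _ _ => hom0 k l
    refine h1.trans (le_trans ?_ (hgood k hk))
    simp only [om]
    rw [Finset.sum_comm]
    refine Finset.sum_le_sum fun b _ => ?_
    calc ∑ l ∈ Finset.range (N + 1), u b * (strK k (i b) (j b) * strK l (i b) (j b))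
        = strK k (i b) (j b) * ((∑ l ∈ Finset.range (N + 1), strK l (i b) (j b)) * u b) := by
          rw [Finset.sum_mul, Finset.mul_sum]
          exact Finset.sum_congr rfl fun l _ => by ring
      _ ≤ _ := mul_le_mul_of_nonneg_left (mul_le_mul_of_nonneg_right (strK_sum N _ _) (hu b))
          (strK_nonneg _ _ _)
  have hD : ∑ k ∈ G, ∑ l ∈ G, (Real.exp (2 * om k l) - 1) ≤ G.card * (2 * K * Real.exp (2 * K)) := by
    rw [← nsmul_eq_mul]
    refine Finset.sum_le_card_nsmul _ _ _ fun k hk => ?_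
    calc ∑ l ∈ G, (Real.exp (2 * om k l) - 1) ≤ ∑ l ∈ G, 2 * Real.exp (2 * K) * om k l := by
          refine Finset.sum_le_sum fun l _ => ?_
          have h1 := Real.add_one_le_exp (-(2 * om k l))
          have h2 : Real.exp (2 * om k l) ≤ Real.exp (2 * K) :=
            Real.exp_le_exp.2 (by linarith [homK k hk l])
          have h3 : Real.exp (2 * om k l) * Real.exp (-(2 * om k l)) = 1 := by
            rw [← Real.exp_add]; simp
          have h4 := Real.exp_pos (2 * om k l)
          nlinarith [hom0 k l, mul_le_mul_of_nonneg_left h1 h4.le,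
            mul_le_mul_of_nonneg_right h2 (hom0 k l)]
      _ = 2 * Real.exp (2 * K) * ∑ l ∈ G, om k l := by rw [Finset.mul_sum]
      _ ≤ 2 * Real.exp (2 * K) * K := mul_le_mul_of_nonneg_left (homsum k hk) (by positivity)
      _ = _ := by ring
  let e : ℕ → ChainConfig N ≃ ChainConfig N := fun k =>
    if hk : k ≤ N then shiftE k hk else Equiv.refl _
  have hGN : ∀ k ∈ G, k ≤ N := fun k hk => by
    have := Finset.mem_range.1 (Finset.mem_filter.1 hk).1; omega
  have hes : ∀ k ∈ G, ∀ φ : ChainConfig N, ∀ x, ((e k).symm φ).1 x = φ.1 x - psiK k x := by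
    intro k hk φ x
    simp only [e, dif_pos (hGN k hk)]; rfl
  have key := aux_test (fun φ : ChainConfig N => gW i j u S φ.1) (fun φ => ((φ.1 0 : ℤ) : ℝ))
    (fun φ => hpos _) G e om
    (by
      intro k hk φ
      simp only [e, dif_pos (hGN k hk)]
      have h1 : (shiftE k (hGN k hk) φ).1 0 = φ.1 0 + psiK k 0 := rfl
      rw [h1]
      simp [psiK])
    (by
      intro k hk l hl φ
      simp only [gW, ← Real.exp_add, hes k hk, hes l hl]
      congr 1
      simp only [om]
      rw [Finset.mul_sum, ← Finset.sum_neg_distrib, ← Finset.sum_neg_distrib,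
        ← Finset.sum_neg_distrib, ← Finset.sum_neg_distrib, ← Finset.sum_add_distrib,
        ← Finset.sum_add_distrib, ← Finset.sum_add_distrib]
      refine Finset.sum_congr rfl fun b _ => ?_
      rw [← strK_mul]
      push_cast
      ring) hs0 hs1 hs2 (1 / (2 * K * Real.exp (2 * K)))
  refine le_trans (mul_le_mul_of_nonneg_right ?_ (tsum_nonneg fun φ => (hpos _).le)) key
  have hM : 0 < 2 * K * Real.exp (2 * K) := by positivity
  have hcard : ∑ k ∈ Finset.range (N + 1), (1 - Y k / K) ≤ (G.card : ℝ) := by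
    rw [hG, Finset.card_filter]
    push_cast
    refine Finset.sum_le_sum fun k _ => ?_
    have hY0 : 0 ≤ Y k := Finset.sum_nonneg (hYterm k)
    split_ifs with h
    · have := div_nonneg hY0 hK.le
      linarith
    · have : 1 ≤ Y k / K := by rw [le_div_iff₀ hK]; linarith
      linarith
  set M := 2 * K * Real.exp (2 * K)
  calc 1 / M * ∑ k ∈ Finset.range (N + 1), (1 - Y k / K) ≤ 1 / M * G.card :=
        mul_le_mul_of_nonneg_left hcard (by positivity)
    _ = 2 * (1 / M) * G.card - (1 / M) ^ 2 * (G.card * M) := by field_simp; ring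
    _ ≤ _ := by
        have : 0 ≤ (1 / M) ^ 2 := by positivity
        nlinarith [mul_le_mul_of_nonneg_left hD this]


lemma aux_A {ι : Type*} [DecidableEq ι] (N : ℕ) (i j : ι → ℤ) (hij : ∀ b, i b ≠ j b) (u p : ι → ℝ)
    (hu : ∀ b, 0 ≤ u b) (B : Finset ι) (hp0 : ∀ b ∈ B, 0 ≤ p b) (hp1 : ∀ b ∈ B, p b ≤ 1)
    (K : ℝ) (hK : 0 < K)
    (hs : ∀ S ⊆ B, (∀ b ∈ B, p b = 1 → b ∈ S) →
      Summable fun φ : ChainConfig N => (1 + ((φ.1 0 : ℤ) : ℝ) ^ 2) * gW i j u S φ.1)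
    (hcost : ∀ k ∈ Finset.range (N + 1), ∑ b ∈ B, p b * (strK k (i b) (j b) *
      min (|((i b - j b : ℤ) : ℝ)| * u b) K) ≤ K / 2) :
    1 / (2 * K * Real.exp (2 * K)) * ((N + 1 : ℕ) / 2 : ℝ) * ∑' φ : ChainConfig N,
        ∏ b ∈ B, (1 - p b + p b * Real.exp (-(u b * ((φ.1 (i b) - φ.1 (j b) : ℤ) : ℝ) ^ 2)))
      ≤ ∑' φ : ChainConfig N, ((φ.1 0 : ℤ) : ℝ) ^ 2 *
        ∏ b ∈ B, (1 - p b + p b * Real.exp (-(u b * ((φ.1 (i b) - φ.1 (j b) : ℤ) : ℝ) ^ 2))) := by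
  set C := 1 / (2 * K * Real.exp (2 * K)) with hC
  have hC0 : 0 < C := by positivity
  let ee : ι → (ℤ → ℤ) → ℝ := fun b φ => Real.exp (-(u b * ((φ (i b) - φ (j b) : ℤ) : ℝ) ^ 2))
  have hee0 : ∀ b φ, 0 < ee b φ := fun b φ => Real.exp_pos _
  have hee1 : ∀ b φ, ee b φ ≤ 1 := fun b φ => by
    simp only [ee]
    rw [Real.exp_le_one_iff]
    have := mul_nonneg (hu b) (sq_nonneg ((φ (i b) - φ (j b) : ℤ) : ℝ))
    linarith
  let pr : Finset ι → ℝ := fun S => (∏ b ∈ S, p b) * ∏ b ∈ B \ S, (1 - p b)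
  let v : ℕ → ι → ℝ := fun k b => strK k (i b) (j b) * min (|((i b - j b : ℤ) : ℝ)| * u b) K
  have hv0 : ∀ k b, 0 ≤ v k b := fun k b => mul_nonneg (strK_nonneg _ _ _)
      (le_min (mul_nonneg (abs_nonneg _) (hu b)) hK.le)
  have hpr0 : ∀ S ∈ B.powerset, 0 ≤ pr S := fun S hS => by
    have hSB := Finset.mem_powerset.1 hS
    refine mul_nonneg (Finset.prod_nonneg fun b hb => hp0 b (hSB hb))
      (Finset.prod_nonneg fun b hb => ?_)
    have := hp1 b (Finset.mem_sdiff.1 hb).1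
    linarith
  have hgW : ∀ S φ, gW i j u S φ = ∏ b ∈ S, ee b φ := fun S φ => by
    simp only [gW, ee, ← Finset.sum_neg_distrib, Real.exp_sum]
  have hdec : ∀ φ : ℤ → ℤ, ∏ b ∈ B, (1 - p b + p b * ee b φ) = ∑ S ∈ B.powerset, pr S * gW i j u S φ := by
    intro φ
    have := Finset.prod_add (fun b => p b * ee b φ) (fun b => 1 - p b) B
    rw [Finset.prod_congr rfl (fun b _ => add_comm (1 - p b) (p b * ee b φ)), this]
    refine Finset.sum_congr rfl fun S _ => ?_
    rw [Finset.prod_mul_distrib, hgW]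
    simp only [pr]; ring
  have hin : ∀ φ : ℤ → ℤ, ∀ a ∈ B, ∑ S ∈ B.powerset, pr S * gW i j u S φ * (if a ∈ S then 1 else 0)
      ≤ p a * ∏ b ∈ B, (1 - p b + p b * ee b φ) := by
    intro φ a ha
    have h1 := Finset.prod_add (fun b => p b * ee b φ) (fun b => if b = a then 0 else 1 - p b) B
    have h2 : ∑ S ∈ B.powerset, pr S * gW i j u S φ * (if a ∈ S then 1 else 0)
        = ∏ b ∈ B, (p b * ee b φ + (if b = a then 0 else 1 - p b)) := by
      rw [h1]
      refine Finset.sum_congr rfl fun S _ => ?_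
      by_cases haS : a ∈ S
      · rw [if_pos haS, Finset.prod_mul_distrib, hgW]
        have : ∏ b ∈ B \ S, (if b = a then 0 else 1 - p b) = ∏ b ∈ B \ S, (1 - p b) := by
          refine Finset.prod_congr rfl fun b hb => ?_
          have : b ≠ a := fun h => (Finset.mem_sdiff.1 hb).2 (h ▸ haS)
          rw [if_neg this]
        rw [this]; simp only [pr]; ring
      · rw [if_neg haS]
        have : ∏ b ∈ B \ S, (if b = a then 0 else 1 - p b) = 0 :=
          Finset.prod_eq_zero (Finset.mem_sdiff.2 ⟨ha, haS⟩) (by simp)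
        rw [this]; simp
    rw [h2, ← Finset.mul_prod_erase B _ ha, ← Finset.mul_prod_erase B _ ha, ← mul_assoc]
    have h3 : ∏ b ∈ B.erase a, (p b * ee b φ + (if b = a then 0 else 1 - p b))
        = ∏ b ∈ B.erase a, (1 - p b + p b * ee b φ) := by
      refine Finset.prod_congr rfl fun b hb => ?_
      rw [if_neg (Finset.ne_of_mem_erase hb), add_comm]
    rw [h3]
    refine mul_le_mul_of_nonneg_right ?_ (Finset.prod_nonneg fun b hb => ?_)
    · rw [if_pos rfl, add_zero]
      refine mul_le_mul_of_nonneg_left ?_ (hp0 a ha)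
      have := mul_nonneg (sub_nonneg.2 (hp1 a ha)) (sub_nonneg.2 (hee1 a φ))
      nlinarith
    · have hb' := Finset.mem_of_mem_erase hb
      have := mul_nonneg (hp0 b hb') (hee0 b φ).le
      linarith [hp1 b hb']
  have hprS : ∀ S ∈ B.powerset, pr S ≠ 0 →
      Summable fun φ : ChainConfig N => (1 + ((φ.1 0 : ℤ) : ℝ) ^ 2) * gW i j u S φ.1 := by
    intro S hS hne
    refine hs S (Finset.mem_powerset.1 hS) fun b hb hpb => ?_
    by_contra hbS
    apply hne
    have : ∏ b ∈ B \ S, (1 - p b) = 0 :=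
      Finset.prod_eq_zero (Finset.mem_sdiff.2 ⟨hb, hbS⟩) (by rw [hpb]; simp)
    simp only [pr]; rw [this, mul_zero]
  have hgpos : ∀ S φ, 0 < gW i j u S φ := fun S φ => Real.exp_pos _
  have hs0 : ∀ S ∈ B.powerset, Summable fun φ : ChainConfig N => pr S * gW i j u S φ.1 := by
    intro S hS
    by_cases h : pr S = 0
    · simp [h, summable_zero]
    · refine Summable.mul_left _ (Summable.of_nonneg_of_le (fun φ => (hgpos _ _).le) (fun φ => ?_) (hprS S hS h))
      nlinarith [hgpos S φ.1, mul_nonneg (sq_nonneg ((φ.1 0 : ℤ) : ℝ)) (hgpos S φ.1).le]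
  have hs2 : ∀ S ∈ B.powerset, Summable fun φ : ChainConfig N =>
      ((φ.1 0 : ℤ) : ℝ) ^ 2 * (pr S * gW i j u S φ.1) := by
    intro S hS
    by_cases h : pr S = 0
    · simp [h, summable_zero]
    · have : Summable fun φ : ChainConfig N => pr S * (((φ.1 0 : ℤ) : ℝ) ^ 2 * gW i j u S φ.1) := by
        refine Summable.mul_left _ (Summable.of_nonneg_of_le
          (fun φ => mul_nonneg (sq_nonneg _) (hgpos _ _).le) (fun φ => ?_) (hprS S hS h))
        nlinarith [hgpos S φ.1]
      refine this.congr fun φ => by ring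
  have hSsum : ∀ S ∈ B.powerset, C * (∑ k ∈ Finset.range (N + 1), (1 - (∑ b ∈ S, v k b) / K)) *
      ∑' φ : ChainConfig N, pr S * gW i j u S φ.1
      ≤ ∑' φ : ChainConfig N, ((φ.1 0 : ℤ) : ℝ) ^ 2 * (pr S * gW i j u S φ.1) := by
    intro S hS
    by_cases h : pr S = 0
    · simp [h]
    · have h1 := aux_S N i j hij u hu S K hK (hprS S hS h)
      have h2 := mul_le_mul_of_nonneg_left h1 (hpr0 S hS)
      rw [tsum_mul_left]
      have h3 : ∑' φ : ChainConfig N, ((φ.1 0 : ℤ) : ℝ) ^ 2 * (pr S * gW i j u S φ.1)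
        = pr S * ∑' φ : ChainConfig N, ((φ.1 0 : ℤ) : ℝ) ^ 2 * gW i j u S φ.1 := by
        rw [← tsum_mul_left]
        exact tsum_congr fun φ => by ring
      rw [h3]
      refine le_trans (le_of_eq ?_) h2
      simp only [v, hC]; ring
  have hLHS : ∑' φ : ChainConfig N, ((φ.1 0 : ℤ) : ℝ) ^ 2 * ∏ b ∈ B, (1 - p b + p b * ee b φ.1)
      = ∑ S ∈ B.powerset, ∑' φ : ChainConfig N, ((φ.1 0 : ℤ) : ℝ) ^ 2 * (pr S * gW i j u S φ.1) := by
    rw [← Summable.tsum_finsetSum hs2]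
    refine tsum_congr fun φ => ?_
    rw [hdec, Finset.mul_sum]
  change C * _ * ∑' φ : ChainConfig N, ∏ b ∈ B, (1 - p b + p b * ee b φ.1) ≤
    ∑' φ : ChainConfig N, ((φ.1 0 : ℤ) : ℝ) ^ 2 * ∏ b ∈ B, (1 - p b + p b * ee b φ.1)
  rw [hLHS]
  refine le_trans ?_ (Finset.sum_le_sum hSsum)
  simp_rw [← tsum_mul_left]
  rw [← Summable.tsum_finsetSum (fun S hS => (hs0 S hS).mul_left _)]
  refine Summable.tsum_le_tsum ?_ ?_ (summable_sum fun S hS => (hs0 S hS).mul_left _)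
  · intro φ
    set W := ∏ b ∈ B, (1 - p b + p b * ee b φ.1) with hW
    have hW0 : 0 ≤ W := Finset.prod_nonneg fun b hb => by
      have := mul_nonneg (hp0 b hb) (hee0 b φ.1).le
      linarith [hp1 b hb]
    have h1 : ∑ S ∈ B.powerset, C * (∑ k ∈ Finset.range (N + 1), (1 - (∑ b ∈ S, v k b) / K)) *
        (pr S * gW i j u S φ.1)
        = C * ∑ k ∈ Finset.range (N + 1), (W - (∑ b ∈ B, v k b *
          ∑ S ∈ B.powerset, pr S * gW i j u S φ.1 * (if b ∈ S then 1 else 0)) / K) := by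
      have h2 : ∀ S ∈ B.powerset, C * (∑ k ∈ Finset.range (N + 1), (1 - (∑ b ∈ S, v k b) / K)) *
        (pr S * gW i j u S φ.1) = C * ∑ k ∈ Finset.range (N + 1), (pr S * gW i j u S φ.1 -
          (∑ b ∈ B, v k b * (pr S * gW i j u S φ.1 * (if b ∈ S then 1 else 0))) / K) := by
        intro S hS
        rw [mul_assoc, Finset.sum_mul]
        congr 1
        refine Finset.sum_congr rfl fun k _ => ?_
        have h3 : ∑ b ∈ B, v k b * (pr S * gW i j u S φ.1 * (if b ∈ S then 1 else 0))
            = (∑ b ∈ S, v k b) * (pr S * gW i j u S φ.1) := by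
          rw [Finset.sum_mul, ← Finset.sum_subset (Finset.mem_powerset.1 hS)]
          · refine Finset.sum_congr rfl fun b hb => ?_
            rw [if_pos hb]; ring
          · intro b _ hb
            rw [if_neg hb]; ring
        rw [h3]; ring
      rw [Finset.sum_congr rfl h2, ← Finset.mul_sum, Finset.sum_comm]
      congr 1
      refine Finset.sum_congr rfl fun k _ => ?_
      rw [Finset.sum_sub_distrib, ← hdec, ← Finset.sum_div, Finset.sum_comm]
      simp_rw [Finset.mul_sum]
      rw [hW]
    rw [h1, mul_assoc]
    refine mul_le_mul_of_nonneg_left ?_ hC0.le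
    have h4 : ((N + 1 : ℕ) / 2 : ℝ) * W = ∑ k ∈ Finset.range (N + 1), W / 2 := by
      rw [Finset.sum_const, Finset.card_range, nsmul_eq_mul]; ring
    rw [h4]
    refine Finset.sum_le_sum fun k hk => ?_
    have h5 : ∑ b ∈ B, v k b * ∑ S ∈ B.powerset, pr S * gW i j u S φ.1 * (if b ∈ S then 1 else 0)
        ≤ K / 2 * W := by
      calc _ ≤ ∑ b ∈ B, (p b * v k b) * W := by
            refine Finset.sum_le_sum fun b hb => ?_
            calc _ ≤ v k b * (p b * W) := mul_le_mul_of_nonneg_left (hin φ.1 b hb) (hv0 k b)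
              _ = _ := by ring
        _ = (∑ b ∈ B, p b * v k b) * W := by rw [Finset.sum_mul]
        _ ≤ _ := mul_le_mul_of_nonneg_right (hcost k hk) hW0
    have h6 : (∑ b ∈ B, v k b * ∑ S ∈ B.powerset, pr S * gW i j u S φ.1 * (if b ∈ S then 1 else 0)) / K
        ≤ W / 2 := by
      rw [div_le_iff₀ hK]; linarith
    linarith
  · refine Summable.mul_left _ ?_
    refine (summable_sum hs0).congr fun φ => ?_
    rw [hdec]

/-- passing the inequality to the limit -/
lemma aux_lim {X : Type*} (w : ℕ → X → ℝ) (w' W h : X → ℝ) (c : ℝ)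
    (hlim : ∀ x, Filter.Tendsto (fun n => w n x) Filter.atTop (nhds (w' x)))
    (hW : Summable fun x => (1 + h x ^ 2) * W x)
    (h0 : ∀ᶠ n in Filter.atTop, ∀ x, 0 ≤ w n x) (hle : ∀ᶠ n in Filter.atTop, ∀ x, w n x ≤ W x)
    (hw : ∀ᶠ n in Filter.atTop, c * ∑' x, w n x ≤ ∑' x, h x ^ 2 * w n x) :
    c * ∑' x, w' x ≤ ∑' x, h x ^ 2 * w' x := by
  have t1 : Filter.Tendsto (fun n => ∑' x, w n x) Filter.atTop (nhds (∑' x, w' x)) := by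
    refine tendsto_tsum_of_dominated_convergence hW hlim ?_
    filter_upwards [h0, hle] with n hn hn' x
    rw [Real.norm_eq_abs, abs_of_nonneg (hn x)]
    nlinarith [hn x, hn' x, mul_nonneg (sq_nonneg (h x)) ((hn x).trans (hn' x))]
  have t2 : Filter.Tendsto (fun n => ∑' x, h x ^ 2 * w n x) Filter.atTop
      (nhds (∑' x, h x ^ 2 * w' x)) := by
    refine tendsto_tsum_of_dominated_convergence hW (fun x => (hlim x).const_mul _) ?_
    filter_upwards [h0, hle] with n hn hn' x
    rw [Real.norm_eq_abs, abs_of_nonneg (mul_nonneg (sq_nonneg _) (hn x))]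
    nlinarith [hn x, hn' x, mul_le_mul_of_nonneg_left (hn' x) (sq_nonneg (h x))]
  exact le_of_tendsto_of_tendsto (t1.const_mul c) t2 hw

lemma aux_pi (g : ℤ → ℝ) (hg0 : ∀ x, 0 ≤ g x) (hg : Summable g) (n : ℕ) :
    Summable fun x : Fin n → ℤ => ∏ a, g (x a) := by
  induction n with
  | zero => exact Summable.of_finite
  | succ n ih =>
    rw [← (Fin.consEquiv (fun _ => ℤ)).summable_iff]
    have := hg.mul_of_nonneg ih hg0 (fun x => Finset.prod_nonneg fun a _ => hg0 _)
    refine this.congr fun x => ?_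
    simp [Fin.prod_univ_succ, Fin.consEquiv]

lemma aux_g (τ q : ℝ) (hτ : 0 < τ) (hq : 0 < q) :
    Summable fun x : ℤ => (1 + (x : ℝ) ^ 2) * Real.exp (-(τ * |(x : ℝ)| ^ q)) := by
  have h1 : Filter.Tendsto (fun x : ℝ => (τ * x ^ q) ^ (4 / q) * Real.exp (-(τ * x ^ q))) Filter.atTop
      (nhds 0) := by
    have h2 := (tendsto_rpow_mul_exp_neg_mul_atTop_nhds_zero (4 / q) 1 one_pos).comp
      ((tendsto_rpow_atTop hq).const_mul_atTop hτ)
    refine h2.congr fun x => by simp [Function.comp]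
  have hτ' : 0 < τ ^ (4 / q) := Real.rpow_pos_of_pos hτ _
  have hnat : Summable fun n : ℕ => (1 + (n : ℝ) ^ 2) * Real.exp (-(τ * (n : ℝ) ^ q)) := by
    have h3 := (h1.comp tendsto_natCast_atTop_atTop).eventually (gt_mem_nhds hτ')
    have h4 : Summable fun n : ℕ => 2 * (1 / (n : ℝ) ^ 2) :=
      (Real.summable_one_div_nat_pow.2 (by norm_num)).mul_left 2
    refine Summable.of_norm_bounded_eventually_nat h4 ?_
    filter_upwards [h3, Filter.eventually_ge_atTop 1] with n hn hn1
    have hn1' : (1 : ℝ) ≤ n := by exact_mod_cast hn1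
    have hnn : (0 : ℝ) ≤ n := by linarith
    simp only [Function.comp] at hn
    rw [Real.mul_rpow hτ.le (Real.rpow_nonneg hnn _), ← Real.rpow_mul hnn,
      mul_div_cancel₀ _ hq.ne'] at hn
    have h5 : (n : ℝ) ^ (4 : ℝ) = (n : ℝ) ^ 4 := by exact_mod_cast Real.rpow_natCast (n : ℝ) 4
    rw [h5] at hn
    have h6 : (n : ℝ) ^ 4 * Real.exp (-(τ * (n : ℝ) ^ q)) < 1 := by
      have : τ ^ (4 / q) * ((n : ℝ) ^ 4 * Real.exp (-(τ * (n : ℝ) ^ q))) < τ ^ (4 / q) * 1 := by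
        linarith
      exact lt_of_mul_lt_mul_left this hτ'.le
    set E := Real.exp (-(τ * (n : ℝ) ^ q))
    have hE : 0 < E := Real.exp_pos _
    rw [Real.norm_eq_abs, abs_of_nonneg (by positivity), mul_one_div, le_div_iff₀ (by positivity)]
    have : (1 + (n : ℝ) ^ 2) * E * (n : ℝ) ^ 2 ≤ 2 * ((n : ℝ) ^ 4 * E) := by
      have h7 : (1 : ℝ) ≤ (n : ℝ) ^ 2 := by nlinarith
      have h8 : 0 ≤ (n : ℝ) ^ 2 * E := by positivity
      nlinarith [mul_le_mul_of_nonneg_left h7 h8]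
    linarith
  refine Summable.of_nat_of_neg ?_ ?_
  · refine hnat.congr fun n => by simp
  · refine hnat.congr fun n => by simp

noncomputable def cfgEquiv (N : ℕ) : ChainConfig N ≃ ((Finset.Icc (-(N : ℤ)) N : Finset ℤ) → ℤ) where
  toFun φ := fun x => φ.1 x
  invFun f := ⟨fun x => if h : x ∈ Finset.Icc (-(N : ℤ)) N then f ⟨x, h⟩ else 0, fun x hx => by
    have : x ∉ Finset.Icc (-(N : ℤ)) N := by
      rw [Finset.mem_Icc, ← abs_le]; omega
    simp only [this, dite_false]⟩
  left_inv φ := Subtype.ext (funext fun x => by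
    by_cases h : x ∈ Finset.Icc (-(N : ℤ)) N
    · simp only [h, dite_true]
    · simp only [h, dite_false]
      rw [Finset.mem_Icc, ← abs_le] at h
      exact (φ.2 x (by omega)).symm)
  right_inv f := by
    funext x
    simp

lemma aux_sum (N : ℕ) (τ q : ℝ) (hτ : 0 < τ) (hq : 0 < q) (w : ChainConfig N → ℝ)
    (hw0 : ∀ φ, 0 ≤ w φ)
    (hw : ∀ φ, w φ ≤ Real.exp (-(τ * ∑ x ∈ Finset.Icc (-(N : ℤ)) N, |((φ.1 x : ℤ) : ℝ)| ^ q))) :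
    Summable fun φ : ChainConfig N => (1 + ((φ.1 0 : ℤ) : ℝ) ^ 2) * w φ := by
  have hg := aux_g τ q hτ hq
  have hg0 : ∀ x : ℤ, 0 ≤ (1 + (x : ℝ) ^ 2) * Real.exp (-(τ * |(x : ℝ)| ^ q)) := fun x => by positivity
  have h1 := aux_pi _ hg0 hg (Fintype.card (Finset.Icc (-(N : ℤ)) N : Finset ℤ))
  have h2 := ((Equiv.arrowCongr (Fintype.equivFin (Finset.Icc (-(N : ℤ)) N : Finset ℤ))
    (Equiv.refl ℤ)).summable_iff).2 h1
  have h3 := ((cfgEquiv N).summable_iff).2 h2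
  refine Summable.of_nonneg_of_le (fun φ => mul_nonneg (by positivity) (hw0 φ)) (fun φ => ?_) h3
  have h4 : (∏ a : Fin (Fintype.card (Finset.Icc (-(N : ℤ)) N : Finset ℤ)),
      (fun x : ℤ => (1 + (x : ℝ) ^ 2) * Real.exp (-(τ * |(x : ℝ)| ^ q)))
        ((Equiv.arrowCongr (Fintype.equivFin (Finset.Icc (-(N : ℤ)) N : Finset ℤ))
    (Equiv.refl ℤ)) (cfgEquiv N φ) a))
      = ∏ x ∈ Finset.Icc (-(N : ℤ)) N, ((1 + ((φ.1 x : ℤ) : ℝ) ^ 2) *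
        Real.exp (-(τ * |((φ.1 x : ℤ) : ℝ)| ^ q))) := by
    refine Eq.trans ?_ (Finset.prod_coe_sort (Finset.Icc (-(N : ℤ)) N)
      (fun x => ((1 + ((φ.1 x : ℤ) : ℝ) ^ 2) * Real.exp (-(τ * |((φ.1 x : ℤ) : ℝ)| ^ q)))))
    refine Fintype.prod_equiv (Fintype.equivFin (Finset.Icc (-(N : ℤ)) N : Finset ℤ)).symm _ _ fun a => ?_
    rfl
  simp only [Function.comp]
  rw [h4, Finset.prod_mul_distrib, ← Real.exp_sum, Finset.sum_neg_distrib, ← Finset.mul_sum]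
  refine mul_le_mul ?_ (hw φ) (hw0 φ) (Finset.prod_nonneg fun x _ => by positivity)
  have h0 : (0 : ℤ) ∈ Finset.Icc (-(N : ℤ)) N := by simp
  rw [← Finset.mul_prod_erase _ _ h0]
  have : (1 : ℝ) ≤ ∏ x ∈ (Finset.Icc (-(N : ℤ)) N).erase 0, (1 + ((φ.1 x : ℤ) : ℝ) ^ 2) := by
    have h5 := Finset.prod_le_prod (s := (Finset.Icc (-(N : ℤ)) N).erase 0) (f := fun _ => (1 : ℝ))
      (g := fun x => 1 + ((φ.1 x : ℤ) : ℝ) ^ 2) (fun _ _ => zero_le_one)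
      (fun x _ => by nlinarith [sq_nonneg ((φ.1 x : ℤ) : ℝ)])
    simpa using h5
  nlinarith [sq_nonneg ((φ.1 0 : ℤ) : ℝ)]


/-- profile function -/
noncomputable def gS (s x : ℝ) : ℝ := if x ≤ 0 then 1 else 1 - Real.exp (-x ^ (-(1 / s)))

noncomputable def cS (s : ℝ) : ℝ := ∫ x in Set.Ioi (0 : ℝ), gS s x

lemma gS_nonneg (s x : ℝ) : 0 ≤ gS s x := by
  unfold gS
  split_ifs with h
  · exact zero_le_one
  · have : Real.exp (-x ^ (-(1 / s))) ≤ 1 := by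
      rw [Real.exp_le_one_iff]
      have := Real.rpow_nonneg (not_le.1 h).le (-(1 / s))
      linarith
    linarith

lemma gS_le_one (s x : ℝ) : gS s x ≤ 1 := by
  unfold gS
  split_ifs with h
  · exact le_rfl
  · linarith [Real.exp_pos (-x ^ (-(1 / s)))]

lemma gS_anti (s : ℝ) (hs : 0 < s) : Antitone (gS s) := by
  intro x y hxy
  by_cases hx : x ≤ 0
  · have : gS s x = 1 := by simp [gS, hx]
    rw [this]; exact gS_le_one s y
  · have hy : ¬ y ≤ 0 := by linarith
    simp only [gS, hx, hy, if_false]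
    have h1 : y ^ (-(1 / s)) ≤ x ^ (-(1 / s)) :=
      Real.rpow_le_rpow_of_nonpos (not_le.1 hx) hxy (by
        have : 0 < 1 / s := by positivity
        linarith)
    have := Real.exp_le_exp.2 (neg_le_neg h1)
    linarith

lemma gS_int (s : ℝ) (hs : 0 < s) (hs1 : s < 1) : MeasureTheory.IntegrableOn (gS s) (Set.Ioi 0) := by
  rw [← Set.Ioc_union_Ioi_eq_Ioi (zero_le_one' ℝ)]
  refine MeasureTheory.IntegrableOn.union ?_ ?_
  · exact (((gS_anti s hs).antitoneOn _).integrableOn_isCompact isCompact_Icc).mono_set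
      Set.Ioc_subset_Icc_self
  · have h1 : MeasureTheory.IntegrableOn (fun x : ℝ => x ^ (-(1 / s))) (Set.Ioi 1) :=
      integrableOn_Ioi_rpow_of_lt (by
        have : 1 < 1 / s := by rw [lt_div_iff₀ hs]; linarith
        linarith) one_pos
    refine MeasureTheory.Integrable.mono' h1 ((gS_anti s hs).measurable.aestronglyMeasurable) ?_
    refine (MeasureTheory.ae_restrict_iff' measurableSet_Ioi).2 (Filter.Eventually.of_forall fun x hx => ?_)
    rw [Real.norm_eq_abs, abs_of_nonneg (gS_nonneg s x)]
    have hx0 : ¬ x ≤ 0 := by have := Set.mem_Ioi.1 hx; linarith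
    simp only [gS, hx0, if_false]
    linarith [Real.add_one_le_exp (-x ^ (-(1 / s)))]

lemma gS_ii (s : ℝ) (hs : 0 < s) (a b : ℝ) : IntervalIntegrable (gS s) MeasureTheory.volume a b :=
  ((gS_anti s hs).antitoneOn _).intervalIntegrable

lemma gS_int_le (s : ℝ) (hs : 0 < s) (hs1 : s < 1) (T : ℝ) (hT : 0 ≤ T) :
    ∫ x in (0 : ℝ)..T, gS s x ≤ cS s := by
  rw [intervalIntegral.integral_of_le hT]
  exact MeasureTheory.setIntegral_mono_set (gS_int s hs hs1)
    (Filter.Eventually.of_forall fun x => gS_nonneg s x)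
    (Filter.Eventually.of_forall Set.Ioc_subset_Ioi_self)

lemma gS_upper (s : ℝ) (hs : 0 < s) (hs1 : s < 1) (d : ℝ) (hd : 0 < d) (M : ℕ) :
    d * ∑ m ∈ Finset.range M, gS s (d * (m + 1 : ℕ)) ≤ cS s := by
  have h1 : AntitoneOn (fun x : ℝ => gS s (d * x)) (Set.Icc (0 : ℝ) (0 + M)) := fun x _ y _ hxy =>
    gS_anti s hs (mul_le_mul_of_nonneg_left hxy hd.le)
  have h2 := h1.sum_le_integral
  simp only [zero_add] at h2
  rw [intervalIntegral.integral_comp_mul_left _ hd.ne', mul_zero, smul_eq_mul] at h2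
  have h3 := gS_int_le s hs hs1 (d * M) (by positivity)
  calc _ ≤ d * (d⁻¹ * ∫ x in (0 : ℝ)..d * M, gS s x) := mul_le_mul_of_nonneg_left h2 hd.le
    _ = ∫ x in (0 : ℝ)..d * M, gS s x := by field_simp
    _ ≤ _ := h3

lemma gS_lower (s : ℝ) (hs : 0 < s) (d : ℝ) (hd : 0 < d) (M : ℕ) :
    (∫ x in (0 : ℝ)..d * (M + 1), gS s x) - d ≤ d * ∑ m ∈ Finset.range M, gS s (d * (m + 1 : ℕ)) := by
  have h1 : AntitoneOn (fun x : ℝ => gS s (d * x)) (Set.Icc (1 : ℝ) (1 + M)) := fun x _ y _ hxy =>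
    gS_anti s hs (mul_le_mul_of_nonneg_left hxy hd.le)
  have h2 := h1.integral_le_sum
  rw [intervalIntegral.integral_comp_mul_left _ hd.ne', smul_eq_mul, mul_one] at h2
  have h3 := intervalIntegral.integral_add_adjacent_intervals (gS_ii s hs 0 d) (gS_ii s hs d (d * (1 + M)))
  have h4 : ∫ x in (0 : ℝ)..d, gS s x ≤ d := by
    have := intervalIntegral.integral_mono_on hd.le (gS_ii s hs 0 d)
      (intervalIntegrable_const (c := (1 : ℝ))) (fun x _ => gS_le_one s x)
    simpa using this
  have h5 : ∑ i ∈ Finset.range M, gS s (d * (1 + i)) = ∑ m ∈ Finset.range M, gS s (d * (m + 1 : ℕ)) :=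
    Finset.sum_congr rfl fun i _ => by push_cast; rw [add_comm]
  rw [h5] at h2
  have h6 := mul_le_mul_of_nonneg_left h2 hd.le
  rw [← mul_assoc, mul_inv_cancel₀ hd.ne', one_mul] at h6
  rw [add_comm (M : ℝ) 1]
  linarith

lemma cS_pos (s : ℝ) (hs : 0 < s) (hs1 : s < 1) : 0 < cS s := by
  have := gS_upper s hs hs1 1 one_pos 1
  refine lt_of_lt_of_le ?_ this
  simp only [Finset.range_one, Finset.sum_singleton, gS]
  norm_num

/-- Riemann sum -/
noncomputable def rS (s : ℝ) (n : ℕ) (a : ℝ) : ℝ :=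
  1 / n * ∑ m ∈ Finset.range (n ^ 2), (1 - Real.exp (-(((n : ℝ) / (m + 1 : ℕ)) ^ (1 / s) * a)))

lemma rS_eq (s : ℝ) (hs : 0 < s) (n : ℕ) (hn : 0 < n) (a : ℝ) (ha : 0 < a) :
    rS s n a = a ^ s * (1 / (n * a ^ s) * ∑ m ∈ Finset.range (n ^ 2), gS s (1 / (n * a ^ s) * (m + 1 : ℕ))) := by
  have hn' : (0 : ℝ) < n := by exact_mod_cast hn
  have has : 0 < a ^ s := Real.rpow_pos_of_pos ha s
  rw [← mul_assoc]
  have h1 : a ^ s * (1 / (n * a ^ s)) = 1 / n := by field_simp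
  rw [h1, rS]
  congr 1
  refine Finset.sum_congr rfl fun m _ => ?_
  have hm : (0 : ℝ) < (m + 1 : ℕ) := by positivity
  have hx : ¬ (1 / (n * a ^ s) * ((m + 1 : ℕ) : ℝ)) ≤ 0 := not_le.2 (by positivity)
  rw [gS, if_neg hx]
  congr 3
  have h2 : 1 / (n * a ^ s) * ((m + 1 : ℕ) : ℝ) = ((n : ℝ) / (m + 1 : ℕ) * a ^ s)⁻¹ := by
    field_simp
  rw [h2, Real.inv_rpow (by positivity), Real.rpow_neg (by positivity), inv_inv,
    Real.mul_rpow (by positivity) has.le, ← Real.rpow_mul ha.le, mul_one_div_cancel hs.ne', Real.rpow_one]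

lemma rS_nonneg (s : ℝ) (n : ℕ) (a : ℝ) (ha : 0 ≤ a) : 0 ≤ rS s n a := by
  refine mul_nonneg (by positivity) (Finset.sum_nonneg fun m _ => ?_)
  rw [sub_nonneg, Real.exp_le_one_iff]
  have : (0 : ℝ) ≤ ((n : ℝ) / (m + 1 : ℕ)) ^ (1 / s) * a := by positivity
  linarith

lemma rS_le (s : ℝ) (hs : 0 < s) (hs1 : s < 1) (n : ℕ) (hn : 0 < n) (a : ℝ) (ha : 0 ≤ a) :
    rS s n a ≤ cS s * a ^ s := by
  rcases ha.eq_or_lt with h | h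
  · subst h
    simp [rS, Real.zero_rpow hs.ne']
  · have hn' : (0 : ℝ) < n := by exact_mod_cast hn
    have has : 0 < a ^ s := Real.rpow_pos_of_pos h s
    rw [rS_eq s hs n hn a h, mul_comm]
    exact mul_le_mul_of_nonneg_right (gS_upper s hs hs1 _ (by positivity) _) has.le

lemma rS_tendsto (s : ℝ) (hs : 0 < s) (hs1 : s < 1) (a : ℝ) (ha : 0 ≤ a) :
    Filter.Tendsto (fun n => rS s n a) Filter.atTop (nhds (cS s * a ^ s)) := by
  rcases ha.eq_or_lt with h | h
  · subst h
    simp [rS, Real.zero_rpow hs.ne']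
  · have has : 0 < a ^ s := Real.rpow_pos_of_pos h s
    have hd : Filter.Tendsto (fun n : ℕ => 1 / ((n : ℝ) * a ^ s)) Filter.atTop (nhds 0) := by
      have := (tendsto_natCast_atTop_atTop (R := ℝ)).atTop_mul_const has
      exact this.const_div_atTop 1
    have hT : Filter.Tendsto (fun n : ℕ => 1 / ((n : ℝ) * a ^ s) * ((n ^ 2 : ℕ) + 1)) Filter.atTop Filter.atTop := by
      have h1 := (tendsto_natCast_atTop_atTop (R := ℝ)).atTop_mul_const (one_div_pos.2 has)
      refine Filter.tendsto_atTop_mono' _ ?_ h1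
      filter_upwards [Filter.eventually_gt_atTop 0] with n hn
      have hn' : (0 : ℝ) < n := by exact_mod_cast hn
      push_cast
      rw [mul_one_div, one_div_mul_eq_div, div_le_div_iff₀ has (by positivity)]
      nlinarith
    have hlow : Filter.Tendsto (fun n : ℕ => a ^ s * ((∫ x in (0 : ℝ)..(1 / ((n : ℝ) * a ^ s) * ((n ^ 2 : ℕ) + 1)), gS s x)
        - 1 / ((n : ℝ) * a ^ s))) Filter.atTop (nhds (a ^ s * (cS s - 0))) :=
      ((MeasureTheory.intervalIntegral_tendsto_integral_Ioi 0 (gS_int s hs hs1) hT).sub hd).const_mul _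
    rw [sub_zero, mul_comm] at hlow
    refine tendsto_of_tendsto_of_tendsto_of_le_of_le' hlow tendsto_const_nhds ?_ ?_
    · filter_upwards [Filter.eventually_gt_atTop 0] with n hn
      have hn' : (0 : ℝ) < n := by exact_mod_cast hn
      rw [rS_eq s hs n hn a h]
      exact mul_le_mul_of_nonneg_left (gS_lower s hs _ (by positivity) _) has.le
    · filter_upwards [Filter.eventually_gt_atTop 0] with n hn
      exact rS_le s hs hs1 n hn a ha

lemma min_le_two (x : ℝ) (hx : 0 ≤ x) : min x 1 ≤ 2 * (1 - Real.exp (-x)) := by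
  have h1 := Real.add_one_le_exp x
  have h2 : Real.exp (-x) ≤ 1 / (1 + x) := by
    rw [Real.exp_neg, ← one_div]
    exact one_div_le_one_div_of_le (by linarith) (by linarith)
  rcases le_total x 1 with h | h
  · rw [min_eq_left h]
    have : 1 / (1 + x) ≤ 1 - x / 2 := by
      rw [div_le_iff₀ (by linarith)]; nlinarith
    linarith
  · rw [min_eq_right h]
    have : 1 / (1 + x) ≤ 1 / 2 := one_div_le_one_div_of_le (by norm_num) (by linarith)
    linarith

/-- cost of a single pair -/
lemma rS_cost (s : ℝ) (hs : 0 < s) (hs1 : s < 1) (n : ℕ) (hn : 0 < n) (r K : ℝ) (hr : 0 < r)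
    (hK : 0 < K) :
    1 / n * ∑ m ∈ Finset.range (n ^ 2), min (r * ((n : ℝ) / (m + 1 : ℕ)) ^ (1 / s)) K
      ≤ 2 * K * (cS s * (r / K) ^ s) := by
  refine le_trans ?_ (mul_le_mul_of_nonneg_left (rS_le s hs hs1 n hn (r / K) (by positivity)) (by positivity))
  rw [rS, ← mul_assoc, mul_comm (2 * K), mul_assoc]
  refine mul_le_mul_of_nonneg_left ?_ (by positivity)
  rw [Finset.mul_sum]
  refine Finset.sum_le_sum fun m _ => ?_
  set U := ((n : ℝ) / (m + 1 : ℕ)) ^ (1 / s) with hU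
  have hU0 : 0 ≤ U := by positivity
  have h1 := min_le_two (U * (r / K)) (by positivity)
  have h2 : min (r * U) K = K * min (U * (r / K)) 1 := by
    rw [mul_min_of_nonneg _ _ hK.le]
    congr 1
    · field_simp
    · ring
  rw [h2]
  nlinarith


noncomputable def hZ (γ : ℝ) (z : ℤ) : ℝ := (|(z : ℝ)| + 1) ^ (-(γ / 2))

lemma hZ_summable (γ : ℝ) (hγ : 2 < γ) : Summable (hZ γ) := by
  have h0 : Summable fun n : ℕ => ((n : ℝ) + 1) ^ (-(γ / 2)) := by
    have := (summable_nat_add_iff 1).2 (Real.summable_nat_rpow.2 (show -(γ / 2) < -1 by linarith))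
    simpa using this
  refine Summable.of_nat_of_neg ?_ ?_
  · simpa [hZ] using h0
  · simpa [hZ] using h0

lemma hZ_nonneg (γ : ℝ) (z : ℤ) : 0 ≤ hZ γ z := by unfold hZ; positivity

lemma hZ_mul (γ : ℝ) (hγ : 2 < γ) (a b r : ℤ) (ha : |a| + 1 ≤ 2 * |r|) (hb : |b| + 1 ≤ 2 * |r|) :
    |(r : ℝ)| ^ (-γ) ≤ 2 ^ γ * (hZ γ a * hZ γ b) := by
  have ha' : |(a : ℝ)| + 1 ≤ 2 * |(r : ℝ)| := by exact_mod_cast ha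
  have hb' : |(b : ℝ)| + 1 ≤ 2 * |(r : ℝ)| := by exact_mod_cast hb
  have hr : 0 < |(r : ℝ)| := by have := abs_nonneg (a : ℝ); linarith
  have h1 : (2 * |(r : ℝ)|) ^ (-(γ / 2)) ≤ hZ γ a :=
    Real.rpow_le_rpow_of_nonpos (by positivity) ha' (by linarith)
  have h2 : (2 * |(r : ℝ)|) ^ (-(γ / 2)) ≤ hZ γ b :=
    Real.rpow_le_rpow_of_nonpos (by positivity) hb' (by linarith)
  have h3 := mul_le_mul h1 h2 (by positivity) (hZ_nonneg _ _)
  rw [← Real.rpow_add (by positivity), Real.mul_rpow (by norm_num) hr.le] at h3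
  have h4 : -(γ / 2) + -(γ / 2) = -γ := by ring
  rw [h4] at h3
  have h5 := mul_le_mul_of_nonneg_left h3 (show (0 : ℝ) ≤ 2 ^ γ by positivity)
  rw [← mul_assoc, ← Real.rpow_add (by norm_num)] at h5
  simpa using h5

lemma geo_term (γ : ℝ) (hγ : 2 < γ) (k : ℕ) (i j : ℤ) :
    strK k i j * |((i - j : ℤ) : ℝ)| ^ (-γ) ≤
      2 ^ γ * (hZ γ (i - k) * hZ γ (j - k)) + 2 ^ γ * (hZ γ (i + k) * hZ γ (j + k)) := by
  have n1 : 0 ≤ 2 ^ γ * (hZ γ (i - k) * hZ γ (j - k)) :=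
    mul_nonneg (by positivity) (mul_nonneg (hZ_nonneg _ _) (hZ_nonneg _ _))
  have n2 : 0 ≤ 2 ^ γ * (hZ γ (i + k) * hZ γ (j + k)) :=
    mul_nonneg (by positivity) (mul_nonneg (hZ_nonneg _ _) (hZ_nonneg _ _))
  rcases strK_cases k i j with h | h
  · rw [h, zero_mul]; linarith
  · have hc : ((|i - k| + 1 ≤ 2 * |i - j|) ∧ |j - k| + 1 ≤ 2 * |i - j|) ∨
        ((|i + k| + 1 ≤ 2 * |i - j|) ∧ |j + k| + 1 ≤ 2 * |i - j|) := by
      unfold strK psiK at h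
      by_cases h1 : |i| ≤ (k : ℤ) <;> by_cases h2 : |j| ≤ (k : ℤ) <;> simp [h1, h2] at h
      · grind
      · grind
    rw [h, one_mul]
    rcases hc with ⟨a, b⟩ | ⟨a, b⟩
    · have := hZ_mul γ hγ _ _ _ a b
      linarith
    · have := hZ_mul γ hγ _ _ _ a b
      linarith

lemma hasSum_prod_nonneg (f : ℤ → ℝ) (a : ℝ) (h : HasSum f a) (h0 : ∀ z, 0 ≤ f z) :
    HasSum (fun p : ℤ × ℤ => f p.1 * f p.2) (a * a) := by
  have h2 : Summable fun p : ℤ × ℤ => f p.1 * f p.2 :=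
    Summable.mul_of_nonneg h.summable h.summable h0 h0
  exact h.mul h h2

lemma hZ_key (γ : ℝ) (hγ : 2 < γ) (k : ℤ) :
    HasSum (fun p : ℤ × ℤ => hZ γ (p.1 + k) * hZ γ (p.2 + k)) ((∑' z, hZ γ z) * ∑' z, hZ γ z) := by
  have h1 : HasSum (hZ γ ∘ (Equiv.addRight k : ℤ ≃ ℤ)) (∑' z, hZ γ z) :=
    (Equiv.hasSum_iff (Equiv.addRight k)).2 (hZ_summable γ hγ).hasSum
  exact hasSum_prod_nonneg _ _ h1 fun z => hZ_nonneg _ _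

lemma geo_bound (γ : ℝ) (hγ : 2 < γ) : ∃ C : ℝ, 0 < C ∧ ∀ (k : ℕ) (P : Finset (ℤ × ℤ)),
    ∑ p ∈ P, strK k p.1 p.2 * |((p.1 - p.2 : ℤ) : ℝ)| ^ (-γ) ≤ C := by
  have key := hZ_key γ hγ
  generalize ((∑' z, hZ γ z) * ∑' z, hZ γ z) = D at key
  have n0 : ∀ (k : ℤ) (p : ℤ × ℤ), 0 ≤ hZ γ (p.1 + k) * hZ γ (p.2 + k) := fun k p =>
    mul_nonneg (hZ_nonneg _ _) (hZ_nonneg _ _)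
  have hD0 : 0 ≤ D := (key 0).nonneg (n0 0)
  have h2p : (0 : ℝ) < 2 ^ γ := Real.rpow_pos_of_pos two_pos γ
  refine ⟨2 ^ γ * (D + D) + 1, add_pos_of_nonneg_of_pos (mul_nonneg h2p.le (add_nonneg hD0 hD0)) one_pos,
    fun k P => ?_⟩
  have h1 := sum_le_hasSum P (fun p _ => n0 (-k) p) (key (-k))
  have h2 := sum_le_hasSum P (fun p _ => n0 k p) (key k)
  have h3 : ∑ p ∈ P, strK k p.1 p.2 * |((p.1 - p.2 : ℤ) : ℝ)| ^ (-γ) ≤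
      ∑ p ∈ P, 2 ^ γ * (hZ γ (p.1 + -k) * hZ γ (p.2 + -k) + hZ γ (p.1 + k) * hZ γ (p.2 + k)) := by
    refine Finset.sum_le_sum fun p _ => ?_
    rw [mul_add]
    exact geo_term γ hγ k p.1 p.2
  rw [← Finset.mul_sum, Finset.sum_add_distrib] at h3
  have h4 := mul_le_mul_of_nonneg_left (add_le_add h1 h2) h2p.le
  linarith

noncomputable def eT (α q : ℝ) (φ : ℤ → ℤ) (p : ℤ × ℤ) : ℝ :=
  if p.1 = p.2 then 0
      else |((φ p.1 - φ p.2 : ℤ) : ℝ)| ^ q / |((p.1 - p.2 : ℤ) : ℝ)| ^ α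

lemma eT_nonneg (α q : ℝ) (φ : ℤ → ℤ) (p : ℤ × ℤ) : 0 ≤ eT α q φ p := by
  unfold eT; split_ifs <;> positivity

lemma eT_summable (α q : ℝ) (hq : 0 < q) (hα : 2 < α) (N : ℕ) (φ : ChainConfig N) :
    Summable (eT α q φ.1) := by
  obtain ⟨C, _, hC⟩ := geo_bound α hα
  have s1 : Summable fun p : ℤ × ℤ => strK N p.1 p.2 * |((p.1 - p.2 : ℤ) : ℝ)| ^ (-α) :=
    summable_of_sum_le (fun p => mul_nonneg (strK_nonneg _ _ _) (by positivity)) (fun P => hC N P)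
  set I := Finset.Icc (-(N : ℤ)) N
  set M := ∑ x ∈ I, |((φ.1 x : ℤ) : ℝ)| ^ q with hM
  have hMx : ∀ x, |((φ.1 x : ℤ) : ℝ)| ^ q ≤ M := fun x => by
    by_cases hx : x ∈ I
    · exact Finset.single_le_sum (f := fun x => |((φ.1 x : ℤ) : ℝ)| ^ q) (fun y _ => by positivity) hx
    · have : φ.1 x = 0 := φ.2 x (by simp only [I, Finset.mem_Icc] at hx; grind)
      rw [this]
      simp only [Int.cast_zero, abs_zero, Real.zero_rpow hq.ne']
      exact Finset.sum_nonneg fun y _ => by positivity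
  have s2 : Summable fun p : ℤ × ℤ => if p ∈ I ×ˢ I then eT α q φ.1 p else 0 :=
    summable_of_ne_finset_zero (s := I ×ˢ I) fun p hp => by simp only [hp, if_false]
  refine Summable.of_nonneg_of_le (eT_nonneg _ _ _) (fun p => ?_) (s2.add (s1.mul_left M))
  have hM0 : 0 ≤ M := Finset.sum_nonneg fun y _ => by positivity
  have g2 : 0 ≤ M * (strK N p.1 p.2 * |((p.1 - p.2 : ℤ) : ℝ)| ^ (-α)) :=
    mul_nonneg hM0 (mul_nonneg (strK_nonneg _ _ _) (by positivity))
  by_cases hp : p ∈ I ×ˢ I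
  · simp only [hp, if_true]; linarith
  · simp only [hp, if_false, zero_add]
    have hI : ∀ x, x ∈ I ↔ |x| ≤ (N : ℤ) := fun x => by
      simp only [I, Finset.mem_Icc, abs_le]
    have hz : ∀ x, ¬ |x| ≤ (N : ℤ) → φ.1 x = 0 := fun x hx => φ.2 x (not_le.1 hx)
    rw [Finset.mem_product, hI, hI] at hp
    unfold eT
    split_ifs with he
    · exact g2
    · rw [Real.rpow_neg (abs_nonneg _), div_eq_mul_inv]
      by_cases h1 : |p.1| ≤ (N : ℤ)
      · have h2 : ¬ |p.2| ≤ (N : ℤ) := fun h => hp ⟨h1, h⟩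
        have : strK N p.1 p.2 = 1 := by simp [strK, psiK, h1, h2]
        rw [this, one_mul, hz _ h2, sub_zero]
        exact mul_le_mul_of_nonneg_right (hMx _) (by positivity)
      · by_cases h2 : |p.2| ≤ (N : ℤ)
        · have : strK N p.1 p.2 = 1 := by simp [strK, psiK, h1, h2]
          rw [this, one_mul, hz _ h1, zero_sub, Int.cast_neg, abs_neg]
          exact mul_le_mul_of_nonneg_right (hMx _) (by positivity)
        · rw [hz _ h1, hz _ h2]
          have : strK N p.1 p.2 = 0 := by simp [strK, psiK, h1, h2]
          simp [this, Real.zero_rpow hq.ne']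

lemma chainEnergy_eq (β α q : ℝ) (φ : ℤ → ℤ) : chainEnergy β α q φ = β * ∑' p, eT α q φ p := rfl

lemma energy_lower (β α q : ℝ) (hβ : 0 < β) (hq : 0 < q) (hα : 2 < α) (N : ℕ) (φ : ChainConfig N) :
    β * (2 * N + 1 : ℝ) ^ (-α) * ∑ x ∈ Finset.Icc (-(N : ℤ)) N, |((φ.1 x : ℤ) : ℝ)| ^ q
      ≤ chainEnergy β α q φ.1 := by
  rw [chainEnergy_eq, mul_assoc]
  refine mul_le_mul_of_nonneg_left ?_ hβ.le
  have h1 := (eT_summable α q hq hα N φ).sum_le_tsum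
    ((Finset.Icc (-(N : ℤ)) N).map ⟨fun x => (x, (N : ℤ) + 1), fun a b h => by simpa using h⟩)
    (fun p _ => eT_nonneg _ _ _ _)
  refine le_trans ?_ h1
  rw [Finset.sum_map, Finset.mul_sum]
  refine Finset.sum_le_sum fun x hx => ?_
  rw [Finset.mem_Icc] at hx
  have hz : φ.1 ((N : ℤ) + 1) = 0 := φ.2 _ (by grind)
  change _ ≤ eT α q φ.1 (x, (N : ℤ) + 1)
  simp only [eT, hz, sub_zero]
  rw [if_neg (by omega), mul_comm, div_eq_mul_inv, ← Real.rpow_neg (abs_nonneg _)]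
  refine mul_le_mul_of_nonneg_left ?_ (by positivity)
  have h2 : (1 : ℤ) ≤ |x - (N + 1)| ∧ |x - (N + 1)| ≤ 2 * N + 1 := by grind
  have h3 : (1 : ℝ) ≤ |((x - (N + 1) : ℤ) : ℝ)| ∧ |((x - (N + 1) : ℤ) : ℝ)| ≤ 2 * N + 1 := by
    exact_mod_cast h2
  exact Real.rpow_le_rpow_of_nonpos (by linarith [h3.1]) h3.2 (by linarith)

lemma weight_summable (β α q : ℝ) (hβ : 0 < β) (hq : 0 < q) (hα : 2 < α) (N : ℕ) :
    Summable fun φ : ChainConfig N => (1 + ((φ.1 0 : ℤ) : ℝ) ^ 2) * chainWeight β α q φ.1 := by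
  refine aux_sum N (β * (2 * N + 1 : ℝ) ^ (-α)) q (by positivity) hq _ (fun φ => (Real.exp_pos _).le) ?_
  intro φ
  exact Real.exp_le_exp.2 (neg_le_neg (energy_lower β α q hβ hq hα N φ))

lemma prod_bounds {ι : Type*} (T : Finset ι) (y : ι → ℝ) (ρ : ℝ) (hρ : ρ < 1)
    (h0 : ∀ t ∈ T, 0 ≤ y t) (h1 : ∀ t ∈ T, y t ≤ ρ) :
    Real.exp (-((∑ t ∈ T, y t) / (1 - ρ))) ≤ ∏ t ∈ T, (1 - y t) ∧
      ∏ t ∈ T, (1 - y t) ≤ Real.exp (-∑ t ∈ T, y t) := by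
  constructor
  · rw [Finset.sum_div, ← Finset.sum_neg_distrib, Real.exp_sum]
    refine Finset.prod_le_prod (fun t _ => (Real.exp_pos _).le) fun t ht => ?_
    have a0 := h0 t ht
    have a1 := h1 t ht
    have a2 : 0 < 1 - ρ := by linarith
    have a3 := Real.add_one_le_exp (y t / (1 - ρ))
    have a4 : 1 ≤ (1 - y t) * (y t / (1 - ρ) + 1) := by
      rw [div_add_one a2.ne', ← mul_div_assoc, le_div_iff₀ a2]
      nlinarith
    have a5 : 1 ≤ (1 - y t) * Real.exp (y t / (1 - ρ)) :=
      a4.trans (mul_le_mul_of_nonneg_left a3 (by linarith))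
    rw [Real.exp_neg, inv_le_iff_one_le_mul₀ (Real.exp_pos _)]
    exact a5
  · rw [← Finset.sum_neg_distrib, Real.exp_sum]
    refine Finset.prod_le_prod (fun t ht => by linarith [h1 t ht]) fun t ht => ?_
    have := Real.add_one_le_exp (-y t)
    linarith

abbrev Bd := ℤ ⊕ ((ℤ × ℤ) × ℕ)

def bI : Bd → ℤ
  | Sum.inl x => x
  | Sum.inr b => b.1.1

def bJ (N : ℕ) : Bd → ℤ
  | Sum.inl x => if x = N + 1 then N + 2 else N + 1
  | Sum.inr b => if b.1.1 = b.1.2 then b.1.1 + 1 else b.1.2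

noncomputable def bU (κ s : ℝ) (n : ℕ) : Bd → ℝ
  | Sum.inl _ => κ
  | Sum.inr b => ((n : ℝ) / (b.2 + 1 : ℕ)) ^ (1 / s)

noncomputable def bP (β α s : ℝ) (n : ℕ) : Bd → ℝ
  | Sum.inl _ => 1
  | Sum.inr b => β * |((b.1.1 - b.1.2 : ℤ) : ℝ)| ^ (-α) / (cS s * n)

noncomputable def bx (n : ℕ) : Finset (ℤ × ℤ) := (Finset.Icc (-(n : ℤ)) n).offDiag

noncomputable def bB (N n : ℕ) : Finset Bd := (Finset.Icc (-(N : ℤ)) N).disjSum (bx n ×ˢ Finset.range (n ^ 2))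

lemma bIJ (N : ℕ) (b : Bd) : bI b ≠ bJ N b := by
  rcases b with x | b
  · simp only [bI, bJ]; split_ifs <;> omega
  · simp only [bI, bJ]; split_ifs <;> grind

noncomputable def sq2 (N : ℕ) (φ : ℤ → ℤ) : ℝ := ∑ x ∈ Finset.Icc (-(N : ℤ)) N, ((φ x : ℤ) : ℝ) ^ 2

noncomputable def eN (β α s : ℝ) (n : ℕ) (φ : ℤ → ℤ) : ℝ :=
  ∑ p ∈ bx n, β * |((p.1 - p.2 : ℤ) : ℝ)| ^ (-α) / cS s * rS s n (((φ p.1 - φ p.2 : ℤ) : ℝ) ^ 2)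

lemma bx_ne {n : ℕ} {p : ℤ × ℤ} (h : p ∈ bx n) : p.1 ≠ p.2 := (Finset.mem_offDiag.1 h).2.2

lemma abs_ge_one {i j : ℤ} (h : i ≠ j) : (1 : ℝ) ≤ |((i - j : ℤ) : ℝ)| := by
  have : (1 : ℤ) ≤ |i - j| := Int.one_le_abs (sub_ne_zero.2 h)
  exact_mod_cast this

lemma bP_bd (β α s : ℝ) (hβ : 0 < β) (hα : 2 < α) (hs : 0 < s) (hs1 : s < 1) (n : ℕ)
    (p : ℤ × ℤ) (hp : p.1 ≠ p.2) :
    0 ≤ β * |((p.1 - p.2 : ℤ) : ℝ)| ^ (-α) / (cS s * n) ∧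
    β * |((p.1 - p.2 : ℤ) : ℝ)| ^ (-α) / (cS s * n) ≤ β / (cS s * n) := by
  have hc := cS_pos s hs hs1
  refine ⟨by positivity, ?_⟩
  have h1 : |((p.1 - p.2 : ℤ) : ℝ)| ^ (-α) ≤ 1 :=
    Real.rpow_le_one_of_one_le_of_nonpos (abs_ge_one hp) (by linarith)
  gcongr
  nlinarith

lemma prod_eq (β α s κ : ℝ) (N n : ℕ) (φ : ChainConfig N) :
    ∏ b ∈ bB N n, (1 - bP β α s n b + bP β α s n b *
      Real.exp (-(bU κ s n b * ((φ.1 (bI b) - φ.1 (bJ N b) : ℤ) : ℝ) ^ 2)))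
    = Real.exp (-(κ * sq2 N φ.1)) * ∏ t ∈ bx n ×ˢ Finset.range (n ^ 2),
      (1 - β * |((t.1.1 - t.1.2 : ℤ) : ℝ)| ^ (-α) / (cS s * n) *
        (1 - Real.exp (-(((n : ℝ) / (t.2 + 1 : ℕ)) ^ (1 / s) *
          ((φ.1 t.1.1 - φ.1 t.1.2 : ℤ) : ℝ) ^ 2)))) := by
  unfold bB
  rw [Finset.prod_disjSum]
  congr 1
  · rw [sq2, Finset.mul_sum, ← Finset.sum_neg_distrib, Real.exp_sum]
    refine Finset.prod_congr rfl fun x hx => ?_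
    rw [Finset.mem_Icc] at hx
    have hz : φ.1 ((N : ℤ) + 1) = 0 := φ.2 _ (by grind)
    have hx' : ¬ x = (N : ℤ) + 1 := by omega
    simp only [bP, bU, bI, bJ, hx', if_false, hz, sub_zero, sub_self, one_mul, zero_add]
  · refine Finset.prod_congr rfl fun t ht => ?_
    have hne := bx_ne (Finset.mem_product.1 ht).1
    simp only [bP, bU, bI, bJ, hne, if_false]
    ring

lemma y_sum (β α s : ℝ) (n : ℕ) (φ : ℤ → ℤ) :
    ∑ t ∈ bx n ×ˢ Finset.range (n ^ 2),
      (β * |((t.1.1 - t.1.2 : ℤ) : ℝ)| ^ (-α) / (cS s * n) *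
        (1 - Real.exp (-(((n : ℝ) / (t.2 + 1 : ℕ)) ^ (1 / s) *
          ((φ t.1.1 - φ t.1.2 : ℤ) : ℝ) ^ 2)))) = eN β α s n φ := by
  rw [Finset.sum_product]
  refine Finset.sum_congr rfl fun p _ => ?_
  simp only
  rw [← Finset.mul_sum, rS, ← mul_assoc]
  congr 1
  rw [mul_one_div, div_div]

lemma sq_rpow (s x : ℝ) : (x ^ 2) ^ s = |x| ^ (2 * s) := by
  rw [← sq_abs, Real.rpow_mul (abs_nonneg _)]
  norm_num

lemma eN_tendsto (β α s q : ℝ) (hβ : 0 < β) (hα : 2 < α) (hq : q = 2 * s) (hs : 0 < s) (hs1 : s < 1)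
    (N : ℕ) (φ : ChainConfig N) :
    Filter.Tendsto (fun n => eN β α s n φ.1) Filter.atTop (nhds (chainEnergy β α q φ.1)) := by
  have hc := cS_pos s hs hs1
  rw [chainEnergy_eq, ← tsum_mul_left]
  have e1 : (fun n => eN β α s n φ.1) = fun n => ∑' p : ℤ × ℤ, if p ∈ bx n then
      β * |((p.1 - p.2 : ℤ) : ℝ)| ^ (-α) / cS s * rS s n (((φ.1 p.1 - φ.1 p.2 : ℤ) : ℝ) ^ 2) else 0 := by
    funext n
    rw [tsum_eq_sum (s := bx n) (fun p hp => by simp only [hp, if_false])]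
    exact Finset.sum_congr rfl fun p hp => by simp only [hp, if_true]
  have e2 : ∀ p : ℤ × ℤ, p.1 ≠ p.2 → β * eT α q φ.1 p = β * |((p.1 - p.2 : ℤ) : ℝ)| ^ (-α) / cS s *
      (cS s * (((φ.1 p.1 - φ.1 p.2 : ℤ) : ℝ) ^ 2) ^ s) := fun p hp => by
    rw [eT, if_neg hp, sq_rpow, hq, Real.rpow_neg (abs_nonneg _)]
    field_simp
  rw [e1]
  refine tendsto_tsum_of_dominated_convergence (bound := fun p => β * eT α q φ.1 p)
    ((eT_summable α q (by linarith) hα N φ).mul_left β) ?_ ?_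
  · intro p
    by_cases hp : p.1 = p.2
    · have h1 : ∀ n, p ∉ bx n := fun n h => bx_ne h hp
      simp only [h1, if_false, eT, hp, if_true, mul_zero]
      exact tendsto_const_nhds
    · rw [e2 p hp]
      refine Filter.Tendsto.congr' ?_ ((rS_tendsto s hs hs1 _ (sq_nonneg _)).const_mul _)
      filter_upwards [Filter.eventually_ge_atTop (p.1.natAbs + p.2.natAbs)] with n hn
      have : p ∈ bx n := by
        simp only [bx, Finset.mem_offDiag, Finset.mem_Icc]
        refine ⟨?_, ?_, hp⟩ <;> omega
      simp only [this, if_true]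
  · filter_upwards [Filter.eventually_gt_atTop 0] with n hn p
    split_ifs with h
    · rw [e2 p (bx_ne h)]
      have h1 := rS_nonneg s n (((φ.1 p.1 - φ.1 p.2 : ℤ) : ℝ) ^ 2) (sq_nonneg _)
      have h2 := rS_le s hs hs1 n hn (((φ.1 p.1 - φ.1 p.2 : ℤ) : ℝ) ^ 2) (sq_nonneg _)
      rw [Real.norm_eq_abs, abs_of_nonneg (mul_nonneg (by positivity) h1)]
      exact mul_le_mul_of_nonneg_left h2 (by positivity)
    · rw [norm_zero]
      exact mul_nonneg hβ.le (eT_nonneg _ _ _ _)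

lemma cost_bd (β α s κ K C : ℝ) (hβ : 0 < β) (hα : 2 < α) (hs : 0 < s) (hs1 : s < 1) (hκ : 0 < κ)
    (hK : 0 < K) (N n : ℕ) (hn : 0 < n)
    (hC : ∀ (k : ℕ) (P : Finset (ℤ × ℤ)),
      ∑ p ∈ P, strK k p.1 p.2 * |((p.1 - p.2 : ℤ) : ℝ)| ^ (-(α - s)) ≤ C)
    (hCK : 8 * β * C ≤ K ^ s) (hκK : (2 * N + 1 : ℝ) ^ 2 * κ ≤ K / 4) (k : ℕ) :
    ∑ b ∈ bB N n, bP β α s n b * (strK k (bI b) (bJ N b) *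
      min (|((bI b - bJ N b : ℤ) : ℝ)| * bU κ s n b) K) ≤ K / 2 := by
  have hc := cS_pos s hs hs1
  have hn' : (0 : ℝ) < n := by exact_mod_cast hn
  have hst : ∀ x y, strK k x y ≤ 1 := fun x y => by
    rcases strK_cases k x y with h | h <;> rw [h] <;> norm_num
  unfold bB
  rw [Finset.sum_disjSum]
  have A : ∑ x ∈ Finset.Icc (-(N : ℤ)) N, bP β α s n (Sum.inl x) * (strK k (bI (Sum.inl x)) (bJ N (Sum.inl x)) *
      min (|((bI (Sum.inl x) - bJ N (Sum.inl x) : ℤ) : ℝ)| * bU κ s n (Sum.inl x)) K) ≤ K / 4 := by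
    have : ∑ x ∈ Finset.Icc (-(N : ℤ)) N, bP β α s n (Sum.inl x) * (strK k (bI (Sum.inl x)) (bJ N (Sum.inl x)) *
      min (|((bI (Sum.inl x) - bJ N (Sum.inl x) : ℤ) : ℝ)| * bU κ s n (Sum.inl x)) K)
      ≤ ∑ x ∈ Finset.Icc (-(N : ℤ)) N, (2 * N + 1 : ℝ) * κ := by
      refine Finset.sum_le_sum fun x hx => ?_
      rw [Finset.mem_Icc] at hx
      have hx' : ¬ x = (N : ℤ) + 1 := by omega
      simp only [bP, bU, bI, bJ, hx', if_false, one_mul]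
      have h2 : |x - (N + 1)| ≤ 2 * (N : ℤ) + 1 := by grind
      have h3 : |((x - (N + 1) : ℤ) : ℝ)| ≤ 2 * N + 1 := by exact_mod_cast h2
      have h4 : 0 ≤ |((x - (N + 1) : ℤ) : ℝ)| * κ := by positivity
      calc _ ≤ 1 * min (|((x - (N + 1) : ℤ) : ℝ)| * κ) K :=
            mul_le_mul_of_nonneg_right (hst _ _) (le_min h4 hK.le)
        _ ≤ |((x - (N + 1) : ℤ) : ℝ)| * κ := by rw [one_mul]; exact min_le_left _ _
        _ ≤ _ := mul_le_mul_of_nonneg_right h3 hκ.le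
    refine this.trans (le_trans (le_of_eq ?_) hκK)
    rw [Finset.sum_const, Int.card_Icc, nsmul_eq_mul]
    have : (((N : ℤ) + 1 - -(N : ℤ)).toNat : ℝ) = 2 * N + 1 := by
      have h : ((N : ℤ) + 1 - -(N : ℤ)).toNat = 2 * N + 1 := by omega
      rw [h]; push_cast; ring
    rw [this]; ring
  have Bq : ∑ t ∈ bx n ×ˢ Finset.range (n ^ 2), bP β α s n (Sum.inr t) * (strK k (bI (Sum.inr t)) (bJ N (Sum.inr t)) *
      min (|((bI (Sum.inr t) - bJ N (Sum.inr t) : ℤ) : ℝ)| * bU κ s n (Sum.inr t)) K) ≤ K / 4 := by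
    rw [Finset.sum_product]
    have h1 : ∑ p ∈ bx n, ∑ m ∈ Finset.range (n ^ 2), bP β α s n (Sum.inr (p, m)) *
        (strK k (bI (Sum.inr (p, m))) (bJ N (Sum.inr (p, m))) *
        min (|((bI (Sum.inr (p, m)) - bJ N (Sum.inr (p, m)) : ℤ) : ℝ)| * bU κ s n (Sum.inr (p, m))) K)
        ≤ ∑ p ∈ bx n, 2 * β * K / K ^ s * (strK k p.1 p.2 * |((p.1 - p.2 : ℤ) : ℝ)| ^ (-(α - s))) := by
      refine Finset.sum_le_sum fun p hp => ?_
      have hne := bx_ne hp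
      have hr1 := abs_ge_one hne
      simp only [bP, bU, bI, bJ, hne, if_false]
      set r := |((p.1 - p.2 : ℤ) : ℝ)|
      have hr : 0 < r := by linarith
      have h2 := rS_cost s hs hs1 n hn r K hr hK
      have h3 : ∑ m ∈ Finset.range (n ^ 2), β * r ^ (-α) / (cS s * n) *
          (strK k p.1 p.2 * min (r * ((n : ℝ) / (m + 1 : ℕ)) ^ (1 / s)) K)
          = (β * r ^ (-α) / cS s * strK k p.1 p.2) *
            (1 / n * ∑ m ∈ Finset.range (n ^ 2), min (r * ((n : ℝ) / (m + 1 : ℕ)) ^ (1 / s)) K) := by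
        rw [Finset.mul_sum, Finset.mul_sum]
        refine Finset.sum_congr rfl fun m _ => ?_
        field_simp
      rw [h3]
      refine (mul_le_mul_of_nonneg_left h2 (mul_nonneg (by positivity) (strK_nonneg _ _ _))).trans
        (le_of_eq ?_)
      have h4 : r ^ (-(α - s)) = r ^ (-α) * r ^ s := by
        rw [← Real.rpow_add hr]; congr 1; ring
      rw [h4, Real.div_rpow hr.le hK.le]
      field_simp
    refine h1.trans ?_
    rw [← Finset.mul_sum]
    have hKs : 0 < K ^ s := by positivity
    refine (mul_le_mul_of_nonneg_left (hC k (bx n)) (by positivity)).trans ?_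
    rw [div_mul_eq_mul_div, div_le_iff₀ hKs]
    nlinarith
  linarith

lemma gauss_summable (N : ℕ) (κ : ℝ) (hκ : 0 < κ) (w : ChainConfig N → ℝ) (hw0 : ∀ φ, 0 ≤ w φ)
    (hw : ∀ φ, w φ ≤ Real.exp (-(κ * sq2 N φ.1))) :
    Summable fun φ : ChainConfig N => (1 + ((φ.1 0 : ℤ) : ℝ) ^ 2) * w φ := by
  refine aux_sum N κ 2 hκ two_pos w hw0 fun φ => (hw φ).trans (le_of_eq ?_)
  unfold sq2
  simp

lemma limB (β α s q κ K C : ℝ) (hβ : 0 < β) (hα : 2 < α) (hq : q = 2 * s) (hs : 0 < s) (hs1 : s < 1)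
    (hκ : 0 < κ) (hK : 0 < K) (N : ℕ)
    (hC : ∀ (k : ℕ) (P : Finset (ℤ × ℤ)),
      ∑ p ∈ P, strK k p.1 p.2 * |((p.1 - p.2 : ℤ) : ℝ)| ^ (-(α - s)) ≤ C)
    (hCK : 8 * β * C ≤ K ^ s) (hκK : (2 * N + 1 : ℝ) ^ 2 * κ ≤ K / 4) :
    1 / (2 * K * Real.exp (2 * K)) * ((N + 1 : ℕ) / 2 : ℝ) * ∑' φ : ChainConfig N,
        Real.exp (-(κ * sq2 N φ.1)) * chainWeight β α q φ.1
      ≤ ∑' φ : ChainConfig N, ((φ.1 0 : ℤ) : ℝ) ^ 2 *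
        (Real.exp (-(κ * sq2 N φ.1)) * chainWeight β α q φ.1) := by
  have hc := cS_pos s hs hs1
  have hρ : Filter.Tendsto (fun n : ℕ => β / (cS s * n)) Filter.atTop (nhds 0) :=
    Filter.Tendsto.div_atTop tendsto_const_nhds
      (Filter.Tendsto.const_mul_atTop hc tendsto_natCast_atTop_atTop)
  have hev : ∀ᶠ n : ℕ in Filter.atTop, β / (cS s * n) < 1 := hρ.eventually_lt_const one_pos
  let y : ℕ → (ℤ → ℤ) → ((ℤ × ℤ) × ℕ) → ℝ := fun n φ t =>
    β * |((t.1.1 - t.1.2 : ℤ) : ℝ)| ^ (-α) / (cS s * n) *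
        (1 - Real.exp (-(((n : ℝ) / (t.2 + 1 : ℕ)) ^ (1 / s) *
          ((φ t.1.1 - φ t.1.2 : ℤ) : ℝ) ^ 2)))
  have hy : ∀ n φ, ∀ t ∈ bx n ×ˢ Finset.range (n ^ 2), 0 ≤ y n φ t ∧ y n φ t ≤ β / (cS s * n) := by
    intro n φ t ht
    obtain ⟨b0, b1⟩ := bP_bd β α s hβ hα hs hs1 n t.1 (bx_ne (Finset.mem_product.1 ht).1)
    have e0 := Real.exp_pos (-(((n : ℝ) / (t.2 + 1 : ℕ)) ^ (1 / s) *
          ((φ t.1.1 - φ t.1.2 : ℤ) : ℝ) ^ 2))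
    have e1 : Real.exp (-(((n : ℝ) / (t.2 + 1 : ℕ)) ^ (1 / s) *
          ((φ t.1.1 - φ t.1.2 : ℤ) : ℝ) ^ 2)) ≤ 1 := by
      rw [Real.exp_le_one_iff, neg_nonpos]; positivity
    refine ⟨mul_nonneg b0 (by linarith), le_trans ?_ b1⟩
    exact mul_le_of_le_one_right b0 (by linarith)
  have hE : ∀ n φ, ∑ t ∈ bx n ×ˢ Finset.range (n ^ 2), y n φ t = eN β α s n φ := fun n φ =>
    y_sum β α s n φ
  have hE0 : ∀ n φ, 0 ≤ eN β α s n φ := fun n φ => by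
    rw [← hE]; exact Finset.sum_nonneg fun t ht => (hy n φ t ht).1
  have hb : ∀ n : ℕ, β / (cS s * n) < 1 → ∀ φ,
      Real.exp (-(eN β α s n φ / (1 - β / (cS s * n)))) ≤
        ∏ t ∈ bx n ×ˢ Finset.range (n ^ 2), (1 - y n φ t) ∧
      ∏ t ∈ bx n ×ˢ Finset.range (n ^ 2), (1 - y n φ t) ≤ Real.exp (-eN β α s n φ) := by
    intro n hn φ
    have := prod_bounds _ (y n φ) _ hn (fun t ht => (hy n φ t ht).1) (fun t ht => (hy n φ t ht).2)
    rwa [hE] at this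
  refine aux_lim (X := ChainConfig N)
    (fun n φ => Real.exp (-(κ * sq2 N φ.1)) * ∏ t ∈ bx n ×ˢ Finset.range (n ^ 2), (1 - y n φ.1 t))
    (fun φ => Real.exp (-(κ * sq2 N φ.1)) * chainWeight β α q φ.1)
    (fun φ => Real.exp (-(κ * sq2 N φ.1))) (fun φ => ((φ.1 0 : ℤ) : ℝ)) _ ?_ ?_ ?_ ?_ ?_
  · intro φ
    refine Filter.Tendsto.const_mul _ ?_
    have hEt := eN_tendsto β α s q hβ hα hq hs hs1 N φ
    have hlow : Filter.Tendsto (fun n : ℕ => Real.exp (-(eN β α s n φ.1 / (1 - β / (cS s * n)))))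
        Filter.atTop (nhds (chainWeight β α q φ.1)) := by
      have h1 := hEt.div (hρ.const_sub 1) (by norm_num)
      simp only [sub_zero, div_one] at h1
      exact (Real.continuous_exp.tendsto _).comp h1.neg
    have hup : Filter.Tendsto (fun n : ℕ => Real.exp (-eN β α s n φ.1))
        Filter.atTop (nhds (chainWeight β α q φ.1)) :=
      (Real.continuous_exp.tendsto _).comp hEt.neg
    refine tendsto_of_tendsto_of_tendsto_of_le_of_le' hlow hup ?_ ?_
    · filter_upwards [hev] with n hn using (hb n hn φ.1).1
    · filter_upwards [hev] with n hn using (hb n hn φ.1).2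
  · exact gauss_summable N κ hκ _ (fun φ => (Real.exp_pos _).le) fun φ => le_rfl
  · filter_upwards [hev] with n hn φ
    exact mul_nonneg (Real.exp_pos _).le ((Real.exp_pos _).le.trans (hb n hn φ.1).1)
  · filter_upwards [hev] with n hn φ
    refine mul_le_of_le_one_right (Real.exp_pos _).le ((hb n hn φ.1).2.trans ?_)
    rw [Real.exp_le_one_iff]
    linarith [hE0 n φ.1]
  · filter_upwards [hev, Filter.eventually_gt_atTop 0] with n hn hn0
    have hA := aux_A N bI (bJ N) (bIJ N) (bU κ s n) (bP β α s n) ?_ (bB N n) ?_ ?_ K hK ?_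
      (fun k _ => cost_bd β α s κ K C hβ hα hs hs1 hκ hK N n hn0 hC hCK hκK k)
    · simp only [prod_eq] at hA
      exact hA
    · rintro (x | b)
      · exact hκ.le
      · simp only [bU]; positivity
    · rintro (x | b) hbm
      · simp [bP]
      · simp only [bB, Finset.inr_mem_disjSum] at hbm
        exact (bP_bd β α s hβ hα hs hs1 n b.1 (bx_ne (Finset.mem_product.1 hbm).1)).1
    · rintro (x | b) hbm
      · simp [bP]
      · simp only [bB, Finset.inr_mem_disjSum] at hbm
        exact (bP_bd β α s hβ hα hs hs1 n b.1 (bx_ne (Finset.mem_product.1 hbm).1)).2.trans hn.le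
    · intro S hS hS1
      refine gauss_summable N κ hκ _ (fun φ => (Real.exp_pos _).le) fun φ => ?_
      unfold gW
      rw [Real.exp_le_exp, neg_le_neg_iff]
      have hsub : (Finset.Icc (-(N : ℤ)) N).map Function.Embedding.inl ⊆ S := by
        intro b hb'
        obtain ⟨x, hx, rfl⟩ := Finset.mem_map.1 hb'
        refine hS1 _ ?_ rfl
        simp only [bB, Function.Embedding.inl_apply, Finset.inl_mem_disjSum]
        exact hx
      refine le_trans ?_ (Finset.sum_le_sum_of_subset_of_nonneg hsub ?_)
      · rw [Finset.sum_map, sq2, Finset.mul_sum]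
        refine Finset.sum_le_sum fun x hx => le_of_eq ?_
        rw [Finset.mem_Icc] at hx
        have hz : φ.1 ((N : ℤ) + 1) = 0 := φ.2 _ (by grind)
        have hx' : ¬ x = (N : ℤ) + 1 := by omega
        simp only [Function.Embedding.inl_apply, bU, bI, bJ, hx', if_false, hz, sub_zero]
      · rintro (x | b) _ _
        · simp only [bU]; positivity
        · simp only [bU]; positivity

lemma limC (β α s q K C : ℝ) (hβ : 0 < β) (hα : 2 < α) (hq : q = 2 * s) (hs : 0 < s) (hs1 : s < 1)
    (hK : 0 < K) (N : ℕ)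
    (hC : ∀ (k : ℕ) (P : Finset (ℤ × ℤ)),
      ∑ p ∈ P, strK k p.1 p.2 * |((p.1 - p.2 : ℤ) : ℝ)| ^ (-(α - s)) ≤ C)
    (hCK : 8 * β * C ≤ K ^ s) :
    1 / (2 * K * Real.exp (2 * K)) * ((N + 1 : ℕ) / 2 : ℝ) * ∑' φ : ChainConfig N,
        chainWeight β α q φ.1
      ≤ ∑' φ : ChainConfig N, ((φ.1 0 : ℤ) : ℝ) ^ 2 * chainWeight β α q φ.1 := by
  have hκt : Filter.Tendsto (fun n : ℕ => 1 / ((n : ℝ) + 1)) Filter.atTop (nhds 0) :=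
    tendsto_one_div_add_atTop_nhds_zero_nat
  have hsq : ∀ φ : ChainConfig N, 0 ≤ sq2 N φ.1 := fun φ => Finset.sum_nonneg fun x _ => sq_nonneg _
  refine aux_lim (X := ChainConfig N)
    (fun n φ => Real.exp (-(1 / ((n : ℝ) + 1) * sq2 N φ.1)) * chainWeight β α q φ.1)
    (fun φ => chainWeight β α q φ.1)
    (fun φ => chainWeight β α q φ.1) (fun φ => ((φ.1 0 : ℤ) : ℝ)) _ ?_ ?_ ?_ ?_ ?_
  · intro φ
    have h1 := (hκt.mul_const (sq2 N φ.1)).neg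
    have h2 := ((Real.continuous_exp.tendsto _).comp h1).mul_const (chainWeight β α q φ.1)
    simpa using h2
  · exact weight_summable β α q hβ (by linarith) hα N
  · exact Filter.Eventually.of_forall fun n φ => mul_nonneg (Real.exp_pos _).le (Real.exp_pos _).le
  · refine Filter.Eventually.of_forall fun n φ => mul_le_of_le_one_left (Real.exp_pos _).le ?_
    rw [Real.exp_le_one_iff, neg_nonpos]
    exact mul_nonneg (by positivity) (hsq φ)
  · have h1 := hκt.const_mul ((2 * N + 1 : ℝ) ^ 2)
    rw [mul_zero] at h1
    filter_upwards [h1.eventually_lt_const (show 0 < K / 4 by positivity)] with n hn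
    exact limB β α s q _ K C hβ hα hq hs hs1 (by positivity) hK N hC hCK hn.le

def negE (N : ℕ) : ChainConfig N ≃ ChainConfig N where
  toFun φ := ⟨fun k => -φ.1 k, fun k hk => by simp [φ.2 k hk]⟩
  invFun φ := ⟨fun k => -φ.1 k, fun k hk => by simp [φ.2 k hk]⟩
  left_inv φ := by apply Subtype.ext; funext k; simp
  right_inv φ := by apply Subtype.ext; funext k; simp

lemma negE_val (N : ℕ) (φ : ChainConfig N) (k : ℤ) : (negE N φ).1 k = -φ.1 k := rfl

lemma weight_neg (β α q : ℝ) (N : ℕ) (φ : ChainConfig N) :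
    chainWeight β α q (negE N φ).1 = chainWeight β α q φ.1 := by
  unfold chainWeight
  rw [chainEnergy_eq, chainEnergy_eq]
  have : eT α q (negE N φ).1 = eT α q φ.1 := by
    funext p
    simp only [eT, negE_val]
    have : ((-φ.1 p.1 - -φ.1 p.2 : ℤ) : ℝ) = -((φ.1 p.1 - φ.1 p.2 : ℤ) : ℝ) := by push_cast; ring
    rw [this, abs_neg]
  rw [this]

lemma mean_zero (β α q : ℝ) (N : ℕ) : chainMean N β α q = 0 := by
  unfold chainMean
  have h := (negE N).tsum_eq (fun φ : ChainConfig N => ((φ.1 0 : ℤ) : ℝ) * chainWeight β α q φ.1)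
  have h2 : ∀ φ : ChainConfig N, (((negE N φ).1 0 : ℤ) : ℝ) * chainWeight β α q (negE N φ).1
      = -(((φ.1 0 : ℤ) : ℝ) * chainWeight β α q φ.1) := fun φ => by
    rw [weight_neg]
    simp [negE_val]
  simp only [h2, tsum_neg] at h
  have h3 : (∑' φ : ChainConfig N, ((φ.1 0 : ℤ) : ℝ) * chainWeight β α q φ.1) = 0 := by linarith
  rw [h3, zero_div]

lemma Z_pos (β α q : ℝ) (hβ : 0 < β) (hq : 0 < q) (hα : 2 < α) (N : ℕ) : 0 < chainZ N β α q := by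
  have hs : Summable fun φ : ChainConfig N => chainWeight β α q φ.1 := by
    refine Summable.of_nonneg_of_le (fun φ => (Real.exp_pos _).le) (fun φ => ?_)
      (weight_summable β α q hβ hq hα N)
    exact le_mul_of_one_le_left (Real.exp_pos _).le (by nlinarith [sq_nonneg ((φ.1 0 : ℤ) : ℝ)])
  exact hs.tsum_pos (fun φ => (Real.exp_pos _).le) ⟨fun _ => 0, fun _ _ => rfl⟩ (Real.exp_pos _)


/-- **Linear lower bound for the `q`-SOS long-range chain for `α > 2 + q/2`.**
For every `β ∈ (0,∞)`, every `q ∈ (0,2)` and every `α > 2 + q/2`, there exists `c_β > 0`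
such that for every `N ≥ 1`, `c_β N ≤ Var^{q-SOS}_{N,β,α}[φ(0)]`. -/
theorem qSOS_chain_lower_bound_alpha_gt_critical
    (β : ℝ) (hβ : 0 < β) (q : ℝ) (hq₀ : 0 < q) (hq₂ : q < 2)
    (α : ℝ) (hα : 2 + q / 2 < α) :
    ∃ c : ℝ, 0 < c ∧
      ∀ N : ℕ, 1 ≤ N → c * (N : ℝ) ≤ chainVar N β α q := by
  obtain ⟨C, hC0, hC⟩ := geo_bound (α - q / 2) (by linarith)
  have hs : 0 < q / 2 := by linarith
  have hs1 : q / 2 < 1 := by linarith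
  set K : ℝ := (8 * β * C) ^ (1 / (q / 2)) with hKd
  have hK : 0 < K := by positivity
  have hKs : 8 * β * C ≤ K ^ (q / 2) := by
    rw [hKd, ← Real.rpow_mul (by positivity), one_div_mul_cancel hs.ne', Real.rpow_one]
  refine ⟨1 / (2 * K * Real.exp (2 * K)) / 2, by positivity, fun N _ => ?_⟩
  have h1 := limC β α (q / 2) q K C hβ (by linarith) (by ring) hs hs1 hK N hC hKs
  have hZ := Z_pos β α q hβ hq₀ (by linarith) N
  unfold chainVar
  rw [mean_zero]
  have h2 : 1 / (2 * K * Real.exp (2 * K)) * ((N + 1 : ℕ) / 2 : ℝ) ≤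
      (∑' φ : ChainConfig N, ((φ.val 0 : ℤ) : ℝ) ^ 2 * chainWeight β α q φ.val) / chainZ N β α q := by
    rw [le_div_iff₀ hZ]
    exact h1
  have h3 : 0 < 1 / (2 * K * Real.exp (2 * K)) := by positivity
  push_cast at h2
  nlinarith
end

section
/- For every inverse temperature β ∈ (0,∞), every exponent q ∈ (0,2) and every range exponent α ∈ (1,∞), there exists a constant C_β < ∞ (depending only on β, α and q) such that for every integer N ≥ 2, the variance of the height at the origin under the discrete q-SOS long-range chain satisfies: Var^{q-SOS}_{N,β,α}[φ(0)] ≤ C_β if α < q; Var^{q-SOS}_{N,β,α}[φ(0)] ≤ C_β ln N if α = q; and Var^{q-SOS}_{N,β,α}[φ(0)] ≤ C_β N^{2α/q − 2} if α > q. -/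
section helpers
open Filter Topology MeasureTheory

def PK {X : Type*} (k : X → X → ℝ) : Prop :=
  ∀ (T : Finset X) (c : X → ℝ), 0 ≤ ∑ s ∈ T, ∑ d ∈ T, c s * c d * k s d

def MK {X : Type*} (k : X → X → ℝ) : Prop :=
  ∀ m : X → X → ℝ, PK m → PK (fun s d => k s d * m s d)

section kernels
variable {X : Type*}

lemma MK.one : MK (fun _ _ : X => (1:ℝ)) := by
  intro m hm; simpa using hm

lemma MK.mul {k l : X → X → ℝ} (hk : MK k) (hl : MK l) : MK (fun s d => k s d * l s d) := by
  intro m hm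
  have := hk _ (hl m hm)
  simpa [mul_assoc] using this

lemma MK.add {k l : X → X → ℝ} (hk : MK k) (hl : MK l) : MK (fun s d => k s d + l s d) := by
  intro m hm T c
  have h1 := hk m hm T c
  have h2 := hl m hm T c
  have := add_nonneg h1 h2
  simp only [← Finset.sum_add_distrib] at this
  refine this.trans_eq (Finset.sum_congr rfl fun s _ => Finset.sum_congr rfl fun d _ => by ring)

lemma MK.smul {k : X → X → ℝ} {r : ℝ} (hr : 0 ≤ r) (hk : MK k) : MK (fun s d => r * k s d) := by
  intro m hm T c
  have h1 := mul_nonneg hr (hk m hm T c)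
  simp only [Finset.mul_sum] at h1
  refine h1.trans_eq (Finset.sum_congr rfl fun s _ => Finset.sum_congr rfl fun d _ => by ring)

lemma MK.zero : MK (fun _ _ : X => (0:ℝ)) := by
  intro m hm T c; simp

lemma MK.sum {ι : Type*} (I : Finset ι) {k : ι → X → X → ℝ} (h : ∀ i ∈ I, MK (k i)) :
    MK (fun s d => ∑ i ∈ I, k i s d) := by
  classical
  induction I using Finset.induction_on with
  | empty => simpa using MK.zero
  | insert a s ha ih =>
    simp only [Finset.sum_insert ha]
    exact (h a (by simp)).add (ih fun i hi => h i (by simp [hi]))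

lemma MK.lim {ι : Type*} {l : Filter ι} [l.NeBot] {k : ι → X → X → ℝ} {K : X → X → ℝ}
    (h : ∀ i, MK (k i)) (hl : ∀ s d, Tendsto (fun i => k i s d) l (𝓝 (K s d))) : MK K := by
  intro m hm T c
  refine ge_of_tendsto' (x := l) (f := fun i => ∑ s ∈ T, ∑ d ∈ T, c s * c d * (k i s d * m s d)) ?_
    (fun i => h i m hm T c)
  refine tendsto_finsetSum _ fun s _ => tendsto_finsetSum _ fun d _ => ?_
  exact ((hl s d).mul_const _).const_mul _

lemma MK.rank1 (f : X → ℝ) : MK (fun s d => f s * f d) := by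
  intro m hm T c
  have := hm T (fun s => c s * f s)
  refine this.trans_eq (Finset.sum_congr rfl fun s _ => Finset.sum_congr rfl fun d _ => by ring)

lemma MK.pow {k : X → X → ℝ} (hk : MK k) (n : ℕ) : MK (fun s d => k s d ^ n) := by
  induction n with
  | zero => simpa using MK.one
  | succ n ih => simpa only [pow_succ] using ih.mul hk

lemma MK.exp {k : X → X → ℝ} (hk : MK k) : MK (fun s d => Real.exp (k s d)) := by
  refine MK.lim (l := atTop) (k := fun n s d => ∑ i ∈ Finset.range n, (1 / (i.factorial : ℝ)) * k s d ^ i)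
    (fun n => MK.sum _ fun i _ => MK.smul (by positivity) (hk.pow i)) ?_
  intro s d
  have := (NormedSpace.expSeries_div_hasSum_exp (k s d)).tendsto_sum_nat
  rw [← Real.exp_eq_exp_ℝ] at this
  simpa [div_eq_inv_mul] using this

lemma MK.tsum {ι : Type*} {k : ι → X → X → ℝ} (h : ∀ i, MK (k i))
    (hs : ∀ s d, Summable (fun i => k i s d)) : MK (fun s d => ∑' i, k i s d) :=
  MK.lim (l := atTop) (k := fun I s d => ∑ i ∈ I, k i s d) (fun _ => MK.sum _ fun i _ => h i)
    fun s d => (hs s d).hasSum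

lemma MK.integral {Y : Type*} [MeasurableSpace Y] {μ : Measure Y} {k : Y → X → X → ℝ}
    (h : ∀ᵐ t ∂μ, MK (k t))
    (hi : ∀ s d, Integrable (fun t => k t s d) μ) : MK (fun s d => ∫ t, k t s d ∂μ) := by
  intro m hm T c
  have : ∑ s ∈ T, ∑ d ∈ T, c s * c d * ((∫ t, k t s d ∂μ) * m s d)
      = ∫ t, ∑ s ∈ T, ∑ d ∈ T, c s * c d * (k t s d * m s d) ∂μ := by
    rw [integral_finsetSum]
    · refine Finset.sum_congr rfl fun s _ => ?_
      rw [integral_finsetSum]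
      · refine Finset.sum_congr rfl fun d _ => ?_
        rw [integral_const_mul, integral_mul_const]
      · intro d _; exact ((hi s d).mul_const _).const_mul _
    · intro s _; exact integrable_finsetSum _ fun d _ => ((hi s d).mul_const _).const_mul _
  rw [this]
  refine integral_nonneg_of_ae ?_
  filter_upwards [h] with t ht using ht m hm T c

open Classical in
lemma PK.eqv {Y : Type*} (q : X → Y) : PK (fun s d => if q s = q d then (1:ℝ) else 0) := by
  intro T c
  have : ∑ s ∈ T, ∑ d ∈ T, c s * c d * (if q s = q d then (1:ℝ) else 0)
     = ∑ y ∈ T.image q, (∑ s ∈ T, c s * (if q s = y then (1:ℝ) else 0))^2 := by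
    simp only [sq, Finset.sum_mul_sum]
    rw [Finset.sum_comm]
    rw [Finset.sum_comm (s := T.image q), Finset.sum_comm]
    refine Finset.sum_congr rfl fun s hs => ?_
    rw [Finset.sum_comm]
    refine Finset.sum_congr rfl fun d hd => ?_
    rw [Finset.sum_eq_single (q s)]
    · by_cases h : q s = q d
      · simp [h]
      · simp [h, Ne.symm h]
    · intro y _ hy; simp [hy.symm]
    · intro h; exact absurd (Finset.mem_image_of_mem q hs) h
  rw [this]; positivity

lemma PK.tsum_nonneg {k : X → X → ℝ} (hk : PK k) (hs : Summable (fun p : X × X => k p.1 p.2)) :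
    0 ≤ ∑' p : X × X, k p.1 p.2 := by
  have h1 : Tendsto (fun T : Finset X => T ×ˢ T) atTop atTop := by
    classical
    refine tendsto_atTop.2 fun S => ?_
    filter_upwards [eventually_ge_atTop (S.image Prod.fst ∪ S.image Prod.snd)] with T hT
    intro p hp
    rw [Finset.mem_product]
    exact ⟨hT (Finset.mem_union_left _ (Finset.mem_image_of_mem _ hp)),
      hT (Finset.mem_union_right _ (Finset.mem_image_of_mem _ hp))⟩
  refine ge_of_tendsto' (hs.hasSum.comp h1) fun T => ?_
  have := hk T (fun _ => 1)
  simpa [Finset.sum_product] using this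

end kernels

lemma dbl_quot (A : Type) [AddCommGroup A] :
    ∃ (Y : Type) (q : A → Y), ∀ s d, q s = q d ↔ ∃ a, s - d = a + a := by
  let Dbl : AddSubgroup A := (zsmulAddGroupHom (α := A) 2).range
  refine ⟨A ⧸ Dbl, fun a => (a : A ⧸ Dbl), ?_⟩
  intro s d
  rw [eq_comm, QuotientAddGroup.eq]
  simp only [Dbl, AddMonoidHom.mem_range, zsmulAddGroupHom_apply, two_zsmul]
  constructor
  · rintro ⟨a, ha⟩; exact ⟨a, by rw [ha]; abel⟩
  · rintro ⟨a, ha⟩; exact ⟨a, by rw [← ha]; abel⟩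

lemma core_sum {A : Type} [AddCommGroup A] (htf : ∀ a b : A, a + a = b + b → a = b)
    (K : A → A → ℝ) (hK : MK K) (F : A × A → ℝ) (hF : ∀ a b, F (a, b) = K (a + b) (b - a))
    (hS : Summable F) : 0 ≤ ∑' p, F p := by
  classical
  obtain ⟨Y, q, hq⟩ := dbl_quot A
  obtain ⟨e, hedef⟩ : ∃ e : A × A → A × A, ∀ a b, e (a, b) = (a + b, b - a) :=
    ⟨fun p => (p.1 + p.2, p.2 - p.1), fun _ _ => rfl⟩
  have he : Function.Injective e := by
    rintro ⟨a, b⟩ ⟨a', b'⟩ h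
    rw [hedef, hedef, Prod.mk.injEq] at h
    obtain ⟨h1, h2⟩ := h
    have hb : b = b' := htf _ _ (by
      have : (a + b) + (b - a) = (a' + b') + (b' - a') := by rw [h1, h2]
      have e1 : (a + b) + (b - a) = b + b := by abel
      have e2 : (a' + b') + (b' - a') = b' + b' := by abel
      rw [← e1, ← e2, this])
    subst hb
    rw [add_left_inj] at h1
    rw [h1]
  obtain ⟨k, hkdef⟩ : ∃ k : A → A → ℝ, ∀ s d, k s d = K s d * (if q s = q d then (1:ℝ) else 0) :=
    ⟨_, fun _ _ => rfl⟩
  have hk : PK k := by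
    have := hK _ (PK.eqv q)
    simp only [← hkdef] at this
    exact this
  have hke : ∀ p : A × A, k (e p).1 (e p).2 = F p := by
    rintro ⟨a, b⟩
    have : q (a + b) = q (b - a) := (hq _ _).2 ⟨a, by abel⟩
    rw [hF, hedef, hkdef, if_pos this, mul_one]
  have hsupp : ∀ p, p ∉ Set.range e → (fun p : A × A => k p.1 p.2) p = 0 := by
    rintro ⟨s, d⟩ h
    have : ¬ q s = q d := by
      intro h'
      obtain ⟨a, ha⟩ := (hq _ _).1 h'
      apply h
      refine ⟨(a, s - a), ?_⟩
      rw [hedef, Prod.mk.injEq]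
      refine ⟨by abel, ?_⟩
      have : d = s - (a + a) := by rw [← ha]; abel
      rw [this]; abel
    simp only [hkdef]
    rw [if_neg this, mul_zero]
  have Sk : Summable (fun p : A × A => k p.1 p.2) := by
    rw [← he.summable_iff hsupp]
    exact hS.congr fun p => (hke p).symm
  have hkey := PK.tsum_nonneg hk Sk
  rw [← he.tsum_eq (by
    intro p hp; by_contra h; exact hp (hsupp p h))] at hkey
  exact hkey.trans_eq (tsum_congr fun p => hke p)

lemma core_ineq {A : Type} [AddCommGroup A] (htf : ∀ a b : A, a + a = b + b → a = b)
    (w v t τ g T : A → ℝ) (M : A → A → ℝ) (hM : MK M)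
    (hfac : ∀ a b, w a * v b = g (a + b) * g (b - a) * Real.exp (M (a + b) (b - a)))
    (hT : ∀ a b, τ b ^ 2 - t a ^ 2 = T (a + b) * T (b - a))
    (hw : Summable w) (hwt : Summable fun a => w a * t a ^ 2)
    (hv : Summable v) (hvt : Summable fun a => v a * τ a ^ 2) :
    (∑' a, w a * t a ^ 2) * ∑' b, v b ≤ (∑' a, w a) * ∑' b, v b * τ b ^ 2 := by
  have S1 : Summable fun p : A × A => (w p.1 * t p.1 ^ 2) * v p.2 :=
    summable_mul_of_summable_norm (f := fun a => w a * t a ^ 2) (g := v) hwt.norm hv.norm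
  have S2 : Summable fun p : A × A => w p.1 * (v p.2 * τ p.2 ^ 2) :=
    summable_mul_of_summable_norm (f := w) (g := fun a => v a * τ a ^ 2) hw.norm hvt.norm
  have E1 : (∑' a, w a * t a ^ 2) * ∑' b, v b = ∑' p : A × A, (w p.1 * t p.1 ^ 2) * v p.2 :=
    tsum_mul_tsum_of_summable_norm (f := fun a => w a * t a ^ 2) (g := v) hwt.norm hv.norm
  have E2 : (∑' a, w a) * ∑' b, v b * τ b ^ 2 = ∑' p : A × A, w p.1 * (v p.2 * τ p.2 ^ 2) :=
    tsum_mul_tsum_of_summable_norm (f := w) (g := fun a => v a * τ a ^ 2) hw.norm hvt.norm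
  have key := core_sum htf _ ((MK.rank1 (fun s => g s * T s)).mul hM.exp)
    (fun p : A × A => w p.1 * (v p.2 * τ p.2 ^ 2) - (w p.1 * t p.1 ^ 2) * v p.2) (by
      intro a b
      have h1 := hfac a b
      have h2 := hT a b
      calc w a * (v b * τ b ^ 2) - w a * t a ^ 2 * v b = (w a * v b) * (τ b ^ 2 - t a ^ 2) := by ring
        _ = _ := by rw [h1, h2]; ring) (S2.sub S1)
  rw [Summable.tsum_sub S2 S1] at key
  rw [E1, E2]
  linarith

lemma k_integrable {q : ℝ} (hq₀ : 0 < q) (hq₂ : q < 2) (x : ℝ) :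
    IntegrableOn (fun t : ℝ => (1 - Real.cos (t * x)) * t ^ (-1 - q)) (Set.Ioi 0) := by
  have hmeas : Measurable (fun t : ℝ => (1 - Real.cos (t * x)) * t ^ (-1 - q)) := by fun_prop
  rw [← Set.Ioc_union_Ioi_eq_Ioi (zero_le_one' ℝ)]
  refine IntegrableOn.union ?_ ?_
  · have h1 : IntegrableOn (fun t : ℝ => (x ^ 2 / 2) * t ^ (1 - q)) (Set.Ioc 0 1) := by
      have := (intervalIntegral.intervalIntegrable_rpow' (a := 0) (b := 1) (r := 1 - q) (by linarith)).const_mul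
        (x ^ 2 / 2)
      rwa [intervalIntegrable_iff_integrableOn_Ioc_of_le zero_le_one] at this
    refine Integrable.mono' h1 hmeas.aestronglyMeasurable ?_
    refine (ae_restrict_iff' measurableSet_Ioc).2 (Eventually.of_forall fun t ht => ?_)
    have ht0 : 0 < t := ht.1
    have hp : 0 < t ^ (-1 - q) := Real.rpow_pos_of_pos ht0 _
    have hc := Real.cos_le_one (t * x)
    have hb := Real.one_sub_sq_div_two_le_cos (x := t * x)
    rw [Real.norm_of_nonneg (mul_nonneg (by linarith) hp.le)]
    have he : t ^ (1 - q) = t ^ 2 * t ^ (-1 - q) := by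
      rw [← Real.rpow_natCast, ← Real.rpow_add ht0]; norm_num; ring_nf
    rw [he]
    calc _ ≤ ((t * x) ^ 2 / 2) * t ^ (-1 - q) := mul_le_mul_of_nonneg_right (by linarith) hp.le
      _ = _ := by ring
  · have h1 : IntegrableOn (fun t : ℝ => 2 * t ^ (-1 - q)) (Set.Ioi 1) :=
      (integrableOn_Ioi_rpow_of_lt (by linarith) one_pos).const_mul 2
    refine Integrable.mono' h1 hmeas.aestronglyMeasurable ?_
    refine (ae_restrict_iff' measurableSet_Ioi).2 (Eventually.of_forall fun t ht => ?_)
    have ht0 : 0 < t := lt_trans one_pos ht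
    have hp : 0 < t ^ (-1 - q) := Real.rpow_pos_of_pos ht0 _
    have hc := Real.cos_le_one (t * x)
    have hb := Real.neg_one_le_cos (t * x)
    rw [Real.norm_of_nonneg (mul_nonneg (by linarith) hp.le)]
    exact mul_le_mul_of_nonneg_right (by linarith) hp.le

lemma k_const_pos {q : ℝ} (hq₀ : 0 < q) (hq₂ : q < 2) :
    0 < ∫ t in Set.Ioi (0:ℝ), (1 - Real.cos (t * 1)) * t ^ (-1 - q) := by
  rw [setIntegral_pos_iff_support_of_nonneg_ae]
  · refine lt_of_lt_of_le (b := volume (Set.Ioo (0:ℝ) 1)) (by simp) (measure_mono ?_)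
    intro t ht
    refine ⟨?_, ht.1⟩
    have hp : 0 < t ^ (-1 - q) := Real.rpow_pos_of_pos ht.1 _
    have : Real.cos t < 1 := by
      rw [← Real.cos_zero]
      exact Real.cos_lt_cos_of_nonneg_of_le_pi le_rfl (by linarith [Real.pi_gt_three, ht.2]) ht.1
    simp only [Function.mem_support, mul_one]
    exact (mul_pos (by linarith) hp).ne'
  · refine (ae_restrict_iff' measurableSet_Ioi).2 (Eventually.of_forall fun t ht => ?_)
    have hp : 0 < t ^ (-1 - q) := Real.rpow_pos_of_pos ht _
    exact mul_nonneg (by linarith [Real.cos_le_one (t * 1)]) hp.le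
  · exact k_integrable hq₀ hq₂ 1

lemma k_scale {q : ℝ} (hq₀ : 0 < q) (x : ℝ) :
    ∫ t in Set.Ioi (0:ℝ), (1 - Real.cos (t * x)) * t ^ (-1 - q)
      = |x| ^ q * ∫ t in Set.Ioi (0:ℝ), (1 - Real.cos (t * 1)) * t ^ (-1 - q) := by
  rcases eq_or_ne x 0 with rfl | hx
  · simp [Real.zero_rpow hq₀.ne']
  have hx' : 0 < |x| := abs_pos.2 hx
  have h := integral_comp_mul_left_Ioi (fun t : ℝ => (1 - Real.cos (t * 1)) * t ^ (-1 - q)) 0 hx'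
  rw [mul_zero, smul_eq_mul] at h
  have h2 : ∫ t in Set.Ioi (0:ℝ), (1 - Real.cos (|x| * t * 1)) * (|x| * t) ^ (-1 - q)
     = |x| ^ (-1 - q) * ∫ t in Set.Ioi (0:ℝ), (1 - Real.cos (t * x)) * t ^ (-1 - q) := by
    rw [← integral_const_mul]
    refine setIntegral_congr_fun measurableSet_Ioi fun t ht => ?_
    have ht0 : (0:ℝ) < t := ht
    have hcos : Real.cos (|x| * t * 1) = Real.cos (t * x) := by
      rw [mul_one, ← Real.cos_abs (t * x), abs_mul, abs_of_pos ht0, mul_comm]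
    simp only [hcos]
    rw [Real.mul_rpow hx'.le ht0.le]; ring
  rw [h2] at h
  have h3 : |x| ^ (-1 - q) = |x|⁻¹ * (|x| ^ q)⁻¹ := by
    rw [← Real.rpow_neg hx'.le, ← Real.rpow_neg_one, ← Real.rpow_add hx']; ring_nf
  rw [h3, mul_assoc] at h
  have h4 := mul_left_cancel₀ (inv_ne_zero hx'.ne') h
  rw [← h4, ← mul_assoc, mul_inv_cancel₀ (Real.rpow_pos_of_pos hx' q).ne', one_mul]

lemma MK_rpow {X : Type*} {q : ℝ} (hq₀ : 0 < q) (hq₂ : q < 2) (f : X → ℝ) :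
    MK (fun s d => 2 * |f s| ^ q + 2 * |f d| ^ q - |f s + f d| ^ q - |f s - f d| ^ q) := by
  set c := ∫ t in Set.Ioi (0:ℝ), (1 - Real.cos (t * 1)) * t ^ (-1 - q) with hc
  have hcpos : 0 < c := k_const_pos hq₀ hq₂
  let κ : ℝ → ℝ → ℝ := fun x t => (1 - Real.cos (t * x)) * t ^ (-1 - q)
  have hκ : ∀ x, Integrable (κ x) (volume.restrict (Set.Ioi 0)) := fun x => k_integrable hq₀ hq₂ x
  have hκi : ∀ x, ∫ t in Set.Ioi (0:ℝ), κ x t = |x| ^ q * c := fun x => k_scale hq₀ x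
  have hint : ∀ s d, Integrable (fun t => 2 * κ (f s) t + 2 * κ (f d) t - κ (f s + f d) t - κ (f s - f d) t)
      (volume.restrict (Set.Ioi 0)) := fun s d =>
    ((((hκ (f s)).const_mul 2).add ((hκ (f d)).const_mul 2)).sub (hκ _)).sub (hκ _)
  have hI : ∀ s d, ∫ t in Set.Ioi (0:ℝ), (2 * κ (f s) t + 2 * κ (f d) t - κ (f s + f d) t - κ (f s - f d) t)
      = c * (2 * |f s| ^ q + 2 * |f d| ^ q - |f s + f d| ^ q - |f s - f d| ^ q) := by
    intro s d
    rw [integral_sub, integral_sub, integral_add, integral_const_mul, integral_const_mul,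
      hκi, hκi, hκi, hκi]
    · ring
    · exact (hκ _).const_mul 2
    · exact (hκ _).const_mul 2
    · exact ((hκ _).const_mul 2).add ((hκ _).const_mul 2)
    · exact hκ _
    · exact (((hκ (f s)).const_mul 2).add ((hκ (f d)).const_mul 2)).sub (hκ _)
    · exact hκ _
  have hM : MK (fun s d => ∫ t in Set.Ioi (0:ℝ),
      (2 * κ (f s) t + 2 * κ (f d) t - κ (f s + f d) t - κ (f s - f d) t)) := by
    refine MK.integral ?_ hint
    refine (ae_restrict_iff' measurableSet_Ioi).2 (Eventually.of_forall fun t ht => ?_)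
    have hp : 0 < t ^ (-1 - q) := Real.rpow_pos_of_pos ht _
    have := MK.smul (r := 2 * t ^ (-1 - q)) (by positivity) (MK.rank1 (fun s : X => 1 - Real.cos (t * f s)))
    convert this using 3 with s d
    simp only [κ, mul_add, mul_sub, Real.cos_add, Real.cos_sub]
    ring
  have := MK.smul (inv_nonneg.2 hcpos.le) hM
  simp only [hI] at this
  simpa [← mul_assoc, inv_mul_cancel₀ hcpos.ne'] using this

lemma decay_bound {q : ℝ} (hq₀ : 0 < q) (p : ℕ) :
    ∃ C : ℝ, 0 < C ∧ ∀ y : ℝ, 0 ≤ y → y ^ p * Real.exp (-(y ^ q / 2)) ≤ C := by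
  obtain ⟨k, hk⟩ := exists_nat_ge ((p : ℝ) / q)
  rw [div_le_iff₀ hq₀] at hk
  refine ⟨max 1 (2 ^ k * k.factorial), by positivity, fun y hy => ?_⟩
  have hyq : 0 ≤ y ^ q := Real.rpow_nonneg hy q
  rcases le_total y 1 with h1 | h1
  · refine le_trans ?_ (le_max_left _ _)
    exact mul_le_one₀ (pow_le_one₀ hy h1) (Real.exp_pos _).le (Real.exp_le_one_iff.2 (by linarith))
  · refine le_trans ?_ (le_max_right _ _)
    have h2 : y ^ p ≤ (y ^ q) ^ k := by
      rw [← Real.rpow_natCast, ← Real.rpow_natCast, ← Real.rpow_mul hy]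
      exact Real.rpow_le_rpow_of_exponent_le h1 (by linarith)
    have h3 := Real.pow_div_factorial_le_exp (y ^ q / 2) (by positivity) k
    rw [div_le_iff₀ (by positivity), div_pow, div_le_iff₀ (by positivity)] at h3
    rw [Real.exp_neg, ← div_eq_mul_inv, div_le_iff₀ (Real.exp_pos _)]
    linarith

lemma scale_L {q J : ℝ} (hq₀ : 0 < q) (hJ : 0 < J) (x : ℝ) (hx : 0 ≤ x) :
    (J ^ (1 / q) * x) ^ q = J * x ^ q := by
  rw [Real.mul_rpow (by positivity) hx, ← Real.rpow_mul hJ.le, one_div, inv_mul_cancel₀ hq₀.ne',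
    Real.rpow_one]

lemma nat_summable {q J : ℝ} (hq₀ : 0 < q) (hJ : 0 < J) :
    Summable (fun n : ℕ => Real.exp (-(J * (n : ℝ) ^ q / 2))) := by
  obtain ⟨C, hC, h⟩ := decay_bound hq₀ 2
  rw [← summable_nat_add_iff 1]
  have hL : 0 < J ^ (1 / q) := Real.rpow_pos_of_pos hJ _
  have hs : Summable (fun n : ℕ => (C / (J ^ (1 / q)) ^ 2) * (1 / (((n + 1 : ℕ) : ℝ)) ^ 2)) :=
    ((summable_nat_add_iff 1).2 (Real.summable_one_div_nat_pow.2 one_lt_two)).mul_left _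
  refine Summable.of_nonneg_of_le (fun n => (Real.exp_pos _).le) (fun n => ?_) hs
  have := h (J ^ (1 / q) * ((n + 1 : ℕ) : ℝ)) (by positivity)
  rw [scale_L hq₀ hJ _ (by positivity)] at this
  rw [div_mul_div_comm, mul_one, le_div_iff₀ (by positivity), ← mul_pow]
  linarith

lemma int_even_sum {f : ℕ → ℝ} (hf0 : ∀ n, 0 ≤ f n) (hf : Summable f) :
    Summable (fun n : ℤ => f n.natAbs) ∧ ∑' n, f n ≤ ∑' n : ℤ, f n.natAbs ∧
      ∑' n : ℤ, f n.natAbs ≤ 2 * ∑' n, f n := by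
  have h1 : HasSum (fun n : ℕ => f (n : ℤ).natAbs) (∑' n, f n) := by simpa using hf.hasSum
  have hf' := (summable_nat_add_iff 1).2 hf
  have h2 : HasSum (fun n : ℕ => f (-((n : ℤ) + 1)).natAbs) (∑' n, f (n + 1)) := by
    have : ∀ n : ℕ, (-((n : ℤ) + 1)).natAbs = n + 1 := fun n => by omega
    simp only [this]
    exact hf'.hasSum
  have h3 := HasSum.of_nat_of_neg_add_one (f := fun n : ℤ => f n.natAbs) h1 h2
  have h4 : 0 ≤ ∑' n, f (n + 1) := tsum_nonneg fun n => hf0 _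
  have h5 := hf.tsum_eq_zero_add
  have h6 := hf0 0
  refine ⟨h3.summable, ?_, ?_⟩ <;> rw [h3.tsum_eq] <;> linarith

lemma oneD {q : ℝ} (hq₀ : 0 < q) : ∃ C : ℝ, 0 < C ∧ ∀ J : ℝ, 0 < J →
    Summable (fun x : ℤ => Real.exp (-(J * |(x : ℝ)| ^ q))) ∧
    Summable (fun x : ℤ => Real.exp (-(J * |(x : ℝ)| ^ q)) * (x : ℝ) ^ 2) ∧
    ∑' x : ℤ, Real.exp (-(J * |(x : ℝ)| ^ q)) * (x : ℝ) ^ 2 ≤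
      (C * J ^ (-(2 / q))) * ∑' x : ℤ, Real.exp (-(J * |(x : ℝ)| ^ q)) := by
  obtain ⟨C, hC, h⟩ := decay_bound hq₀ 2
  obtain ⟨m, hm⟩ := exists_nat_ge ((2 : ℝ) ^ (1 / q))
  have h2q : (0:ℝ) < 2 ^ (1 / q) := by positivity
  have hm0 : 0 < m := by
    rcases Nat.eq_zero_or_pos m with rfl | h
    · rw [Nat.cast_zero] at hm; linarith
    · exact h
  have hmq : 2 ≤ (m : ℝ) ^ q := by
    calc (2:ℝ) = (2 ^ (1 / q)) ^ q := by
          rw [← Real.rpow_mul (by norm_num), one_div, inv_mul_cancel₀ hq₀.ne', Real.rpow_one]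
      _ ≤ _ := Real.rpow_le_rpow h2q.le hm hq₀.le
  refine ⟨2 * C * m, by positivity, fun J hJ => ?_⟩
  have hL : 0 < J ^ (1 / q) := Real.rpow_pos_of_pos hJ _
  have hLL : (J ^ (1 / q)) ^ 2 * J ^ (-(2 / q)) = 1 := by
    rw [← Real.rpow_natCast, ← Real.rpow_mul hJ.le, ← Real.rpow_add hJ]
    convert Real.rpow_zero J using 2
    push_cast; ring
  have hnegpos : 0 < J ^ (-(2 / q)) := Real.rpow_pos_of_pos hJ _
  have hhalf := nat_summable hq₀ hJ
  have hpn : ∀ n : ℕ, 0 ≤ J * (n : ℝ) ^ q := fun n => by positivity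
  have hfull : Summable (fun n : ℕ => Real.exp (-(J * (n : ℝ) ^ q))) :=
    Summable.of_nonneg_of_le (fun n => (Real.exp_pos _).le)
      (fun n => Real.exp_le_exp.2 (by linarith [hpn n])) hhalf
  have hbd : ∀ n : ℕ, Real.exp (-(J * (n : ℝ) ^ q)) * (n : ℝ) ^ 2 ≤
      (C * J ^ (-(2 / q))) * Real.exp (-(J * (n : ℝ) ^ q / 2)) := by
    intro n
    have h1 := h (J ^ (1 / q) * (n : ℝ)) (by positivity)
    rw [scale_L hq₀ hJ _ (by positivity)] at h1
    have h2 : Real.exp (-(J * (n : ℝ) ^ q)) =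
      Real.exp (-(J * (n : ℝ) ^ q / 2)) * Real.exp (-(J * (n : ℝ) ^ q / 2)) := by
      rw [← Real.exp_add]; ring_nf
    have h3 := mul_le_mul_of_nonneg_right (mul_le_mul_of_nonneg_right h1 hnegpos.le)
      (Real.exp_pos (-(J * (n : ℝ) ^ q / 2))).le
    calc _ = ((J ^ (1 / q)) ^ 2 * J ^ (-(2 / q))) * (Real.exp (-(J * (n : ℝ) ^ q)) * (n : ℝ) ^ 2) := by
          rw [hLL, one_mul]
      _ = (J ^ (1 / q) * (n : ℝ)) ^ 2 * Real.exp (-(J * (n : ℝ) ^ q / 2)) * J ^ (-(2 / q)) *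
            Real.exp (-(J * (n : ℝ) ^ q / 2)) := by rw [h2]; ring
      _ ≤ _ := h3
  have hsq : Summable (fun n : ℕ => Real.exp (-(J * (n : ℝ) ^ q)) * (n : ℝ) ^ 2) :=
    Summable.of_nonneg_of_le (fun n => by positivity) hbd (hhalf.mul_left _)
  have hcmp : ∑' n : ℕ, Real.exp (-(J * (n : ℝ) ^ q / 2)) ≤ m * ∑' n : ℕ, Real.exp (-(J * (n : ℝ) ^ q)) := by
    have : NeZero m := ⟨hm0.ne'⟩
    have hprod : Summable (fun p : ℕ × Fin m => Real.exp (-(J * (p.1 : ℝ) ^ q))) := by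
      have := hfull.mul_of_nonneg (g := fun _ : Fin m => (1:ℝ)) (Summable.of_finite)
        (fun n => (Real.exp_pos _).le) (fun _ => zero_le_one)
      simpa using this
    rw [← (Nat.divModEquiv m).symm.tsum_eq]
    have h1 : ∑' p : ℕ × Fin m, Real.exp (-(J * (p.1 : ℝ) ^ q)) = m * ∑' n : ℕ, Real.exp (-(J * (n : ℝ) ^ q)) := by
      rw [hprod.tsum_prod]
      simp [tsum_fintype, tsum_mul_left]
    rw [← h1]
    refine Summable.tsum_le_tsum (fun p => ?_) ?_ hprod
    · apply Real.exp_le_exp.2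
      obtain ⟨y, r⟩ := p
      simp only [Nat.divModEquiv_symm_apply]
      have h5 : ((m : ℝ) * y) ^ q ≤ ((y * m + (r : ℕ) : ℕ) : ℝ) ^ q := by
        apply Real.rpow_le_rpow (by positivity) _ hq₀.le
        push_cast
        have : (0:ℝ) ≤ ((r : ℕ) : ℝ) := by positivity
        linarith
      rw [Real.mul_rpow (by positivity) (by positivity)] at h5
      have h6 : 2 * (y : ℝ) ^ q ≤ (m : ℝ) ^ q * (y : ℝ) ^ q :=
        mul_le_mul_of_nonneg_right hmq (by positivity)
      have := mul_le_mul_of_nonneg_left (h6.trans h5) hJ.le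
      linarith
    · exact ((Nat.divModEquiv m).symm.summable_iff (f := fun n : ℕ => Real.exp (-(J * (n : ℝ) ^ q / 2)))).2 hhalf
  have hA := int_even_sum (fun n => (Real.exp_pos _).le) hfull
  have hB := int_even_sum (fun n => by positivity) hsq
  simp only [Nat.cast_natAbs, Int.cast_abs, sq_abs] at hA hB
  refine ⟨hA.1, hB.1, ?_⟩
  have h1 : ∑' n : ℕ, Real.exp (-(J * (n : ℝ) ^ q)) * (n : ℝ) ^ 2 ≤
      (C * J ^ (-(2 / q))) * ∑' n : ℕ, Real.exp (-(J * (n : ℝ) ^ q / 2)) := by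
    rw [← tsum_mul_left]
    exact Summable.tsum_le_tsum hbd hsq (hhalf.mul_left _)
  have hCJ : 0 ≤ C * J ^ (-(2 / q)) := by positivity
  calc _ ≤ 2 * ((C * J ^ (-(2 / q))) * (m * ∑' n : ℕ, Real.exp (-(J * (n : ℝ) ^ q)))) :=
        hB.2.2.trans (mul_le_mul_of_nonneg_left (h1.trans (mul_le_mul_of_nonneg_left hcmp hCJ)) (by norm_num))
    _ = (2 * C * m * J ^ (-(2 / q))) * ∑' n : ℕ, Real.exp (-(J * (n : ℝ) ^ q)) := by ring
    _ ≤ _ := mul_le_mul_of_nonneg_left hA.2.1 (by positivity)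

def PiHS (ι : Type) [Fintype ι] : Prop := ∀ (f : ι → ℤ → ℝ), (∀ i, Summable (f i)) →
    HasSum (fun x : ι → ℤ => ∏ i, f i (x i)) (∏ i, ∑' n, f i n)

lemma PiHS.option {α : Type} [Fintype α] (ih : PiHS α) : PiHS (Option α) := by
  intro f hf
  have h1 := ih (fun i => f (some i)) (fun i => hf _)
  have h2 := (hf none).hasSum
  have h3 : HasSum (fun p : ℤ × (α → ℤ) => f none p.1 * ∏ i, f (some i) (p.2 i))
      ((∑' n, f none n) * ∏ i, ∑' n, f (some i) n) :=
    HasSum.mul (f := f none) (g := fun x : α → ℤ => ∏ i, f (some i) (x i)) h2 h1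
    (summable_mul_of_summable_norm (f := f none) (g := fun x : α → ℤ => ∏ i, f (some i) (x i))
      h2.summable.norm h1.summable.norm)
  rw [Fintype.prod_option]
  refine ((Equiv.piOptionEquivProd (β := fun _ : Option α => ℤ)).hasSum_iff.2 h3).congr_fun fun x => ?_
  rw [Fintype.prod_option]
  rfl

lemma PiHS.equiv {α β : Type} [Fintype α] [Fintype β] (e : α ≃ β) (ih : PiHS α) : PiHS β := by
  intro f hf
  have h := ih (fun i => f (e i)) (fun i => hf _)
  have h2 : HasSum (fun x : β → ℤ => ∏ i, f (e i) (x (e i))) (∏ i, ∑' n, f (e i) n) :=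
    (Equiv.arrowCongr e.symm (Equiv.refl ℤ)).hasSum_iff.2 h
  rw [e.prod_comp (fun i => ∑' n, f i n)] at h2
  exact h2.congr_fun fun x => (e.prod_comp (fun i => f i (x i))).symm

lemma pi_hasSum (ι : Type) [Fintype ι] : PiHS ι := by
  refine Fintype.induction_empty_option (P := fun ι _ => PiHS ι) ?_ ?_ ?_ ι
  · intro α β _ e ih
    let _ := Fintype.ofEquiv β e.symm
    exact PiHS.equiv e ih
  · intro f hf
    have : (fun x : PEmpty → ℤ => ∏ i, f i (x i)) = fun _ => 1 := by funext x; simp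
    rw [this]
    simp
  · intro α _ ih
    exact ih.option

lemma second_moment {ι : Type} [Fintype ι] (ω : ι → ℤ → ℝ) (V θ : ι → ℝ)
    (h0 : ∀ i n, 0 ≤ ω i n) (hev : ∀ i n, ω i (-n) = ω i n) (hs : ∀ i, Summable (ω i))
    (hs2 : ∀ i, Summable (fun n => ω i n * (n : ℝ) ^ 2))
    (hV : ∀ i, ∑' n, ω i n * (n : ℝ) ^ 2 ≤ V i * ∑' n, ω i n) :
    Summable (fun y : ι → ℤ => ∏ i, ω i (y i)) ∧
    Summable (fun y : ι → ℤ => (∏ i, ω i (y i)) * (∑ i, θ i * (y i : ℝ)) ^ 2) ∧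
    ∑' y : ι → ℤ, (∏ i, ω i (y i)) * (∑ i, θ i * (y i : ℝ)) ^ 2 ≤
      (∑ i, θ i ^ 2 * V i) * ∑' y : ι → ℤ, ∏ i, ω i (y i) := by
  classical
  have H0 := pi_hasSum ι ω hs
  have hs1 : ∀ i, Summable (fun n => ω i n * (n : ℝ)) := by
    intro i
    refine Summable.of_norm_bounded (hs2 i) fun n => ?_
    rw [norm_mul, Real.norm_of_nonneg (h0 i n), Real.norm_eq_abs]
    refine mul_le_mul_of_nonneg_left ?_ (h0 i n)
    rw [← sq_abs]
    have : (|n| : ℤ) ≤ |n| ^ 2 := by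
      rcases eq_or_ne n 0 with rfl | h
      · simp
      · have := Int.one_le_abs h; nlinarith
    exact_mod_cast this
  have hz : ∀ i, ∑' n, ω i n * (n : ℝ) = 0 := by
    intro i
    have h := (Equiv.neg ℤ).tsum_eq (fun n => ω i n * (n : ℝ))
    simp only [Equiv.neg_apply, hev, Int.cast_neg, mul_neg, tsum_neg] at h
    linarith
  let F : ι → ι → ι → ℤ → ℝ := fun e f g n =>
    ω g n * (if g = e then (n : ℝ) else 1) * (if g = f then (n : ℝ) else 1)
  have hF : ∀ e f g, Summable (F e f g) := by
    intro e f g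
    by_cases h1 : g = e <;> by_cases h2 : g = f
    · have : F e f g = fun n => ω g n * (n : ℝ) ^ 2 := by
        funext n; simp only [F, if_pos h1, if_pos h2]; ring
      rw [this]; exact hs2 g
    · have : F e f g = fun n => ω g n * (n : ℝ) := by
        funext n; simp only [F, if_pos h1, if_neg h2]; ring
      rw [this]; exact hs1 g
    · have : F e f g = fun n => ω g n * (n : ℝ) := by
        funext n; simp only [F, if_neg h1, if_pos h2]; ring
      rw [this]; exact hs1 g
    · have : F e f g = ω g := by
        funext n; simp only [F, if_neg h1, if_neg h2]; ring
      rw [this]; exact hs g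
  have HF := fun e f => pi_hasSum ι (F e f) (hF e f)
  have hprod : ∀ e f (y : ι → ℤ), ∏ g, F e f g (y g) = (∏ i, ω i (y i)) * ((y e : ℝ) * (y f : ℝ)) := by
    intro e f y
    simp only [F, Finset.prod_mul_distrib, Finset.prod_ite_eq', Finset.mem_univ, if_true]
    ring
  have HT : HasSum (fun y : ι → ℤ => (∏ i, ω i (y i)) * (∑ i, θ i * (y i : ℝ)) ^ 2)
      (∑ e, ∑ f, θ e * θ f * ∏ g, ∑' n, F e f g n) := by
    have := hasSum_sum (s := Finset.univ) (fun e (_ : e ∈ Finset.univ) =>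
      hasSum_sum (s := Finset.univ) (fun f (_ : f ∈ Finset.univ) => (HF e f).mul_left (θ e * θ f)))
    refine this.congr_fun ?_
    intro y
    have hsq : (∑ i, θ i * (y i : ℝ)) ^ 2 = ∑ e, ∑ f, (θ e * (y e : ℝ)) * (θ f * (y f : ℝ)) := by
      rw [sq, Finset.sum_mul_sum]
    rw [hsq]
    simp only [hprod, Finset.mul_sum]
    exact Finset.sum_congr rfl fun e _ => Finset.sum_congr rfl fun f _ => by ring
  refine ⟨H0.summable, HT.summable, ?_⟩
  rw [HT.tsum_eq, H0.tsum_eq, Finset.sum_mul]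
  refine Finset.sum_le_sum fun e _ => ?_
  rw [Finset.sum_eq_single e]
  · rw [← sq, mul_assoc]
    refine mul_le_mul_of_nonneg_left ?_ (sq_nonneg _)
    rw [← Finset.mul_prod_erase Finset.univ _ (Finset.mem_univ e),
      ← Finset.mul_prod_erase Finset.univ (fun i => ∑' n, ω i n) (Finset.mem_univ e), ← mul_assoc]
    have h1 : ∏ x ∈ Finset.univ.erase e, ∑' n, F e e x n = ∏ x ∈ Finset.univ.erase e, ∑' n, ω x n := by
      refine Finset.prod_congr rfl fun x hx => ?_
      have : x ≠ e := Finset.ne_of_mem_erase hx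
      simp [F, this]
    rw [h1]
    refine mul_le_mul_of_nonneg_right ?_ (Finset.prod_nonneg fun i _ => tsum_nonneg (h0 i))
    simpa [F, mul_assoc, ← sq] using hV e
  · intro f _ hfe
    rw [Finset.prod_eq_zero (Finset.mem_univ e), mul_zero]
    simpa [F, hfe.symm] using hz e
  · simp

lemma compare_main {A : Type} [AddCommGroup A] (htf : ∀ a b : A, a + a = b + b → a = b)
    {q : ℝ} (hq₀ : 0 < q) (hq₂ : q < 2) (U : A → ℝ)
    (hU : MK (fun s d => 2 * U s + 2 * U d - U (s + d) - U (s - d)))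
    (hU2 : ∀ a, U (a + a) = 2 ^ q * U a) (hUs : Summable fun a => Real.exp (-U a))
    {E : Type} [Fintype E] (D : E → A →+ ℤ) (J θ V : E → ℝ) (hJ : ∀ e, 0 < J e)
    (hs : ∀ e, Summable (fun x : ℤ => Real.exp (-(J e * |(x : ℝ)| ^ q))))
    (hs2 : ∀ e, Summable (fun x : ℤ => Real.exp (-(J e * |(x : ℝ)| ^ q)) * (x : ℝ) ^ 2))
    (hV : ∀ e, ∑' x : ℤ, Real.exp (-(J e * |(x : ℝ)| ^ q)) * (x : ℝ) ^ 2 ≤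
      V e * ∑' x : ℤ, Real.exp (-(J e * |(x : ℝ)| ^ q))) :
    ∑' a, Real.exp (-(U a + ∑ e, J e * |(D e a : ℝ)| ^ q)) * (∑ e, θ e * (D e a : ℝ)) ^ 2 ≤
      (∑ e, θ e ^ 2 * V e) * ∑' a, Real.exp (-(U a + ∑ e, J e * |(D e a : ℝ)| ^ q)) := by
  obtain ⟨v, hv⟩ : ∃ v : (E → ℤ) → A → ℝ, ∀ x a, v x a =
      Real.exp (-U a) * ∏ e, Real.exp (-(J e * |((D e a + x e : ℤ) : ℝ)| ^ q)) := ⟨_, fun _ _ => rfl⟩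
  obtain ⟨τ, hτ⟩ : ∃ τ : (E → ℤ) → A → ℝ, ∀ x a, τ x a =
      ∑ e, θ e * ((D e a + x e : ℤ) : ℝ) := ⟨_, fun _ _ => rfl⟩
  have hv' : ∀ x a, v x a = Real.exp (-(U a + ∑ e, J e * |((D e a + x e : ℤ) : ℝ)| ^ q)) := by
    intro x a
    rw [hv, ← Real.exp_sum, ← Real.exp_add, Finset.sum_neg_distrib]; ring_nf
  obtain ⟨hρ, hρ2, hρV⟩ := second_moment (fun e (n : ℤ) => Real.exp (-(J e * |(n : ℝ)| ^ q))) V θ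
    (fun _ _ => (Real.exp_pos _).le) (fun e n => by simp) hs hs2 hV
  set ρ : (E → ℤ) → ℝ := fun y => ∏ e, Real.exp (-(J e * |(y e : ℝ)| ^ q)) with hρdef
  set Q : (E → ℤ) → ℝ := fun y => ρ y * (∑ e, θ e * (y e : ℝ)) ^ 2 with hQdef
  let σ : (E → ℤ) × A ≃ A × (E → ℤ) :=
    { toFun := fun p => (p.2, fun e => D e p.2 + p.1 e)
      invFun := fun p => (fun e => p.2 e - D e p.1, p.1)
      left_inv := by rintro ⟨x, a⟩; simp
      right_inv := by rintro ⟨a, y⟩; simp }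
  have P1 : HasSum (fun p : A × (E → ℤ) => Real.exp (-U p.1) * ρ p.2)
      ((∑' a, Real.exp (-U a)) * ∑' y, ρ y) :=
    HasSum.mul (f := fun a => Real.exp (-U a)) (g := ρ) hUs.hasSum hρ.hasSum
      (summable_mul_of_summable_norm (f := fun a => Real.exp (-U a)) (g := ρ) hUs.norm hρ.norm)
  have P2 : HasSum (fun p : A × (E → ℤ) => Real.exp (-U p.1) * Q p.2)
      ((∑' a, Real.exp (-U a)) * ∑' y, Q y) :=
    HasSum.mul (f := fun a => Real.exp (-U a)) (g := Q) hUs.hasSum hρ2.hasSum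
      (summable_mul_of_summable_norm (f := fun a => Real.exp (-U a)) (g := Q) hUs.norm hρ2.norm)
  have Q1 : HasSum (fun p : (E → ℤ) × A => v p.1 p.2) ((∑' a, Real.exp (-U a)) * ∑' y, ρ y) := by
    refine (σ.hasSum_iff.2 P1).congr_fun fun p => ?_
    rw [hv]; rfl
  have Q2 : HasSum (fun p : (E → ℤ) × A => v p.1 p.2 * τ p.1 p.2 ^ 2)
      ((∑' a, Real.exp (-U a)) * ∑' y, Q y) := by
    refine (σ.hasSum_iff.2 P2).congr_fun fun p => ?_
    rw [hv, hτ, mul_assoc]; rfl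
  have v1 : ∀ x, Summable (v x) := fun x => Q1.summable.prod_factor x
  have v2 : ∀ x, Summable (fun a => v x a * τ x a ^ 2) := fun x => Q2.summable.prod_factor x
  have Q1' := Q1.summable.hasSum.prod_fiberwise (fun x => (v1 x).hasSum)
  have Q2' := Q2.summable.hasSum.prod_fiberwise (fun x => (v2 x).hasSum)
  rw [Q1.tsum_eq] at Q1'
  rw [Q2.tsum_eq] at Q2'
  have step : ∀ x, (∑' a, v 0 a * τ 0 a ^ 2) * ∑' b, v x b ≤ (∑' a, v 0 a) * ∑' b, v x b * τ x b ^ 2 := by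
    intro x
    let f : E → A → ℝ := fun e s => ((D e s + x e : ℤ) : ℝ)
    have c1 : (2:ℝ) ^ (-q) * 2 ^ q = 1 := by
      rw [← Real.rpow_add two_pos]; simp
    refine core_ineq htf (v 0) (v x) (τ 0) (τ x)
      (fun s => Real.exp (-(2 * 2 ^ (-q) * (U s + ∑ e, J e * |f e s| ^ q))))
      (fun s => ∑ e, θ e * f e s)
      (fun s d => 2 ^ (-q) * ((2 * U s + 2 * U d - U (s + d) - U (s - d)) +
        ∑ e, J e * (2 * |f e s| ^ q + 2 * |f e d| ^ q - |f e s + f e d| ^ q - |f e s - f e d| ^ q)))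
      ?_ ?_ ?_ (v1 0) (v2 0) (v1 x) (v2 x)
    · exact MK.smul (by positivity) (hU.add (MK.sum _ fun e _ => (MK_rpow hq₀ hq₂ (f e)).smul (hJ e).le))
    · intro a b
      rw [hv', hv', ← Real.exp_add, ← Real.exp_add, ← Real.exp_add]
      congr 1
      have e1 : a + b + (b - a) = b + b := by abel
      have e2 : a + b - (b - a) = a + a := by abel
      rw [e1, e2, hU2, hU2]
      have e3 : ∀ e, |f e (a + b) + f e (b - a)| ^ q = 2 ^ q * |((D e b + x e : ℤ) : ℝ)| ^ q := by
        intro e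
        rw [← Real.mul_rpow two_pos.le (abs_nonneg _)]
        congr 1
        rw [← abs_two, ← abs_mul]
        congr 1
        simp only [f, map_add, map_sub]; push_cast; ring
      have e4 : ∀ e, |f e (a + b) - f e (b - a)| ^ q = 2 ^ q * |((D e a + (0 : E → ℤ) e : ℤ) : ℝ)| ^ q := by
        intro e
        rw [← Real.mul_rpow two_pos.le (abs_nonneg _)]
        congr 1
        rw [← abs_two, ← abs_mul]
        congr 1
        simp only [f, map_add, map_sub]; push_cast; simp; ring
      simp only [e3, e4]
      have e5 : ∑ e, J e * (2 * |f e (a + b)| ^ q + 2 * |f e (b - a)| ^ q -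
          2 ^ q * |((D e b + x e : ℤ) : ℝ)| ^ q - 2 ^ q * |((D e a + (0 : E → ℤ) e : ℤ) : ℝ)| ^ q)
          = 2 * (∑ e, J e * |f e (a + b)| ^ q) + 2 * (∑ e, J e * |f e (b - a)| ^ q)
            - 2 ^ q * (∑ e, J e * |((D e b + x e : ℤ) : ℝ)| ^ q)
            - 2 ^ q * (∑ e, J e * |((D e a + (0 : E → ℤ) e : ℤ) : ℝ)| ^ q) := by
        simp only [Finset.mul_sum, ← Finset.sum_add_distrib, ← Finset.sum_sub_distrib]
        exact Finset.sum_congr rfl fun e _ => by ring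
      rw [e5]
      generalize (∑ e, J e * |f e (a + b)| ^ q) = z1
      generalize (∑ e, J e * |f e (b - a)| ^ q) = z2
      generalize (∑ e, J e * |((D e b + x e : ℤ) : ℝ)| ^ q) = z3
      generalize (∑ e, J e * |((D e a + (0 : E → ℤ) e : ℤ) : ℝ)| ^ q) = z4
      generalize (2:ℝ) ^ (-q) = c at c1 ⊢
      generalize (2:ℝ) ^ q = C at c1 ⊢
      linear_combination (U a + U b + z3 + z4) * c1
    · intro a b
      rw [sq_sub_sq]
      congr 1
      · rw [hτ, hτ, ← Finset.sum_add_distrib]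
        exact Finset.sum_congr rfl fun e _ => by simp [f]; ring
      · rw [hτ, hτ, ← Finset.sum_sub_distrib]
        exact Finset.sum_congr rfl fun e _ => by simp [f]; ring
  have fin := hasSum_le step (Q1'.mul_left _) (Q2'.mul_left _)
  have hZU : 0 < ∑' a, Real.exp (-U a) := hUs.tsum_pos (fun _ => (Real.exp_pos _).le) 0 (Real.exp_pos _)
  have hZρ : 0 < ∑' y, ρ y := hρ.tsum_pos (fun y => Finset.prod_nonneg fun _ _ => (Real.exp_pos _).le) 0
    (Finset.prod_pos fun _ _ => Real.exp_pos _)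
  have hZ0 : 0 ≤ ∑' a, v 0 a := tsum_nonneg fun a => by rw [hv']; exact (Real.exp_pos _).le
  have fin2 : (∑' a, v 0 a * τ 0 a ^ 2) ≤ (∑ e, θ e ^ 2 * V e) * ∑' a, v 0 a := by
    have h1 : (∑' a, v 0 a) * ((∑' a, Real.exp (-U a)) * ∑' y, Q y) ≤
        (∑' a, v 0 a) * ((∑' a, Real.exp (-U a)) * ((∑ e, θ e ^ 2 * V e) * ∑' y, ρ y)) := by
      gcongr
    refine le_of_mul_le_mul_right ?_ (mul_pos hZU hZρ)
    calc _ ≤ _ := fin.trans h1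
      _ = _ := by ring
  simpa [hv', hτ] using fin2

abbrev Box (N : ℕ) : Type := {k : ℤ // k ∈ Finset.Icc (-(N : ℤ)) N}

noncomputable def extHom (N : ℕ) (k : ℤ) : (Box N → ℤ) →+ ℤ :=
  if h : k ∈ Finset.Icc (-(N : ℤ)) N then Pi.evalAddMonoidHom (fun _ : Box N => ℤ) ⟨k, h⟩ else 0

lemma extHom_in {N : ℕ} {k : ℤ} (h : k ∈ Finset.Icc (-(N : ℤ)) N) (a : Box N → ℤ) :
    extHom N k a = a ⟨k, h⟩ := by
  simp only [extHom, dif_pos h]; rfl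

lemma extHom_out {N : ℕ} {k : ℤ} (h : k ∉ Finset.Icc (-(N : ℤ)) N) (a : Box N → ℤ) :
    extHom N k a = 0 := by
  simp only [extHom, dif_neg h]; rfl

noncomputable def chainEquiv (N : ℕ) : (Box N → ℤ) ≃ ChainConfig N where
  toFun a := ⟨fun k => extHom N k a, fun k hk => extHom_out (by
    rw [Finset.mem_Icc, ← abs_le]; exact not_le.2 hk) a⟩
  invFun φ := fun k => φ.val k.1
  left_inv a := by
    funext k
    exact extHom_in k.2 a
  right_inv φ := by
    apply Subtype.ext
    funext k
    by_cases h : k ∈ Finset.Icc (-(N : ℤ)) N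
    · exact extHom_in h _
    · refine (extHom_out h _).trans (φ.2 k ?_).symm
      rw [Finset.mem_Icc, ← abs_le] at h; exact not_le.1 h

noncomputable def grad (N : ℕ) (p : ℤ × ℤ) : (Box N → ℤ) →+ ℤ := extHom N p.1 - extHom N p.2

lemma grad_apply (N : ℕ) (p : ℤ × ℤ) (a : Box N → ℤ) :
    grad N p a = extHom N p.1 a - extHom N p.2 a := rfl

noncomputable def bnd (α : ℝ) (p : ℤ × ℤ) : ℝ := |((p.1 - p.2 : ℤ) : ℝ)| ^ (-α)

lemma bnd_nonneg (α : ℝ) (p : ℤ × ℤ) : 0 ≤ bnd α p := Real.rpow_nonneg (abs_nonneg _) _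

lemma box_bnd_summable {α : ℝ} (hα : 1 < α) (I : Finset ℤ) :
    Summable (fun p : ℤ × ℤ => (if p.1 ∈ I then (1:ℝ) else 0) * bnd α p) := by
  have h1 : Summable (fun i : ℤ => if i ∈ I then (1:ℝ) else 0) :=
    summable_of_ne_finset_zero (s := I) fun i hi => if_neg hi
  have h2 : Summable (fun k : ℤ => |(k : ℝ)| ^ (-α)) := Real.summable_abs_int_rpow hα
  have h3 : Summable (fun p : ℤ × ℤ => (if p.1 ∈ I then (1:ℝ) else 0) * |(p.2 : ℝ)| ^ (-α)) :=
    Summable.mul_of_nonneg (f := fun i : ℤ => if i ∈ I then (1:ℝ) else 0)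
      (g := fun k : ℤ => |(k : ℝ)| ^ (-α)) h1 h2
      (fun i => by dsimp only; split_ifs <;> norm_num) (fun k => Real.rpow_nonneg (abs_nonneg _) _)
  rw [← (Equiv.prodShear (Equiv.refl ℤ) (fun i : ℤ => Equiv.addLeft i)).summable_iff]
  refine h3.congr fun p => ?_
  simp [bnd]

lemma bond_summable {α q : ℝ} (hα : 1 < α) (hq₀ : 0 < q) {N : ℕ} (a : Box N → ℤ) :
    Summable (fun p : ℤ × ℤ => bnd α p * |(grad N p a : ℝ)| ^ q) := by
  set I := Finset.Icc (-(N : ℤ)) N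
  set m : ℝ := ∑ i, |(a i : ℝ)| with hm
  have hm0 : 0 ≤ m := Finset.sum_nonneg fun _ _ => abs_nonneg _
  have hext : ∀ k, |(extHom N k a : ℝ)| ≤ m := by
    intro k
    by_cases h : k ∈ I
    · rw [extHom_in h]
      exact Finset.single_le_sum (f := fun i => |(a i : ℝ)|) (fun _ _ => abs_nonneg _) (Finset.mem_univ _)
    · rw [extHom_out h]; simpa using hm0
  have h1 := box_bnd_summable hα I
  have h2 : Summable (fun p : ℤ × ℤ => (if p.2 ∈ I then (1:ℝ) else 0) * bnd α p) := by
    rw [← (Equiv.prodComm ℤ ℤ).summable_iff]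
    refine h1.congr fun p => ?_
    simp only [Function.comp, Equiv.prodComm_apply, Prod.swap, bnd]
    congr 2
    rw [← abs_neg]; push_cast; ring_nf
  have h3 := (h1.add h2).mul_left ((2 * m) ^ q)
  refine Summable.of_nonneg_of_le
    (fun p => mul_nonneg (bnd_nonneg _ _) (Real.rpow_nonneg (abs_nonneg _) _)) (fun p => ?_) h3
  have hb := bnd_nonneg α p
  have hK : 0 ≤ (2 * m) ^ q := by positivity
  have hD : |(grad N p a : ℝ)| ^ q ≤ (2 * m) ^ q := by
    refine Real.rpow_le_rpow (abs_nonneg _) ?_ hq₀.le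
    rw [grad_apply]; push_cast
    exact (abs_sub _ _).trans (by linarith [hext p.1, hext p.2])
  have hKb := mul_nonneg hK hb
  by_cases hp1 : p.1 ∈ I
  · rw [if_pos hp1]
    have : 0 ≤ (if p.2 ∈ I then (1:ℝ) else 0) * bnd α p := by
      apply mul_nonneg _ hb; split_ifs <;> norm_num
    nlinarith [mul_nonneg hK this, mul_le_mul_of_nonneg_left hD hb]
  · by_cases hp2 : p.2 ∈ I
    · rw [if_neg hp1, if_pos hp2]
      nlinarith [mul_le_mul_of_nonneg_left hD hb]
    · rw [if_neg hp1, if_neg hp2, grad_apply, extHom_out hp1, extHom_out hp2]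
      simp [Real.zero_rpow hq₀.ne']

lemma energy_eq {α q β : ℝ} (hα : 1 < α) (hq₀ : 0 < q) {N : ℕ} (a : Box N → ℤ) :
    chainEnergy β α q (fun k => extHom N k a) = ∑' p, β * (bnd α p * |(grad N p a : ℝ)| ^ q) := by
  rw [chainEnergy, tsum_mul_left]
  congr 1
  refine tsum_congr fun p => ?_
  split_ifs with h
  · rw [grad_apply, h]; simp [Real.zero_rpow hq₀.ne']
  · rw [grad_apply, bnd, Real.rpow_neg (abs_nonneg _)]
    rw [div_eq_inv_mul]

lemma exp_U_summable {q κ : ℝ} (hq₀ : 0 < q) (hκ : 0 < κ) {N : ℕ} (U : (Box N → ℤ) → ℝ)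
    (h : ∀ a, ∑ i, κ * |(a i : ℝ)| ^ q ≤ U a) : Summable (fun a => Real.exp (-U a)) := by
  obtain ⟨C, -, hC⟩ := oneD hq₀
  have h1 := (pi_hasSum (Box N) (fun _ n => Real.exp (-(κ * |(n : ℝ)| ^ q))) (fun _ => (hC κ hκ).1)).summable
  refine Summable.of_nonneg_of_le (fun a => (Real.exp_pos _).le) (fun a => ?_) h1
  rw [← Real.exp_sum]
  apply Real.exp_le_exp.2
  rw [Finset.sum_neg_distrib]
  linarith [h a]

lemma chain_bound {q : ℝ} (hq₀ : 0 < q) (hq₂ : q < 2) : ∃ C : ℝ, 0 < C ∧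
    ∀ (α β : ℝ), 1 < α → 0 < β → ∀ (N : ℕ) (E : Finset (ℤ × ℤ)) (θ : ℤ × ℤ → ℝ),
    (∀ p ∈ E, p.1 ≠ p.2) →
    (∀ a : Box N → ℤ, ∑ p ∈ E, θ p * (grad N p a : ℝ) = (extHom N 0 a : ℝ)) →
    chainVar N β α q ≤ ∑ p ∈ E, θ p ^ 2 * (C * (β / 2 * bnd α p) ^ (-(2 / q))) := by
  classical
  obtain ⟨C, hC0, hC⟩ := oneD hq₀
  refine ⟨C, hC0, fun α β hα hβ N E θ hE hθ => ?_⟩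
  have hbpos : ∀ p ∈ E, 0 < β / 2 * bnd α p := by
    intro p hp
    refine mul_pos (by positivity) (Real.rpow_pos_of_pos (abs_pos.2 ?_) _)
    exact_mod_cast sub_ne_zero.2 (hE p hp)
  let c : ℤ × ℤ → ℝ := fun p => (if p ∈ E then β / 2 else β) * bnd α p
  have hc0 : ∀ p, 0 ≤ c p := fun p => mul_nonneg (by split_ifs <;> positivity) (bnd_nonneg _ _)
  have hcl : ∀ p, β / 2 * bnd α p ≤ c p := fun p =>
    mul_le_mul_of_nonneg_right (by split_ifs <;> linarith) (bnd_nonneg _ _)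
  have hcu : ∀ p, c p ≤ β * bnd α p := fun p =>
    mul_le_mul_of_nonneg_right (by split_ifs <;> linarith) (bnd_nonneg _ _)
  have hcs : ∀ a : Box N → ℤ, Summable (fun p => c p * |(grad N p a : ℝ)| ^ q) := by
    intro a
    refine Summable.of_nonneg_of_le
      (fun p => mul_nonneg (hc0 p) (Real.rpow_nonneg (abs_nonneg _) _)) (fun p => ?_)
      ((bond_summable hα hq₀ a).mul_left β)
    rw [← mul_assoc]
    exact mul_le_mul_of_nonneg_right (hcu p) (Real.rpow_nonneg (abs_nonneg _) _)
  obtain ⟨U, hUdef⟩ : ∃ U : (Box N → ℤ) → ℝ, ∀ a, U a = ∑' p, c p * |(grad N p a : ℝ)| ^ q :=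
    ⟨_, fun _ => rfl⟩
  have hUM : MK (fun s d => 2 * U s + 2 * U d - U (s + d) - U (s - d)) := by
    have hterm : ∀ s d p, c p * (2 * |(grad N p s : ℝ)| ^ q + 2 * |(grad N p d : ℝ)| ^ q
        - |(grad N p s : ℝ) + (grad N p d : ℝ)| ^ q - |(grad N p s : ℝ) - (grad N p d : ℝ)| ^ q)
        = 2 * (c p * |(grad N p s : ℝ)| ^ q) + 2 * (c p * |(grad N p d : ℝ)| ^ q)
          - c p * |(grad N p (s + d) : ℝ)| ^ q - c p * |(grad N p (s - d) : ℝ)| ^ q := by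
      intro s d p
      rw [map_add, map_sub]; push_cast; ring
    have hHS : ∀ s d, HasSum (fun p => c p * (2 * |(grad N p s : ℝ)| ^ q + 2 * |(grad N p d : ℝ)| ^ q
        - |(grad N p s : ℝ) + (grad N p d : ℝ)| ^ q - |(grad N p s : ℝ) - (grad N p d : ℝ)| ^ q))
        (2 * U s + 2 * U d - U (s + d) - U (s - d)) := by
      intro s d
      simp only [hterm, hUdef]
      exact ((((hcs s).hasSum.mul_left 2).add ((hcs d).hasSum.mul_left 2)).sub (hcs (s + d)).hasSum).sub
        (hcs (s - d)).hasSum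
    have := MK.tsum (fun p => (MK_rpow hq₀ hq₂ (fun a : Box N → ℤ => (grad N p a : ℝ))).smul (hc0 p))
      (fun s d => (hHS s d).summable)
    simp only [fun s d => (hHS s d).tsum_eq] at this
    exact this
  have hU2 : ∀ a, U (a + a) = 2 ^ q * U a := by
    intro a
    rw [hUdef, hUdef, ← tsum_mul_left]
    refine tsum_congr fun p => ?_
    have : |(grad N p (a + a) : ℝ)| = 2 * |(grad N p a : ℝ)| := by
      rw [map_add, Int.cast_add, ← two_mul, abs_mul, abs_two]
    rw [this, Real.mul_rpow two_pos.le (abs_nonneg _)]; ring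
  have hUs : Summable (fun a => Real.exp (-U a)) := by
    refine exp_U_summable (κ := β / 2 * (2 * (N : ℝ) + 1) ^ (-α)) hq₀ (by positivity) U fun a => ?_
    rw [hUdef]
    have hinj : Function.Injective (fun i : Box N => ((i.1, (N : ℤ) + 1) : ℤ × ℤ)) := by
      intro i j h
      exact Subtype.ext (Prod.mk.inj h).1
    have h1 := tsum_comp_le_tsum_of_inj (hcs a)
      (fun p => mul_nonneg (hc0 p) (Real.rpow_nonneg (abs_nonneg _) _)) hinj
    rw [tsum_fintype] at h1
    refine le_trans (Finset.sum_le_sum fun i _ => ?_) h1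
    have hi := Finset.mem_Icc.1 i.2
    have hg : grad N (i.1, (N : ℤ) + 1) a = a i := by
      rw [grad_apply, extHom_in i.2, extHom_out (by simp)]; simp
    simp only [Function.comp, hg]
    refine mul_le_mul_of_nonneg_right (le_trans ?_ (hcl _)) (Real.rpow_nonneg (abs_nonneg _) _)
    refine mul_le_mul_of_nonneg_left ?_ (by positivity)
    have hcast : |((i.1 - ((N : ℤ) + 1) : ℤ) : ℝ)| = (((N : ℤ) + 1 - i.1 : ℤ) : ℝ) := by
      rw [← Int.cast_abs, abs_of_neg (by omega)]; congr 1; ring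
    simp only [bnd, hcast]
    refine Real.rpow_le_rpow_of_nonpos ?_ ?_ (by linarith)
    · exact_mod_cast (by omega : (0:ℤ) < (N : ℤ) + 1 - i.1)
    · exact_mod_cast (by omega : (N : ℤ) + 1 - i.1 ≤ 2 * N + 1)
  have key := compare_main (A := Box N → ℤ) (fun a b h => by
      funext i; have := congrFun h i; simp only [Pi.add_apply] at this; omega) hq₀ hq₂ U hUM hU2 hUs
    (E := {p // p ∈ E}) (fun e => grad N e.1) (fun e => β / 2 * bnd α e.1) (fun e => θ e.1)
    (fun e => C * (β / 2 * bnd α e.1) ^ (-(2 / q))) (fun e => hbpos e.1 e.2)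
    (fun e => (hC _ (hbpos e.1 e.2)).1) (fun e => (hC _ (hbpos e.1 e.2)).2.1)
    (fun e => (hC _ (hbpos e.1 e.2)).2.2)
  have s1 : ∀ a : Box N → ℤ, ∑ e : {p // p ∈ E}, θ e.1 * (grad N e.1 a : ℝ) = (extHom N 0 a : ℝ) := by
    intro a
    rw [← hθ a]
    exact Finset.sum_coe_sort E (fun p => θ p * (grad N p a : ℝ))
  have s2 : ∀ a : Box N → ℤ, Real.exp (-(U a + ∑ e : {p // p ∈ E}, β / 2 * bnd α e.1 * |(grad N e.1 a : ℝ)| ^ q))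
      = chainWeight β α q (fun k => extHom N k a) := by
    intro a
    rw [chainWeight, energy_eq hα hq₀, Finset.sum_coe_sort E (fun p => β / 2 * bnd α p * |(grad N p a : ℝ)| ^ q)]
    congr 2
    have hi : HasSum (fun p => if p ∈ E then β / 2 * bnd α p * |(grad N p a : ℝ)| ^ q else 0)
        (∑ p ∈ E, β / 2 * bnd α p * |(grad N p a : ℝ)| ^ q) := by
      have := hasSum_sum_of_ne_finset_zero (L := SummationFilter.unconditional _)
        (f := fun p => if p ∈ E then β / 2 * bnd α p * |(grad N p a : ℝ)| ^ q else 0) (s := E)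
        (fun p hp => if_neg hp)
      rwa [Finset.sum_congr rfl (fun p hp => if_pos hp)] at this
    have := (hcs a).hasSum.add hi
    rw [← hUdef] at this
    rw [← this.tsum_eq]
    refine tsum_congr fun p => ?_
    simp only [c]
    split_ifs <;> ring
  have s3 : ∑ e : {p // p ∈ E}, θ e.1 ^ 2 * (C * (β / 2 * bnd α e.1) ^ (-(2 / q)))
      = ∑ p ∈ E, θ p ^ 2 * (C * (β / 2 * bnd α p) ^ (-(2 / q))) :=
    Finset.sum_coe_sort E (fun p => θ p ^ 2 * (C * (β / 2 * bnd α p) ^ (-(2 / q))))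
  simp only [s1, s2, s3] at key
  have hB : 0 ≤ ∑ p ∈ E, θ p ^ 2 * (C * (β / 2 * bnd α p) ^ (-(2 / q))) :=
    Finset.sum_nonneg fun p hp => by have := hbpos p hp; positivity
  have z1 : chainZ N β α q = ∑' a : Box N → ℤ, chainWeight β α q (fun k => extHom N k a) :=
    ((chainEquiv N).tsum_eq (fun φ : ChainConfig N => chainWeight β α q φ.val)).symm
  have z2 : ∑' φ : ChainConfig N, ((φ.val 0 : ℤ) : ℝ) ^ 2 * chainWeight β α q φ.val =
      ∑' a : Box N → ℤ, chainWeight β α q (fun k => extHom N k a) * (extHom N 0 a : ℝ) ^ 2 := by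
    rw [← (chainEquiv N).tsum_eq]
    exact tsum_congr fun a => mul_comm _ _
  rw [chainVar, z2]
  have hZ0 : 0 ≤ chainZ N β α q := tsum_nonneg fun φ => (Real.exp_pos _).le
  rw [← z1] at key
  have := div_le_of_le_mul₀ hZ0 hB key
  linarith [sq_nonneg (chainMean N β α q)]

noncomputable def blk (k : ℕ) : Finset ℤ := Finset.Ico (2 ^ k - 1) (2 ^ (k + 1) - 1)

lemma blk_card (k : ℕ) : (blk k).card = 2 ^ k := by
  rw [blk, Int.card_Ico]
  have : (2:ℤ) ^ (k + 1) - 1 - (2 ^ k - 1) = ((2 ^ k : ℕ) : ℤ) := by push_cast; ring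
  rw [this, Int.toNat_natCast]

lemma blk_log {k : ℕ} {i : ℤ} (h : i ∈ blk k) : Nat.log 2 (i + 1).toNat = k := by
  rw [blk, Finset.mem_Ico] at h
  have h2 : (0:ℤ) < 2 ^ k := by positivity
  have h3 : ((i + 1).toNat : ℤ) = i + 1 := Int.toNat_of_nonneg (by omega)
  refine Nat.log_eq_of_pow_le_of_lt_pow ?_ ?_
  · zify; omega
  · zify; omega

lemma blk_dist {k : ℕ} {i j : ℤ} (hi : i ∈ blk k) (hj : j ∈ blk (k + 1)) :
    i < j ∧ j - i ≤ 2 ^ (k + 2) := by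
  rw [blk, Finset.mem_Ico] at hi hj
  have h2 : (0:ℤ) < 2 ^ k := by positivity
  have h3 : (2:ℤ) ^ (k + 2) = 4 * 2 ^ k := by ring
  have h4 : (2:ℤ) ^ (k + 1 + 1) = 4 * 2 ^ k := by ring
  have h5 : (2:ℤ) ^ (k + 1) = 2 * 2 ^ k := by ring
  omega

noncomputable def edges (K : ℕ) : Finset (ℤ × ℤ) := (Finset.range K).biUnion fun k => blk k ×ˢ blk (k + 1)

noncomputable def flow (p : ℤ × ℤ) : ℝ := ((2:ℝ) ^ (2 * Nat.log 2 (p.1 + 1).toNat + 1))⁻¹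

lemma edges_sum (K : ℕ) (f : ℤ × ℤ → ℝ) :
    ∑ p ∈ edges K, f p = ∑ k ∈ Finset.range K, ∑ p ∈ blk k ×ˢ blk (k + 1), f p := by
  refine Finset.sum_biUnion ?_
  intro k _ l _ hkl
  refine Finset.disjoint_left.2 fun p hp hp' => hkl ?_
  rw [← blk_log (Finset.mem_product.1 hp).1, blk_log (Finset.mem_product.1 hp').1]

lemma edges_ne {K : ℕ} {p : ℤ × ℤ} (hp : p ∈ edges K) : p.1 ≠ p.2 := by
  obtain ⟨k, -, hk⟩ := Finset.mem_biUnion.1 hp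
  have := Finset.mem_product.1 hk
  exact (blk_dist this.1 this.2).1.ne

lemma flow_eq {k : ℕ} {p : ℤ × ℤ} (hp : p ∈ blk k ×ˢ blk (k + 1)) :
    flow p = ((2:ℝ) ^ (2 * k + 1))⁻¹ := by
  rw [flow, blk_log (Finset.mem_product.1 hp).1]

lemma flow_sum (K N : ℕ) (hK : N + 2 ≤ 2 ^ K) (a : Box N → ℤ) :
    ∑ p ∈ edges K, flow p * (grad N p a : ℝ) = (extHom N 0 a : ℝ) := by
  rw [edges_sum]
  let avg : ℕ → ℝ := fun k => ((2:ℝ) ^ k)⁻¹ * ∑ i ∈ blk k, (extHom N i a : ℝ)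
  have h1 : ∀ k ∈ Finset.range K, ∑ p ∈ blk k ×ˢ blk (k + 1), flow p * (grad N p a : ℝ)
      = avg k - avg (k + 1) := by
    intro k _
    rw [Finset.sum_congr rfl fun p hp => by rw [flow_eq hp], ← Finset.mul_sum, Finset.sum_product]
    simp only [grad_apply, Int.cast_sub, Finset.sum_sub_distrib, Finset.sum_const, blk_card,
      nsmul_eq_mul, ← Finset.mul_sum, avg]
    push_cast
    field_simp
    ring
  rw [Finset.sum_congr rfl h1, Finset.sum_range_sub']
  have h2 : avg 0 = (extHom N 0 a : ℝ) := by
    have : blk 0 = {0} := by decide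
    simp [avg, this]
  have h3 : avg K = 0 := by
    simp only [avg]
    rw [Finset.sum_eq_zero, mul_zero]
    intro i hi
    rw [extHom_out, Int.cast_zero]
    rw [blk, Finset.mem_Ico] at hi
    rw [Finset.mem_Icc]
    zify at hK
    omega
  rw [h2, h3, sub_zero]

lemma flow_energy {q α β C : ℝ} (hq₀ : 0 < q) (hα : 1 < α) (hβ : 0 < β) (hC : 0 < C) (K : ℕ) :
    ∑ p ∈ edges K, flow p ^ 2 * (C * (β / 2 * bnd α p) ^ (-(2 / q))) ≤
      (C * (β / 2) ^ (-(2 / q)) * 2 ^ (4 * α / q)) *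
        ∑ k ∈ Finset.range K, ((2:ℝ) ^ (2 * α / q - 2)) ^ k := by
  rw [edges_sum, Finset.mul_sum]
  refine Finset.sum_le_sum fun k _ => ?_
  have hterm : ∀ p ∈ blk k ×ˢ blk (k + 1), flow p ^ 2 * (C * (β / 2 * bnd α p) ^ (-(2 / q))) ≤
      (((2:ℝ) ^ (2 * k + 1))⁻¹) ^ 2 * (C * ((β / 2) ^ (-(2 / q)) * ((2:ℝ) ^ (k + 2)) ^ (2 * α / q))) := by
    intro p hp
    rw [flow_eq hp]
    have hd := blk_dist (Finset.mem_product.1 hp).1 (Finset.mem_product.1 hp).2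
    have hpos : (0:ℝ) < |((p.1 - p.2 : ℤ) : ℝ)| := abs_pos.2 (by exact_mod_cast (by omega : p.1 - p.2 ≠ 0))
    have hle : |((p.1 - p.2 : ℤ) : ℝ)| ≤ (2:ℝ) ^ (k + 2) := by
      rw [← Int.cast_abs, abs_of_neg (by omega)]
      exact_mod_cast (by omega : -(p.1 - p.2) ≤ 2 ^ (k + 2))
    rw [Real.mul_rpow (by positivity) (bnd_nonneg _ _), bnd, ← Real.rpow_mul hpos.le]
    have he : -α * -(2 / q) = 2 * α / q := by ring
    rw [he]
    gcongr
  refine (Finset.sum_le_sum hterm).trans ?_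
  rw [Finset.sum_const, Finset.card_product, blk_card, blk_card, nsmul_eq_mul]
  have h1 : ((2:ℝ) ^ (k + 2)) ^ (2 * α / q) = 2 ^ (4 * α / q) * ((2:ℝ) ^ (2 * α / q)) ^ k := by
    rw [← Real.rpow_natCast, ← Real.rpow_mul two_pos.le, ← Real.rpow_natCast, ← Real.rpow_mul two_pos.le,
      ← Real.rpow_add two_pos]
    congr 1; push_cast; ring
  have h2 : ((2:ℝ) ^ (2 * α / q - 2)) ^ k = ((2:ℝ) ^ (2 * α / q)) ^ k / 2 ^ (2 * k) := by
    rw [Real.rpow_sub two_pos, div_pow, pow_mul]; norm_num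
  rw [h1, h2]
  have h3 : (((2 ^ k * 2 ^ (k + 1) : ℕ) : ℝ)) * ((((2:ℝ) ^ (2 * k + 1))⁻¹) ^ 2) =
      (1 / 2) * ((2:ℝ) ^ (2 * k))⁻¹ := by
    push_cast
    rw [pow_succ (2:ℝ) (2 * k), pow_succ (2:ℝ) k, two_mul k, pow_add]
    field_simp
  rw [← mul_assoc, h3]
  have h4 : 0 ≤ C * (β / 2) ^ (-(2 / q)) * 2 ^ (4 * α / q) *
      (((2:ℝ) ^ (2 * α / q)) ^ k / 2 ^ (2 * k)) := by positivity
  have h5 : 1 / 2 * ((2:ℝ) ^ (2 * k))⁻¹ *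
      (C * ((β / 2) ^ (-(2 / q)) * (2 ^ (4 * α / q) * ((2:ℝ) ^ (2 * α / q)) ^ k))) =
      1 / 2 * (C * (β / 2) ^ (-(2 / q)) * 2 ^ (4 * α / q) *
      (((2:ℝ) ^ (2 * α / q)) ^ k / 2 ^ (2 * k))) := by
    rw [div_eq_mul_inv (((2:ℝ) ^ (2 * α / q)) ^ k)]; ring
  rw [h5]
  linarith

lemma chain_geom {q α β : ℝ} (hq₀ : 0 < q) (hq₂ : q < 2) (hα : 1 < α) (hβ : 0 < β) :
    ∃ C : ℝ, 0 ≤ C ∧ ∀ N : ℕ, 2 ≤ N → chainVar N β α q ≤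
      C * ∑ k ∈ Finset.range (Nat.log 2 N + 2), ((2:ℝ) ^ (2 * α / q - 2)) ^ k := by
  obtain ⟨C0, hC0, hb⟩ := chain_bound hq₀ hq₂
  refine ⟨C0 * (β / 2) ^ (-(2 / q)) * 2 ^ (4 * α / q), by positivity, fun N hN => ?_⟩
  have hK : N + 2 ≤ 2 ^ (Nat.log 2 N + 2) := by
    have := Nat.lt_pow_succ_log_self (b := 2) (by norm_num) N
    rw [Nat.succ_eq_add_one] at this
    rw [pow_succ 2 (Nat.log 2 N + 1)]
    omega
  exact (hb α β hα hβ N (edges _) flow (fun p hp => edges_ne hp) (flow_sum _ N hK)).trans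
    (flow_energy hq₀ hα hβ hC0 _)

end helpers

/-- **Upper bounds for the `q`-SOS long-range chain.**
For every `β ∈ (0,∞)`, every `q ∈ (0,2)` and every `α ∈ (1,∞)`, there exists `C_β < ∞`
such that for every `N ≥ 2`:
`Var^{q-SOS}_{N,β,α}[φ(0)] ≤ C_β` if `α < q`;
`Var^{q-SOS}_{N,β,α}[φ(0)] ≤ C_β ln N` if `α = q`; and
`Var^{q-SOS}_{N,β,α}[φ(0)] ≤ C_β N^{2α/q − 2}` if `α > q`. -/
theorem qSOS_chain_upper_bounds
    (β : ℝ) (hβ : 0 < β) (q : ℝ) (hq₀ : 0 < q) (hq₂ : q < 2)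
    (α : ℝ) (hα : 1 < α) :
    ∃ C : ℝ, ∀ N : ℕ, 2 ≤ N →
      (α < q → chainVar N β α q ≤ C) ∧
      (α = q → chainVar N β α q ≤ C * Real.log N) ∧
      (q < α → chainVar N β α q ≤ C * (N : ℝ) ^ (2 * α / q - 2)) := by
  obtain ⟨C, hC, hb⟩ := chain_geom hq₀ hq₂ hα hβ
  rcases lt_trichotomy α q with h | h | h
  · have hr1 : (2:ℝ) ^ (2 * α / q - 2) < 1 := by
      refine Real.rpow_lt_one_of_one_lt_of_neg (by norm_num) ?_
      rw [sub_neg, div_lt_iff₀ hq₀]; linarith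
    have hr0 : 0 ≤ (2:ℝ) ^ (2 * α / q - 2) := by positivity
    refine ⟨C * (1 - (2:ℝ) ^ (2 * α / q - 2))⁻¹, fun N hN => ⟨fun _ => ?_, fun h' => absurd h' h.ne,
      fun h' => absurd h' h.not_gt⟩⟩
    refine (hb N hN).trans (mul_le_mul_of_nonneg_left ?_ hC)
    rw [← tsum_geometric_of_lt_one hr0 hr1]
    exact (summable_geometric_of_lt_one hr0 hr1).sum_le_tsum _ (fun i _ => pow_nonneg hr0 i)
  · have hr1 : (2:ℝ) ^ (2 * α / q - 2) = 1 := by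
      rw [h, mul_div_assoc, div_self hq₀.ne']; norm_num
    refine ⟨C * (3 / Real.log 2), fun N hN => ⟨fun h' => absurd h h'.ne, fun _ => ?_,
      fun h' => absurd h h'.ne'⟩⟩
    refine (hb N hN).trans ?_
    rw [mul_assoc]
    refine mul_le_mul_of_nonneg_left ?_ hC
    rw [hr1]
    simp only [one_pow, Finset.sum_const, Finset.card_range, nsmul_eq_mul, mul_one]
    have hl2 : 0 < Real.log 2 := Real.log_pos (by norm_num)
    have h1 : (Nat.log 2 N : ℝ) * Real.log 2 ≤ Real.log N := by
      rw [← Real.log_pow]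
      refine Real.log_le_log (by positivity) ?_
      exact_mod_cast Nat.pow_log_le_self 2 (by omega)
    have h2 : Real.log 2 ≤ Real.log N := Real.log_le_log (by norm_num) (by exact_mod_cast hN)
    rw [div_mul_eq_mul_div, le_div_iff₀ hl2]
    push_cast
    linarith
  · have he : 0 < 2 * α / q - 2 := by
      rw [sub_pos, lt_div_iff₀ hq₀]; linarith
    have hr1 : 1 < (2:ℝ) ^ (2 * α / q - 2) := Real.one_lt_rpow (by norm_num) he
    refine ⟨C * ((4:ℝ) ^ (2 * α / q - 2) / ((2:ℝ) ^ (2 * α / q - 2) - 1)), fun N hN =>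
      ⟨fun h' => absurd h' h.not_gt, fun h' => absurd h' h.ne', fun _ => ?_⟩⟩
    refine (hb N hN).trans ?_
    rw [mul_assoc]
    refine mul_le_mul_of_nonneg_left ?_ hC
    rw [geom_sum_eq hr1.ne', div_mul_eq_mul_div]
    refine div_le_div_of_nonneg_right ?_ (sub_pos.2 hr1).le
    rw [← Real.mul_rpow (by norm_num) (Nat.cast_nonneg N), ← Real.rpow_natCast, ← Real.rpow_mul two_pos.le,
      mul_comm (2 * α / q - 2), Real.rpow_mul two_pos.le, Real.rpow_natCast]
    refine (sub_le_self _ zero_le_one).trans (Real.rpow_le_rpow (by positivity) ?_ he.le)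
    have h1 : ((2:ℝ) ^ Nat.log 2 N) ≤ N := by
      exact_mod_cast Nat.pow_log_le_self 2 (by omega)
    rw [pow_add]
    linarith
end

section
/- Let X be a discrete Gaussian random variable of conductance λ > 0. Then there exist universal constants c > 0 and C < ∞ such that: (i) for every λ ∈ (0,∞), Var^{DG}_λ[X] ≤ 1/(2λ) (Gaussian domination); (ii) for every λ ∈ (0,1), c/λ ≤ Var^{DG}_λ[X] ≤ 1/(2λ); and (iii) for every λ ∈ (1,∞), c e^{−λ} ≤ Var^{DG}_λ[X] ≤ C e^{−λ}. -/
noncomputable section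

/-- Partition function `∑_{k∈ℤ} e^{−λk²}` of the discrete Gaussian distribution of
conductance `λ`. -/
def dgZ (l : ℝ) : ℝ := ∑' k : ℤ, Real.exp (-(l * (k : ℝ) ^ 2))

/-- Mean of a discrete Gaussian random variable of conductance `λ`. -/
def dgMean (l : ℝ) : ℝ :=
  (∑' k : ℤ, (k : ℝ) * Real.exp (-(l * (k : ℝ) ^ 2))) / dgZ l

/-- Variance of a discrete Gaussian random variable of conductance `λ`. -/
def dgVar (l : ℝ) : ℝ :=
  (∑' k : ℤ, (k : ℝ) ^ 2 * Real.exp (-(l * (k : ℝ) ^ 2))) / dgZ l - dgMean l ^ 2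

end

open Filter Topology

lemma dg_summable_pow (j : ℕ) {l : ℝ} (hl : 0 < l) :
    Summable (fun k : ℤ => (k : ℝ) ^ j * Real.exp (-(l * (k : ℝ) ^ 2))) := by
  have key : ∀ n : ℕ, (n : ℝ) ^ j * Real.exp (-(l * (n : ℝ) ^ 2))
      ≤ (n : ℝ) ^ j * Real.exp (-l * n) := by
    intro n
    have h : (n : ℝ) ≤ (n : ℝ) ^ 2 := by
      exact_mod_cast Nat.le_self_pow (by norm_num) n
    gcongr
    nlinarith
  have hs := Real.summable_pow_mul_exp_neg_nat_mul j hl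
  have h1 : Summable (fun n : ℕ => (n : ℝ) ^ j * Real.exp (-(l * (n : ℝ) ^ 2))) :=
    Summable.of_nonneg_of_le (fun n => by positivity) key hs
  apply Summable.of_nat_of_neg
  · simpa using h1
  · have := h1.mul_left ((-1 : ℝ) ^ j)
    refine this.congr ?_
    intro n
    push_cast
    rw [neg_pow (n : ℝ) j, neg_sq]
    ring

lemma dg_summable0 {l : ℝ} (hl : 0 < l) :
    Summable (fun k : ℤ => Real.exp (-(l * (k : ℝ) ^ 2))) := by
  simpa using dg_summable_pow 0 hl

noncomputable def dgM (l : ℝ) : ℝ := ∑' k : ℤ, (k : ℝ) ^ 2 * Real.exp (-(l * (k : ℝ) ^ 2))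

lemma dgMean_zero (l : ℝ) : dgMean l = 0 := by
  have h : (∑' k : ℤ, (k : ℝ) * Real.exp (-(l * (k : ℝ) ^ 2))) = 0 := by
    have h1 := (Equiv.neg ℤ).tsum_eq (fun k : ℤ => (k : ℝ) * Real.exp (-(l * (k : ℝ) ^ 2)))
    simp only [Equiv.neg_apply, Int.cast_neg, neg_sq, neg_mul] at h1
    rw [tsum_neg] at h1
    linarith
  simp [dgMean, h]

lemma dgVar_eq (l : ℝ) : dgVar l = dgM l / dgZ l := by
  simp [dgVar, dgMean_zero, dgM]

lemma dgZ_ge_one {l : ℝ} (hl : 0 < l) : 1 ≤ dgZ l := by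
  have := (dg_summable0 hl).le_tsum 0 (fun k _ => by positivity)
  simpa [dgZ] using this

lemma dgZ_anti {a b : ℝ} (ha : 0 < a) (hab : a ≤ b) : dgZ b ≤ dgZ a := by
  refine (dg_summable0 (ha.trans_le hab)).tsum_le_tsum (fun k => ?_) (dg_summable0 ha)
  gcongr

lemma dgZ_convex {a b : ℝ} (ha : 0 < a) (hb : 0 < b) :
    dgZ a + (a - b) * dgM a ≤ dgZ b := by
  have h2 := dg_summable_pow 2 ha
  rw [dgZ, dgM, ← tsum_mul_left, ← (dg_summable0 ha).tsum_add (h2.mul_left _)]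
  refine ((dg_summable0 ha).add (h2.mul_left _)).tsum_le_tsum (fun k => ?_) (dg_summable0 hb)
  have e : Real.exp (-(b * (k : ℝ) ^ 2))
      = Real.exp (-(a * (k : ℝ) ^ 2)) * Real.exp ((a - b) * (k : ℝ) ^ 2) := by
    rw [← Real.exp_add]; congr 1; ring
  rw [e]
  nlinarith [Real.add_one_le_exp ((a - b) * (k : ℝ) ^ 2), Real.exp_pos (-(a * (k : ℝ) ^ 2))]

lemma dgZ_poisson {s : ℝ} (hs : 0 < s) :
    s * dgZ (s ^ 2) = √Real.pi * dgZ (Real.pi ^ 2 / s ^ 2) := by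
  have hp := Real.pi_pos
  have h := Real.tsum_exp_neg_mul_int_sq (a := s ^ 2 / Real.pi) (by positivity)
  have e1 : (∑' n : ℤ, Real.exp (-Real.pi * (s ^ 2 / Real.pi) * (n : ℝ) ^ 2)) = dgZ (s ^ 2) := by
    refine tsum_congr fun n => ?_
    congr 1; field_simp
  have e2 : (∑' n : ℤ, Real.exp (-Real.pi / (s ^ 2 / Real.pi) * (n : ℝ) ^ 2))
      = dgZ (Real.pi ^ 2 / s ^ 2) := by
    refine tsum_congr fun n => ?_
    congr 1; field_simp
  rw [e1, e2, ← Real.sqrt_eq_rpow, Real.sqrt_div (by positivity), Real.sqrt_sq hs.le] at h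
  rw [h]; field_simp

lemma dgM_le {l : ℝ} (hl : 0 < l) : dgM l * (2 * l) ≤ dgZ l := by
  obtain ⟨t, ht, rfl⟩ : ∃ t : ℝ, 0 < t ∧ l = t ^ 2 :=
    ⟨√l, Real.sqrt_pos.2 hl, (Real.sq_sqrt hl.le).symm⟩
  have hlim : Tendsto (fun s : ℝ => dgM (t ^ 2) * (s * (t + s))) (𝓝[<] t)
      (𝓝 (dgM (t ^ 2) * (t * (t + t)))) := by
    apply Tendsto.mono_left _ nhdsWithin_le_nhds
    exact Continuous.tendsto (by fun_prop) t
  have hle : dgM (t ^ 2) * (t * (t + t)) ≤ dgZ (t ^ 2) := by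
    refine le_of_tendsto hlim ?_
    filter_upwards [Ioo_mem_nhdsLT ht] with s hs
    obtain ⟨hs0, hst⟩ := hs
    have hc := dgZ_convex hl (b := s ^ 2) (by positivity)
    have hm : s * dgZ (s ^ 2) ≤ t * dgZ (t ^ 2) := by
      rw [dgZ_poisson hs0, dgZ_poisson ht]
      have hp := Real.pi_pos
      gcongr
      apply dgZ_anti (by positivity)
      gcongr
    have h3 := mul_le_mul_of_nonneg_left hc hs0.le
    have h4 : 0 < t - s := by linarith
    refine le_of_mul_le_mul_left ?_ h4
    nlinarith
  calc _ = _ := by ring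
    _ ≤ _ := hle

lemma dgZ_le {a : ℝ} (ha : 2 ≤ a) : dgZ a ≤ 3 / 2 := by
  set q := Real.exp (-a) with hq
  have hq0 : 0 < q := Real.exp_pos _
  have hq1 : q ≤ 1 / 5 := by
    have h1 : q ≤ Real.exp (-2) := Real.exp_le_exp.2 (by linarith)
    have h2 : Real.exp (-2) = (Real.exp 1 * Real.exp 1)⁻¹ := by
      rw [← Real.exp_add, ← Real.exp_neg]; norm_num
    have h3 := Real.exp_one_gt_d9
    have h4 : (Real.exp 1 * Real.exp 1)⁻¹ ≤ (5 : ℝ)⁻¹ := by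
      apply inv_anti₀ (by norm_num); nlinarith
    linarith
  have hg := hasSum_geometric_of_lt_one hq0.le (by linarith : q < 1)
  have hz : HasSum (fun k : ℤ => q ^ k.natAbs) ((1 - q)⁻¹ + (1 - q)⁻¹ - q ^ (0 : ℤ).natAbs) :=
    HasSum.of_nat_of_neg (by simpa using hg) (by simpa using hg)
  have h := (dg_summable0 (by linarith : 0 < a)).tsum_le_tsum (g := fun k : ℤ => q ^ k.natAbs)
    (fun k => by
      rw [hq, ← Real.exp_nat_mul]
      apply Real.exp_le_exp.2
      have h5 : ((k.natAbs : ℕ) : ℝ) ≤ (k : ℝ) ^ 2 := by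
        have : ((k.natAbs : ℕ) : ℤ) ≤ k ^ 2 := by
          rw [← Int.natAbs_sq]
          exact_mod_cast Nat.le_self_pow (by norm_num) _
        have h7 : (((k.natAbs : ℕ) : ℤ) : ℝ) ≤ ((k ^ 2 : ℤ) : ℝ) := Int.cast_le.2 this
        rwa [Int.cast_natCast, Int.cast_pow] at h7
      nlinarith) hz.summable
  rw [hz.tsum_eq] at h
  have h6 : (1 - q)⁻¹ ≤ (4 / 5 : ℝ)⁻¹ := inv_anti₀ (by norm_num) (by linarith)
  norm_num at h h6
  rw [dgZ]
  linarith

lemma dgM_ge {l : ℝ} (hl : 0 < l) (h1 : l < 1) : dgZ l ≤ dgM l * (12 * l) := by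
  obtain ⟨t, ht, rfl⟩ : ∃ t : ℝ, 0 < t ∧ l = t ^ 2 :=
    ⟨√l, Real.sqrt_pos.2 hl, (Real.sq_sqrt hl.le).symm⟩
  have hc := dgZ_convex hl (b := (2 * t) ^ 2) (by positivity)
  have p1 := dgZ_poisson ht
  have p2 := dgZ_poisson (s := 2 * t) (by positivity)
  have hp := Real.pi_pos
  have hp3 := Real.pi_gt_three
  have g1 : 1 ≤ dgZ (Real.pi ^ 2 / t ^ 2) := dgZ_ge_one (by positivity)
  have g2 : dgZ (Real.pi ^ 2 / (2 * t) ^ 2) ≤ 3 / 2 := by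
    apply dgZ_le
    rw [le_div_iff₀ (by positivity)]
    nlinarith
  have hsp : 0 < √Real.pi := Real.sqrt_pos.2 hp
  have g3 := mul_le_mul_of_nonneg_left g1 hsp.le
  have g4 := mul_le_mul_of_nonneg_left g2 hsp.le
  have g5 : dgZ ((2 * t) ^ 2) ≤ 3 / 4 * dgZ (t ^ 2) := by
    refine le_of_mul_le_mul_left ?_ ht
    linarith
  linarith

lemma dgM_ge_exp {l : ℝ} (hl : 0 < l) : Real.exp (-l) ≤ dgM l := by
  have := (dg_summable_pow 2 hl).le_tsum 1 (fun k _ => by positivity)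
  simpa [dgM] using this

lemma dgM_le_exp {l : ℝ} (hl : 1 < l) : dgM l ≤ (Real.exp 1 * dgM 1) * Real.exp (-l) := by
  have e : (Real.exp 1 * dgM 1) * Real.exp (-l) = (Real.exp 1 * Real.exp (-l)) * dgM 1 := by ring
  rw [e, dgM, dgM, ← tsum_mul_left]
  refine (dg_summable_pow 2 (by linarith)).tsum_le_tsum (fun k => ?_)
    ((dg_summable_pow 2 one_pos).mul_left _)
  rcases eq_or_ne k 0 with rfl | hk
  · simp
  have hk1 : (1 : ℝ) ≤ (k : ℝ) ^ 2 := by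
    have : (1 : ℤ) ≤ k ^ 2 := by have := sq_pos_of_ne_zero hk; omega
    exact_mod_cast this
  have : Real.exp (-(l * (k : ℝ) ^ 2))
      ≤ Real.exp 1 * Real.exp (-l) * Real.exp (-(1 * (k : ℝ) ^ 2)) := by
    rw [← Real.exp_add, ← Real.exp_add]
    apply Real.exp_le_exp.2
    nlinarith
  have := mul_le_mul_of_nonneg_left this (sq_nonneg (k : ℝ))
  linarith

/-- **Variance estimates for the discrete Gaussian random variable.**
There exist universal constants `c > 0` and `C < ∞` such that:
(i) for every `λ ∈ (0,∞)`, `Var^{DG}_λ[X] ≤ 1/(2λ)` (Gaussian domination);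
(ii) for every `λ ∈ (0,1)`, `c/λ ≤ Var^{DG}_λ[X] ≤ 1/(2λ)`;
(iii) for every `λ ∈ (1,∞)`, `c e^{−λ} ≤ Var^{DG}_λ[X] ≤ C e^{−λ}`. -/
theorem discrete_gaussian_variance_estimates :
    ∃ c C : ℝ, 0 < c ∧
      (∀ l : ℝ, 0 < l → dgVar l ≤ 1 / (2 * l)) ∧
      (∀ l : ℝ, 0 < l → l < 1 → c / l ≤ dgVar l ∧ dgVar l ≤ 1 / (2 * l)) ∧
      (∀ l : ℝ, 1 < l → c * Real.exp (-l) ≤ dgVar l ∧ dgVar l ≤ C * Real.exp (-l)) := by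
  have ub : ∀ l : ℝ, 0 < l → dgVar l ≤ 1 / (2 * l) := by
    intro l hl
    have hZ := dgZ_ge_one hl
    rw [dgVar_eq, div_le_div_iff₀ (by linarith) (by linarith)]
    linarith [dgM_le hl]
  have hZ1 := dgZ_ge_one one_pos
  have hM1 : 0 < dgM 1 := (Real.exp_pos _).trans_le (dgM_ge_exp one_pos)
  refine ⟨min (1 / 12) (1 / dgZ 1), Real.exp 1 * dgM 1, by positivity, ub, ?_, ?_⟩
  · intro l hl h1
    refine ⟨?_, ub l hl⟩
    have hZ := dgZ_ge_one hl
    calc min (1 / 12) (1 / dgZ 1) / l ≤ (1 / 12) / l := by gcongr; exact min_le_left _ _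
      _ ≤ dgVar l := by
        rw [dgVar_eq, div_le_div_iff₀ (by linarith) (by linarith)]
        linarith [dgM_ge hl h1]
  · intro l hl
    have hl0 : 0 < l := by linarith
    have hZ := dgZ_ge_one hl0
    have hM := dgM_ge_exp hl0
    have hE := Real.exp_pos (-l)
    constructor
    · calc min (1 / 12) (1 / dgZ 1) * Real.exp (-l) ≤ (1 / dgZ 1) * Real.exp (-l) := by
            gcongr; exact min_le_right _ _
        _ = Real.exp (-l) / dgZ 1 := by ring
        _ ≤ dgM l / dgZ l := by
            have := dgZ_anti one_pos hl.le
            have h0 : 0 ≤ dgM l := hE.le.trans hM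
            gcongr
        _ = dgVar l := (dgVar_eq l).symm
    · rw [dgVar_eq]
      exact (div_le_self (by linarith) hZ).trans (dgM_le_exp hl)
end
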